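/- If D is a planar regular region with n > 1 boundary components which are analytic Jordan curves, then for every z ∈ D the conjugate Hardy H² kernel strictly dominates π times the Bergman kernel: K̂(z) > π B(z). -/

import Mathlib

open MeasureTheory Metric Complex Set Filter

noncomputable section

/-- `u` is harmonic on `s`: locally the real part of a holomorphic function. -/
def HarmonicOnD (u : ℂ → ℝ) (s : Set ℂ) : Prop :=
  ∀ z ∈ s, ∃ r > 0, Metric.ball z r ⊆ s ∧ ∃ f : ℂ → ℂ,
    DifferentiableOn ℂ f (Metric.ball z r) ∧ ∀ w ∈ Metric.ball z r, u w = (f w).re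

/-- Upper circle average of an `EReal`-valued function (via decreasing truncations). -/
noncomputable def circleAvgE (u : ℂ → EReal) (z : ℂ) (r : ℝ) : EReal :=
  ⨅ n : ℕ, ((((2 * Real.pi)⁻¹ *
      ∫ θ in (0:ℝ)..(2 * Real.pi),
        (max (u (circleMap z r θ)) ((-(n : ℝ) : ℝ) : EReal)).toReal) : ℝ) : EReal)

/-- `u` is subharmonic on the open set `s`. -/
def SubharmonicOnE (u : ℂ → EReal) (s : Set ℂ) : Prop :=
  UpperSemicontinuousOn u s ∧ (∀ z ∈ s, u z ≠ ⊤) ∧ (∃ z ∈ s, u z ≠ ⊥) ∧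
  ∀ z ∈ s, ∀ r : ℝ, 0 < r → Metric.closedBall z r ⊆ s → u z ≤ circleAvgE u z r

/-- The Lelong number `v(dd^c u, z₀)` of a subharmonic function. -/
noncomputable def lelongNumber (u : ℂ → EReal) (z₀ : ℂ) : ℝ :=
  sSup {a : ℝ | 0 ≤ a ∧ ∃ C : ℝ, ∃ r > 0, ∀ z : ℂ, z ≠ z₀ → dist z z₀ < r →
    u z ≤ ((a * Real.log (dist z z₀) + C : ℝ) : EReal)}

/-- `G` is the (negative) Green function of `D` with pole at `z₀`. -/
structure IsGreenFunction (D : Set ℂ) (z₀ : ℂ) (G : ℂ → EReal) : Prop where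
  neg : ∀ z ∈ D, G z < 0
  pole : G z₀ = ⊥
  logharm : ∃ h : ℂ → ℝ, HarmonicOnD h D ∧
    ∀ z ∈ D \ {z₀}, G z = ((Real.log (dist z z₀) + h z : ℝ) : EReal)
  bdry : ∀ w ∈ frontier D, Filter.Tendsto (fun z => (G z).toReal) (nhdsWithin w D) (nhds 0)

/-- `Γ` is an analytic Jordan curve. -/
def IsAnalyticJordanCurve (Γ : Set ℂ) : Prop :=
  ∃ γ : ℝ → ℂ, AnalyticOnNhd ℝ γ Set.univ ∧ Function.Periodic γ (2 * Real.pi) ∧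
    (∀ t, deriv γ t ≠ 0) ∧ Set.InjOn γ (Set.Ico 0 (2 * Real.pi)) ∧ Γ = Set.range γ

/-- `D` is a bounded planar regular region whose boundary consists of `n`
analytic Jordan curves. -/
def IsRegularRegion (n : ℕ) (D : Set ℂ) : Prop :=
  IsOpen D ∧ IsConnected D ∧ Bornology.IsBounded D ∧
  ∃ Γ : Fin n → Set ℂ, (∀ i, IsAnalyticJordanCurve (Γ i)) ∧
    (Pairwise fun i j => Disjoint (Γ i) (Γ j)) ∧ frontier D = ⋃ i, Γ i

/-- `ν` is the outward unit normal vector field on `∂D`. -/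
def IsOutwardUnitNormal (D : Set ℂ) (ν : ℂ → ℂ) : Prop :=
  ∀ z ∈ frontier D, ‖ν z‖ = 1 ∧
    (∀ᶠ t in nhdsWithin (0:ℝ) (Set.Ioi (0:ℝ)),
      z + t • ν z ∉ closure D ∧ z - t • ν z ∈ D) ∧
    (∀ γ : ℝ → ℂ, γ 0 = z → (∀ᶠ t in nhds (0:ℝ), γ t ∈ frontier D) →
      DifferentiableAt ℝ γ 0 → ((starRingEnd ℂ) (ν z) * deriv γ 0).re = 0)

/-- Arclength (1-dimensional Hausdorff) measure on the boundary of `D`. -/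
noncomputable def bdryArc (D : Set ℂ) : Measure ℂ :=
  (MeasureTheory.Measure.hausdorffMeasure 1).restrict (frontier D)

/-- The analytic Hardy class `H₂^(c)(D)`. -/
def HardyH2c (D : Set ℂ) (f : ℂ → ℂ) : Prop :=
  DifferentiableOn ℂ f D ∧ ∃ U : ℂ → ℝ, HarmonicOnD U D ∧ ∀ z ∈ D, ‖f z‖ ^ 2 ≤ U z

/-- Nontangential convergence of `f` to `L` at the boundary point `w`. -/
def NTTendsto (D : Set ℂ) (f : ℂ → ℂ) (w L : ℂ) : Prop :=
  ∀ α : ℝ, 1 < α →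
    Filter.Tendsto f
      (nhdsWithin w {z | z ∈ D ∧ dist z w ≤ α * Metric.infDist z (frontier D)}) (nhds L)

/-- `g` is the nontangential boundary value function of `f` (a.e. on `∂D`). -/
def IsNTBoundaryValue (D : Set ℂ) (f g : ℂ → ℂ) : Prop :=
  ∀ᵐ w ∂(bdryArc D), NTTendsto D f w (g w)

/-- `K` is the weighted Szegő kernel of `D` with boundary weight `lam`. -/
structure IsSzegoKernel (D : Set ℂ) (lam : ℂ → ℝ) (K : ℂ → ℂ → ℂ) : Prop where
  holo : ∀ w ∈ D, DifferentiableOn ℂ (fun z => K z w) D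
  cont : ∀ w ∈ D, ContinuousOn (fun z => K z w) (closure D)
  hardy : ∀ w ∈ D, HardyH2c D (fun z => K z w)
  hermitian : ∀ z ∈ D, ∀ w ∈ D, K z w = (starRingEnd ℂ) (K w z)
  sqfin : ∀ w ∈ D, (∫⁻ z, ENNReal.ofReal (‖K z w‖ ^ 2 * lam z) ∂(bdryArc D)) ≠ ⊤
  reproduce : ∀ f fb : ℂ → ℂ, HardyH2c D f → IsNTBoundaryValue D f fb → ∀ w ∈ D,
    f w = ((2 * Real.pi)⁻¹ : ℂ) * ∫ z, fb z * (starRingEnd ℂ) (K z w) * (lam z : ℂ) ∂(bdryArc D)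

/-- `B` is the weighted Bergman kernel of `D` with weight `ρ`. -/
structure IsBergmanKernel (D : Set ℂ) (ρ : ℂ → ℝ) (B : ℂ → ℂ → ℂ) : Prop where
  holo : ∀ w ∈ D, DifferentiableOn ℂ (fun z => B z w) D
  hermitian : ∀ z ∈ D, ∀ w ∈ D, B z w = (starRingEnd ℂ) (B w z)
  sqfin : ∀ w ∈ D, (∫⁻ z in D, ENNReal.ofReal (‖B z w‖ ^ 2 * ρ z)) ≠ ⊤
  reproduce : ∀ f : ℂ → ℂ, DifferentiableOn ℂ f D →
    IntegrableOn (fun z => ‖f z‖ ^ 2) D volume → ∀ w ∈ D,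
      f w = ∫ z in D, f z * (starRingEnd ℂ) (B z w) * (ρ z : ℂ)

/-- Extended-real logarithm (with `elog 0 = ⊥`). -/
noncomputable def elog (x : ℝ) : EReal := if x = 0 then ⊥ else ((Real.log x : ℝ) : EReal)

/-- `χ_{z₀}^m = χ_{-u}`: there is a holomorphic `F` on `D` with `log |F| = m·G + u`. -/
def charEqGreenPow (D : Set ℂ) (z₀ : ℂ) (G : ℂ → EReal) (u : ℂ → ℝ) (m : ℕ) : Prop :=
  ∃ F : ℂ → ℂ, DifferentiableOn ℂ F D ∧ ∀ z ∈ D \ {z₀},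
    F z ≠ 0 ∧ Real.log ‖F z‖ = m * (G z).toReal + u z

/-- `χ_{z₀} = χ_{-u}`. -/
def charEqGreen (D : Set ℂ) (z₀ : ℂ) (G : ℂ → EReal) (u : ℂ → ℝ) : Prop :=
  charEqGreenPow D z₀ G u 1

/-- The weight `ρ = e^{-φ} c(-2ψ)` (realized through `EReal.toReal`). -/
noncomputable def wgt2 (φ ψ : ℂ → EReal) (c : ℝ → ℝ) (z : ℂ) : ℝ :=
  Real.exp (-(φ z).toReal) * c ((-((2 : EReal) * ψ z)).toReal)

/-- The weight `e^{-φ} c(-ψ)` (realized through `EReal.toReal`). -/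
noncomputable def wgt1 (φ ψ : ℂ → EReal) (c : ℝ → ℝ) (z : ℂ) : ℝ :=
  Real.exp (-(φ z).toReal) * c ((-(ψ z)).toReal)

/-- Admissible gain function `c` on `[0,∞)`. -/
structure AdmissibleC (c : ℝ → ℝ) : Prop where
  meas : Measurable c
  pos : ∀ t : ℝ, 0 ≤ t → 0 < c t
  mono : ∀ s t : ℝ, 0 ≤ s → s ≤ t → c t * Real.exp (-t) ≤ c s * Real.exp (-s)
  limz : Filter.Tendsto c (nhdsWithin 0 (Set.Ioi 0)) (nhds 1)
  czero : c 0 = 1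
  fin : (∫⁻ t in Set.Ioi (0:ℝ), ENNReal.ofReal (c t * Real.exp (-t))) ≠ ⊤

/-- Admissible gain function `c` on `(0,∞)` (no normalization at `0`). -/
structure AdmissibleC' (c : ℝ → ℝ) : Prop where
  meas : Measurable c
  pos : ∀ t : ℝ, 0 < t → 0 < c t
  mono : ∀ s t : ℝ, 0 < s → s ≤ t → c t * Real.exp (-t) ≤ c s * Real.exp (-s)
  fin : (∫⁻ t in Set.Ioi (0:ℝ), ENNReal.ofReal (c t * Real.exp (-t))) ≠ ⊤

/-- `Z` is a discrete subset of `D`. -/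
def DiscreteIn (Z D : Set ℂ) : Prop :=
  Z ⊆ D ∧ ∀ z ∈ D, ∃ r > 0, Metric.ball z r ∩ Z ⊆ {z}

/-- `w` has a positive lower bound on every compact subset of `D ∖ Z`. -/
def PosLowerBoundOnCompacts (D Z : Set ℂ) (w : ℂ → ℝ) : Prop :=
  ∀ Kc : Set ℂ, Kc ⊆ D \ Z → IsCompact Kc → ∃ m : ℝ, 0 < m ∧ ∀ z ∈ Kc, m ≤ w z

/-- `∫₀^∞ c(t) e^{-t} dt`. -/
noncomputable def cInt (c : ℝ → ℝ) : ℝ := ∫ t in Set.Ioi (0:ℝ), c t * Real.exp (-t)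

/-- `h(t) = ∫_t^∞ c(s) e^{-s} ds`. -/
noncomputable def hFun (c : ℝ → ℝ) (t : ℝ) : ℝ := ∫ s in Set.Ioi t, c s * Real.exp (-s)

end

section SaitohAll

open MeasureTheory Metric Complex Set Filter
open scoped Topology ComplexConjugate

noncomputable section SaitohA

/-- the real-linear map `a dz + b dz̄` -/
def WD (a b : ℂ) : ℂ →L[ℝ] ℂ :=
  a • (ContinuousLinearMap.id ℝ ℂ) + b • (Complex.conjCLE : ℂ →L[ℝ] ℂ)

lemma WD_apply (a b x : ℂ) : WD a b x = a * x + b * conj x := by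
  simp [WD]

/-- `dF = a dz + b dz̄` at `w`. -/
def HasW (F : ℂ → ℂ) (a b w : ℂ) : Prop := HasFDerivAt F (WD a b) w

lemma HasW.congr_val {F : ℂ → ℂ} {a b a' b' w : ℂ} (h : HasW F a b w) (ha : a = a') (hb : b = b') :
    HasW F a' b' w := by subst ha; subst hb; exact h

lemma HasW.const (c w : ℂ) : HasW (fun _ => c) 0 0 w := by
  unfold HasW
  refine (hasFDerivAt_const c w).congr_fderiv ?_
  refine ContinuousLinearMap.ext fun x => ?_
  simp [WD_apply]

lemma HasW.of_deriv {F : ℂ → ℂ} {a w : ℂ} (h : HasDerivAt F a w) : HasW F a 0 w := by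
  unfold HasW
  refine (h.hasFDerivAt.restrictScalars ℝ).congr_fderiv ?_
  refine ContinuousLinearMap.ext fun x => ?_
  simp [WD_apply, mul_comm]

lemma HasW.mul {F G : ℂ → ℂ} {a b c d w : ℂ} (hF : HasW F a b w) (hG : HasW G c d w) :
    HasW (fun x => F x * G x) (a * G w + F w * c) (b * G w + F w * d) w := by
  unfold HasW at *
  refine (HasFDerivAt.mul hF hG).congr_fderiv ?_
  refine ContinuousLinearMap.ext fun x => ?_
  simp [WD_apply]
  ring

lemma HasW.add {F G : ℂ → ℂ} {a b c d w : ℂ} (hF : HasW F a b w) (hG : HasW G c d w) :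
    HasW (fun x => F x + G x) (a + c) (b + d) w := by
  unfold HasW at *
  refine (HasFDerivAt.add hF hG).congr_fderiv ?_
  refine ContinuousLinearMap.ext fun x => ?_
  simp [WD_apply]
  ring

lemma HasW.conj {F : ℂ → ℂ} {a b w : ℂ} (hF : HasW F a b w) :
    HasW (fun x => conj (F x)) (conj b) (conj a) w := by
  unfold HasW at *
  refine ((Complex.conjCLE : ℂ →L[ℝ] ℂ).hasFDerivAt.comp w hF).congr_fderiv ?_
  refine ContinuousLinearMap.ext fun x => ?_
  simp [WD_apply]
  ring

lemma HasW.comp_deriv {F : ℂ → ℂ} {a b w : ℂ} {φ : ℂ → ℂ} {φ' : ℂ} (hF : HasW F a b w)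
    (hφ : HasDerivAt φ φ' (F w)) : HasW (fun x => φ (F x)) (φ' * a) (φ' * b) w := by
  unfold HasW at *
  refine ((hφ.hasFDerivAt.restrictScalars ℝ).comp w hF).congr_fderiv ?_
  refine ContinuousLinearMap.ext fun x => ?_
  simp [WD_apply]
  ring

lemma HasW.real_comp {u : ℂ → ℝ} {a b w : ℂ} {φ : ℝ → ℝ} {φ' : ℝ}
    (hF : HasW (fun x => (u x : ℂ)) a b w)
    (hφ : HasDerivAt φ φ' (u w)) : HasW (fun x => ((φ (u x) : ℝ) : ℂ)) (φ' * a) (φ' * b) w := by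
  unfold HasW at *
  have h1 : HasFDerivAt u (Complex.reCLM.comp (WD a b)) w := by
    exact Complex.reCLM.hasFDerivAt.comp w hF
  have h2 := Complex.ofRealCLM.hasFDerivAt.comp w (hφ.hasFDerivAt.comp w h1)
  have h3 := Complex.ofRealCLM.hasFDerivAt.comp w h1
  have h4 := HasFDerivAt.unique h3 hF
  refine HasFDerivAt.congr_fderiv h2 ?_
  refine ContinuousLinearMap.ext fun x => ?_
  have h5 := congrArg (fun L => L x) h4
  simp [WD_apply] at h5 ⊢
  rw [mul_assoc, mul_assoc, ← mul_add, ← h5]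
  ring

lemma HasW.continuousAt {F : ℂ → ℂ} {a b w : ℂ} (h : HasW F a b w) : ContinuousAt F w :=
  HasFDerivAt.continuousAt h

lemma HasW.congr {F G : ℂ → ℂ} {a b w : ℂ} (h : HasW F a b w) (hFG : G =ᶠ[𝓝 w] F) :
    HasW G a b w := HasFDerivAt.congr_of_eventuallyEq h hFG

lemma HasW.unique {F : ℂ → ℂ} {a b c d w : ℂ} (h : HasW F a b w) (h' : HasW F c d w) :
    a = c ∧ b = d := by
  have h1 := HasFDerivAt.unique h h'
  have e1 := congrArg (fun L => L 1) h1
  have e2 := congrArg (fun L => L I) h1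
  simp [WD_apply] at e1 e2
  have e3 : a - b = c - d := by
    have : I * (a - b) = I * (c - d) := by linear_combination e2
    exact mul_left_cancel₀ I_ne_zero this
  constructor
  · linear_combination (e1 + e3) / 2
  · linear_combination (e1 - e3) / 2

lemma continuous_indicator_of_compact {E : Type*} [TopologicalSpace E] [Zero E] {D Kc : Set ℂ}
    (hD : IsOpen D) (hK : IsCompact Kc)
    (hKD : Kc ⊆ D) {F : ℂ → E} (hF : ContinuousOn F D) (h0 : ∀ w ∈ D \ Kc, F w = 0) :
    Continuous (D.indicator F) ∧ HasCompactSupport (D.indicator F) := by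
  have hz : ∀ w ∉ Kc, D.indicator F w = 0 := by
    intro w hw
    by_cases hwD : w ∈ D
    · rw [indicator_of_mem hwD]; exact h0 w ⟨hwD, hw⟩
    · rw [indicator_of_notMem hwD]
  constructor
  · rw [continuous_iff_continuousAt]
    intro w
    by_cases hw : w ∈ D
    · have : ContinuousAt F w := hF.continuousAt (hD.mem_nhds hw)
      refine this.congr ?_
      filter_upwards [hD.mem_nhds hw] with x hx
      rw [indicator_of_mem hx]
    · have : w ∈ Kcᶜ := fun h => hw (hKD h)
      refine (continuousAt_const (y := (0 : E))).congr ?_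
      filter_upwards [hK.isClosed.isOpen_compl.mem_nhds this] with x hx
      rw [hz x hx]
  · exact HasCompactSupport.intro hK hz

lemma integrableOn_of_compact {E : Type*} [NormedAddCommGroup E] {D Kc : Set ℂ} (hD : IsOpen D) (hK : IsCompact Kc)
    (hKD : Kc ⊆ D) {F : ℂ → E} (hF : ContinuousOn F D) (h0 : ∀ w ∈ D \ Kc, F w = 0) :
    IntegrableOn F D := by
  obtain ⟨h1, h2⟩ := continuous_indicator_of_compact hD hK hKD hF h0
  rw [← integrable_indicator_iff hD.measurableSet]
  exact h1.integrable_of_hasCompactSupport h2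

lemma ibp {D Kc : Set ℂ} (hD : IsOpen D) (hK : IsCompact Kc) (hKD : Kc ⊆ D)
    {F a b : ℂ → ℂ} (hF : ∀ w ∈ D, HasW F (a w) (b w) w) (ha : ContinuousOn a D)
    (hb : ContinuousOn b D) (h0 : ∀ w ∈ D \ Kc, F w = 0) :
    ∫ w in D, a w = 0 ∧ ∫ w in D, b w = 0 := by
  have hFc : ContinuousOn F D := fun w hw => (hF w hw).continuousAt.continuousWithinAt
  have hab : ∀ w ∈ D \ Kc, a w = 0 ∧ b w = 0 := by
    intro w hw
    have h1 : HasW F 0 0 w := by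
      refine (HasW.const 0 w).congr ?_
      filter_upwards [(hD.sdiff hK.isClosed).mem_nhds hw] with x hx
      exact h0 x hx
    exact (hF w hw.1).unique h1
  obtain ⟨F1, F2⟩ := continuous_indicator_of_compact hD hK hKD hFc h0
  obtain ⟨a1, a2⟩ := continuous_indicator_of_compact hD hK hKD ha (fun w hw => (hab w hw).1)
  obtain ⟨b1, b2⟩ := continuous_indicator_of_compact hD hK hKD hb (fun w hw => (hab w hw).2)
  have hder : ∀ w, HasFDerivAt (D.indicator F) (WD (D.indicator a w) (D.indicator b w)) w := by
    intro w
    by_cases hw : w ∈ D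
    · rw [indicator_of_mem hw, indicator_of_mem hw]
      refine (hF w hw).congr ?_
      filter_upwards [hD.mem_nhds hw] with x hx
      rw [indicator_of_mem hx]
    · rw [indicator_of_notMem hw, indicator_of_notMem hw]
      refine (HasW.const 0 w).congr ?_
      have : w ∈ Kcᶜ := fun h => hw (hKD h)
      filter_upwards [hK.isClosed.isOpen_compl.mem_nhds this] with x hx
      by_cases hxD : x ∈ D
      · rw [indicator_of_mem hxD]; exact h0 x ⟨hxD, hx⟩
      · rw [indicator_of_notMem hxD]
  have ia := a1.integrable_of_hasCompactSupport (μ := volume) a2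
  have ib := b1.integrable_of_hasCompactSupport (μ := volume) b2
  have iF := F1.integrable_of_hasCompactSupport (μ := volume) F2
  have key : ∀ v : ℂ, (∫ w, WD (D.indicator a w) (D.indicator b w) v) = 0 := by
    intro v
    have hsum : Integrable (fun x => D.indicator a x * v + D.indicator b x * conj v) :=
      (ia.mul_const v).add (ib.mul_const _)
    have := integral_bilinear_hasFDerivAt_right_eq_neg_left_of_integrable
      (f := fun _ : ℂ => (1 : ℂ)) (f' := fun _ => 0) (g := D.indicator F)
      (g' := fun w => WD (D.indicator a w) (D.indicator b w)) (v := v)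
      (B := ContinuousLinearMap.mul ℝ ℂ) (μ := volume)
      (by simp) (by simpa [WD_apply] using hsum) (by simpa using iF)
      (fun x _ => hasFDerivAt_const _ _) (fun x _ => hder x)
    simpa using this
  have k1 := key 1
  have k2 := key I
  simp only [WD_apply, map_one, mul_one, conj_I] at k1 k2
  rw [integral_add ia ib] at k1
  rw [integral_add (ia.mul_const _) (ib.mul_const _), integral_mul_const, integral_mul_const] at k2
  rw [integral_indicator hD.measurableSet, integral_indicator hD.measurableSet] at k1 k2
  have e3 : (∫ w in D, a w) - ∫ w in D, b w = 0 := by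
    have : I * ((∫ w in D, a w) - ∫ w in D, b w) = I * 0 := by linear_combination k2
    exact mul_left_cancel₀ I_ne_zero this
  constructor
  · linear_combination (k1 + e3) / 2
  · linear_combination (k1 - e3) / 2

lemma integral_bump : ∫ z : ℂ, (Real.pi)⁻¹ * ((1 + ‖z‖ ^ 2) ^ 2)⁻¹ = 1 := by
  have h := integral_fun_norm_addHaar (volume : Measure ℂ)
    (fun y : ℝ => (Real.pi)⁻¹ * ((1 + y ^ 2) ^ 2)⁻¹)
  rw [h]
  have hd : Module.finrank ℝ ℂ = 2 := Complex.finrank_real_complex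
  have hvol : (volume : Measure ℂ).real (ball 0 1) = Real.pi := by
    simp [Measure.real, Complex.volume_ball]
  rw [hd, hvol]
  have : ∫ y in Ioi (0:ℝ), y ^ (2 - 1) • (Real.pi⁻¹ * ((1 + y ^ 2) ^ 2)⁻¹) = Real.pi⁻¹ * (1/2) := by
    have h1 : ∫ y in Ioi (0:ℝ), y ^ (2 - 1) • (Real.pi⁻¹ * ((1 + y ^ 2) ^ 2)⁻¹)
        = 0 - (- (Real.pi⁻¹ * (1/2)) * (1 + (0:ℝ) ^ 2)⁻¹) := by
      apply integral_Ioi_of_hasDerivAt_of_nonneg' (g := fun y => - (Real.pi⁻¹ * (1/2)) * (1 + y ^ 2)⁻¹)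
      · intro x _
        have h2 : HasDerivAt (fun y : ℝ => 1 + y ^ 2) (2 * x) x := by
          simpa using (hasDerivAt_pow 2 x).const_add 1
        have h3 := (h2.inv (by positivity)).const_mul (- (Real.pi⁻¹ * (1/2)))
        refine HasDerivAt.congr_deriv h3 ?_
        simp only [smul_eq_mul]
        norm_num
        field_simp
      · intro x hx
        have : (0:ℝ) < x := hx
        simp only [smul_eq_mul]; positivity
      · rw [show (0:ℝ) = - (Real.pi⁻¹ * (1/2)) * 0 by ring]
        apply Tendsto.const_mul
        apply Tendsto.inv_tendsto_atTop
        apply tendsto_atTop_add_const_left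
        exact tendsto_pow_atTop (by norm_num)
    rw [h1]; norm_num
  rw [this]
  simp

lemma pompeiu_in {D Kc : Set ℂ} (hD : IsOpen D) (hK : IsCompact Kc) (hKD : Kc ⊆ D)
    {F a R : ℂ → ℂ} {p : ℂ} (hp : p ∈ D)
    (hF : ∀ w ∈ D, HasW F (a w) ((w - p) * R w) w) (ha : ContinuousOn a D)
    (hR : ContinuousOn R D) (h0 : ∀ w ∈ D \ Kc, F w = 0) (hR0 : ∀ w ∈ D \ Kc, R w = 0) :
    ∫ w in D, R w = - (Real.pi * F p) := by
  have hFc : ContinuousOn F D := fun w hw => (hF w hw).continuousAt.continuousWithinAt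
  have iR : IntegrableOn R D := integrableOn_of_compact hD hK hKD hR hR0
  have iF : IntegrableOn F D := integrableOn_of_compact hD hK hKD hFc h0
  obtain ⟨F1, F2⟩ := continuous_indicator_of_compact hD hK hKD hFc h0
  -- the regularized identity
  have hreg : ∀ c : ℝ, 0 < c → (∫ w in D, R w * ((c ^ 2 * ‖w - p‖ ^ 2 / (1 + c ^ 2 * ‖w - p‖ ^ 2) : ℝ) : ℂ))
      + ∫ w in D, F w * ((c ^ 2 * ((1 + c ^ 2 * ‖w - p‖ ^ 2) ^ 2)⁻¹ : ℝ) : ℂ) = 0 := by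
    intro c hc
    set N : ℂ → ℂ := fun w => 1 + c ^ 2 * ((w - p) * conj (w - p)) with hN
    have hNr : ∀ w, N w = ((1 + c ^ 2 * ‖w - p‖ ^ 2 : ℝ) : ℂ) := by
      intro w; simp only [hN, Complex.mul_conj, Complex.normSq_eq_norm_sq]; push_cast; ring
    have hN0 : ∀ w, N w ≠ 0 := by
      intro w; rw [hNr]; norm_cast; positivity
    have hNc : Continuous N := by
      have : N = fun w => 1 + (c:ℂ) ^ 2 * ((w - p) * conj (w - p)) := rfl
      rw [this]
      exact continuous_const.add (continuous_const.mul ((continuous_id.sub continuous_const).mul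
        (Complex.continuous_conj.comp (continuous_id.sub continuous_const))))
    have hz : ∀ w, HasW (fun w => w - p) 1 0 w := fun w =>
      HasW.of_deriv ((hasDerivAt_id w).sub_const p)
    have hzc : ∀ w, HasW (fun w => conj (w - p)) 0 1 w := fun w =>
      (hz w).conj.congr_val (by simp) (by simp)
    have hNW : ∀ w, HasW N (c ^ 2 * conj (w - p)) (c ^ 2 * (w - p)) w := by
      intro w
      have := (HasW.const 1 w).add ((HasW.const ((c:ℂ) ^ 2) w).mul ((hz w).mul (hzc w)))
      exact this.congr_val (by simp) (by simp)
    have hNi : ∀ w, HasW (fun w => (N w)⁻¹) (-(N w ^ 2)⁻¹ * (c ^ 2 * conj (w - p)))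
        (-(N w ^ 2)⁻¹ * (c ^ 2 * (w - p))) w := fun w =>
      (hNW w).comp_deriv (hasDerivAt_inv (hN0 w))
    have hk : ∀ w, HasW (fun w => (c:ℂ) ^ 2 * (conj (w - p) * (N w)⁻¹))
        (c ^ 2 * (conj (w - p) * (-(N w ^ 2)⁻¹ * (c ^ 2 * conj (w - p)))))
        (c ^ 2 * (N w ^ 2)⁻¹) w := by
      intro w
      have := (HasW.const ((c:ℂ) ^ 2) w).mul ((hzc w).mul (hNi w))
      refine this.congr_val (by simp) ?_
      have h1 := hN0 w
      simp only [zero_mul, one_mul, zero_add]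
      field_simp
      simp only [hN]; ring
    have hprod : ∀ w ∈ D, HasW (fun w => F w * ((c:ℂ) ^ 2 * (conj (w - p) * (N w)⁻¹))) _ _ w :=
      fun w hw => (hF w hw).mul (hk w)
    have cz : Continuous fun w : ℂ => w - p := continuous_id.sub continuous_const
    have czc : Continuous fun w : ℂ => conj (w - p) := Complex.continuous_conj.comp cz
    have cNi : Continuous fun w => (N w)⁻¹ := hNc.inv₀ hN0
    have cNi2 : Continuous fun w => (N w ^ 2)⁻¹ := (hNc.pow 2).inv₀ (fun w => pow_ne_zero 2 (hN0 w))
    have hInt0 := (ibp hD hK hKD hprod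
      (by
        refine (ha.mul ?_).add (hFc.mul ?_)
        · exact (continuous_const.mul (czc.mul cNi)).continuousOn
        · exact (continuous_const.mul (czc.mul (cNi2.neg.mul
            (continuous_const.mul czc)))).continuousOn)
      (by
        refine ((cz.continuousOn.mul hR).mul ?_).add (hFc.mul ?_)
        · exact (continuous_const.mul (czc.mul cNi)).continuousOn
        · exact (continuous_const.mul cNi2).continuousOn)
      (fun w hw => by simp [h0 w hw])).2
    rw [← integral_add]
    · rw [← hInt0]
      congr 1
      ext w
      have h1 := hN0 w
      have h2 : ((c ^ 2 * ‖w - p‖ ^ 2 / (1 + c ^ 2 * ‖w - p‖ ^ 2) : ℝ) : ℂ)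
          = c ^ 2 * ((w - p) * conj (w - p)) * (N w)⁻¹ := by
        rw [hNr, Complex.mul_conj, Complex.normSq_eq_norm_sq]; push_cast; rw [div_eq_mul_inv]
      have h3 : ((c ^ 2 * ((1 + c ^ 2 * ‖w - p‖ ^ 2) ^ 2)⁻¹ : ℝ) : ℂ) = c ^ 2 * (N w ^ 2)⁻¹ := by
        rw [hNr]; push_cast; ring
      rw [h2, h3]; ring
    · refine integrableOn_of_compact hD hK hKD (hR.mul ?_) (fun w hw => by simp [hR0 w hw])
      refine (Complex.continuous_ofReal.comp ?_).continuousOn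
      exact Continuous.div (by fun_prop) (by fun_prop) (fun w => by positivity)
    · refine integrableOn_of_compact hD hK hKD (hFc.mul ?_) (fun w hw => by simp [h0 w hw])
      refine (Complex.continuous_ofReal.comp ?_).continuousOn
      exact continuous_const.mul (Continuous.inv₀ (by fun_prop) (fun w => by positivity))
  -- limit of first
  have lim1 : Tendsto (fun c : ℝ => ∫ w in D, R w * ((c ^ 2 * ‖w - p‖ ^ 2 / (1 + c ^ 2 * ‖w - p‖ ^ 2) : ℝ) : ℂ))
      atTop (𝓝 (∫ w in D, R w)) := by
    apply tendsto_integral_filter_of_dominated_convergence (fun w => ‖R w‖)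
    · refine Eventually.of_forall fun c => ?_
      refine iR.aestronglyMeasurable.mul ?_
      refine (Complex.continuous_ofReal.comp ?_).aestronglyMeasurable
      exact Continuous.div (by fun_prop) (by fun_prop) (fun w => by positivity)
    · refine Eventually.of_forall fun c => Eventually.of_forall fun w => ?_
      rw [norm_mul, Complex.norm_real, Real.norm_of_nonneg (by positivity)]
      refine mul_le_of_le_one_right (norm_nonneg _) ?_
      rw [div_le_one (by positivity)]; linarith
    · exact iR.norm
    · have : ∀ᵐ w ∂(volume.restrict D), w ≠ p := by
        refine ae_restrict_of_ae ?_
        exact compl_mem_ae_iff.2 (measure_singleton p)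
      filter_upwards [this] with w hw
      have hpos : 0 < ‖w - p‖ ^ 2 := by
        have : 0 < ‖w - p‖ := norm_pos_iff.2 (sub_ne_zero.2 hw)
        positivity
      have h1 : Tendsto (fun c : ℝ => c ^ 2 * ‖w - p‖ ^ 2 / (1 + c ^ 2 * ‖w - p‖ ^ 2)) atTop (𝓝 1) := by
        have h2 : Tendsto (fun c : ℝ => 1 + c ^ 2 * ‖w - p‖ ^ 2) atTop atTop :=
          tendsto_atTop_add_const_left _ _ ((tendsto_pow_atTop (by norm_num)).atTop_mul_const hpos)
        have h3 : Tendsto (fun c : ℝ => 1 - (1 + c ^ 2 * ‖w - p‖ ^ 2)⁻¹) atTop (𝓝 (1 - 0)) :=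
          tendsto_const_nhds.sub h2.inv_tendsto_atTop
        rw [sub_zero] at h3
        refine h3.congr fun c => ?_
        have : 1 + c ^ 2 * ‖w - p‖ ^ 2 ≠ 0 := by positivity
        field_simp
        ring
      have h4 := ((Complex.continuous_ofReal.tendsto 1).comp h1).const_mul (R w)
      simpa using h4
  have lim2 : Tendsto (fun c : ℝ => ∫ w in D, F w * ((c ^ 2 * ((1 + c ^ 2 * ‖w - p‖ ^ 2) ^ 2)⁻¹ : ℝ) : ℂ))
      atTop (𝓝 (Real.pi * F p)) := by
    have hφ := tendsto_integral_comp_smul_smul_of_integrable (μ := (volume : Measure ℂ))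
      (φ := fun z : ℂ => (Real.pi)⁻¹ * ((1 + ‖z‖ ^ 2) ^ 2)⁻¹) (fun z => by positivity) integral_bump
      (by
        rw [Complex.finrank_real_complex]
        have h2 : Tendsto (fun y : ℝ => y ^ 2 * (Real.pi⁻¹ * ((1 + y ^ 2) ^ 2)⁻¹)) atTop (𝓝 0) := by
          have h3 : Tendsto (fun y : ℝ => Real.pi⁻¹ * (1 + y ^ 2)⁻¹) atTop (𝓝 (Real.pi⁻¹ * 0)) := by
            apply Tendsto.const_mul
            apply Tendsto.inv_tendsto_atTop
            exact tendsto_atTop_add_const_left _ _ (tendsto_pow_atTop (by norm_num))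
          rw [mul_zero] at h3
          refine squeeze_zero (fun y => by positivity) (fun y => ?_) h3
          rw [mul_left_comm]
          refine mul_le_mul_of_nonneg_left ?_ (by positivity)
          rw [← div_eq_mul_inv, ← one_div, div_le_div_iff₀ (by positivity) (by positivity)]
          nlinarith [sq_nonneg y]
        exact h2.comp tendsto_norm_cobounded_atTop)
      (g := fun x => D.indicator F (x + p))
      ((F1.integrable_of_hasCompactSupport F2).comp_add_right p)
      (F1.comp (continuous_id.add continuous_const)).continuousAt
    have hφ2 := hφ.const_mul (Real.pi : ℂ)
    simp only [zero_add, indicator_of_mem hp] at hφ2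
    refine hφ2.congr fun c => ?_
    rw [← integral_indicator hD.measurableSet, ← integral_const_mul,
      ← integral_add_right_eq_self (D.indicator fun w => F w * ((c ^ 2 * ((1 + c ^ 2 * ‖w - p‖ ^ 2) ^ 2)⁻¹ : ℝ) : ℂ)) p]
    congr 1
    ext x
    rw [Complex.finrank_real_complex]
    by_cases hx : x + p ∈ D
    · rw [indicator_of_mem hx, indicator_of_mem hx]
      have hpi : (Real.pi : ℂ) ≠ 0 := by exact_mod_cast Real.pi_ne_zero
      have hn : ‖c • x‖ ^ 2 = c ^ 2 * ‖x‖ ^ 2 := by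
        rw [norm_smul, mul_pow, Real.norm_eq_abs, sq_abs]
      rw [hn]
      simp only [add_sub_cancel_right, real_smul]
      push_cast
      field_simp
    · rw [indicator_of_notMem hx, indicator_of_notMem hx]; simp
  have lim3 := lim1.add lim2
  have lim4 : Tendsto (fun _ : ℝ => (0:ℂ)) atTop (𝓝 ((∫ w in D, R w) + Real.pi * F p)) := by
    refine lim3.congr' ?_
    filter_upwards [eventually_gt_atTop 0] with c hc
    exact hreg c hc
  have := tendsto_nhds_unique lim4 tendsto_const_nhds
  linear_combination this

lemma pompeiu_out {D Kc : Set ℂ} (hD : IsOpen D) (hK : IsCompact Kc) (hKD : Kc ⊆ D)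
    {F a R : ℂ → ℂ} {p : ℂ} (hp : p ∉ D)
    (hF : ∀ w ∈ D, HasW F (a w) ((w - p) * R w) w) (ha : ContinuousOn a D)
    (hR : ContinuousOn R D) (h0 : ∀ w ∈ D \ Kc, F w = 0) :
    ∫ w in D, R w = 0 := by
  have hFc : ContinuousOn F D := fun w hw => (hF w hw).continuousAt.continuousWithinAt
  have hne : ∀ w ∈ D, w - p ≠ 0 := fun w hw h => hp (by rw [← sub_eq_zero.1 h]; exact hw)
  have hi : ∀ w ∈ D, HasW (fun w => (w - p)⁻¹) (-((w - p) ^ 2)⁻¹) 0 w := fun w hw =>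
    HasW.of_deriv (((hasDerivAt_inv (hne w hw)).comp w ((hasDerivAt_id w).sub_const p)).congr_deriv (by simp))
  have cz : ContinuousOn (fun w : ℂ => w - p) D := (continuous_id.sub continuous_const).continuousOn
  refine (ibp hD hK hKD (F := fun w => F w * (w - p)⁻¹)
    (a := fun w => a w * (w - p)⁻¹ + F w * (-((w - p) ^ 2)⁻¹)) (b := R) ?_ ?_ hR
    (fun w hw => by simp [h0 w hw])).2
  · intro w hw
    refine ((hF w hw).mul (hi w hw)).congr_val rfl ?_
    have := hne w hw
    field_simp
    ring
  · exact (ha.mul (cz.inv₀ hne)).add (hFc.mul ((cz.pow 2).inv₀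
      (fun w hw => pow_ne_zero 2 (hne w hw))).neg)

end SaitohA

noncomputable section SaitohB

def vv (h : ℂ → ℝ) (w : ℂ) : ℝ := Real.exp (2 * h w)
def uu (t : ℂ) (h : ℂ → ℝ) (w : ℂ) : ℝ := ‖w - t‖ ^ 2 * vv h w
def kk (t : ℂ) (P : ℂ → ℂ) (w : ℂ) : ℂ := 1 + (w - t) * P w

structure Setup (D : Set ℂ) (t : ℂ) (h : ℂ → ℝ) (P : ℂ → ℂ) : Prop where
  op : IsOpen D
  conn : IsConnected D
  bdd : Bornology.IsBounded D
  mem : t ∈ D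
  holo : DifferentiableOn ℂ P D
  hW : ∀ w ∈ D, HasW (fun x => (h x : ℂ)) (P w / 2) (conj (P w) / 2) w
  lt_one : ∀ w ∈ D, uu t h w < 1
  cpt : ∀ ε > 0, IsCompact {w | w ∈ D ∧ uu t h w ≤ 1 - ε}

structure Cut (θ θ' Ψ : ℝ → ℝ) (ε : ℝ) : Prop where
  pos : 0 < ε
  dθ : ∀ x, HasDerivAt θ (θ' x) x
  cθ' : Continuous θ'
  dΨ : ∀ x, HasDerivAt Ψ (-θ x) x
  zθ : ∀ x, 1 - ε ≤ x → θ x = 0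
  zθ' : ∀ x, 1 - ε ≤ x → θ' x = 0
  zΨ : ∀ x, 1 - ε ≤ x → Ψ x = 0

namespace Setup
variable {D : Set ℂ} {t : ℂ} {h : ℂ → ℝ} {P : ℂ → ℂ}

lemma Wv (S : Setup D t h P) {w : ℂ} (hw : w ∈ D) :
    HasW (fun x => (vv h x : ℂ)) (P w * vv h w) (conj (P w) * vv h w) w := by
  have h1 : HasDerivAt (fun x : ℝ => Real.exp (2 * x)) (Real.exp (2 * h w) * 2) (h w) := by
    have := ((hasDerivAt_id (h w)).const_mul 2).exp
    simpa using this
  refine ((S.hW w hw).real_comp h1).congr_val ?_ ?_ <;> (simp only [vv]; push_cast; ring)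

lemma uu_eq (S : Setup D t h P) (w : ℂ) : (uu t h w : ℂ) = (w - t) * conj (w - t) * vv h w := by
  simp only [uu, Complex.mul_conj, Complex.normSq_eq_norm_sq]; push_cast; ring

lemma Wz (S : Setup D t h P) (w : ℂ) : HasW (fun x => x - t) 1 0 w := HasW.of_deriv ((hasDerivAt_id w).sub_const t)

lemma Wu (S : Setup D t h P) {w : ℂ} (hw : w ∈ D) :
    HasW (fun x => (uu t h x : ℂ)) (conj (w - t) * kk t P w * vv h w)
      ((w - t) * conj (kk t P w) * vv h w) w := by
  have h1 := ((S.Wz w).mul (S.Wz w).conj).mul (S.Wv hw)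
  have h2 : (fun x => (uu t h x : ℂ)) = fun x => (x - t) * conj (x - t) * vv h x :=
    funext S.uu_eq
  rw [h2]
  refine h1.congr_val ?_ ?_ <;> (simp only [kk, map_sub, map_add, map_mul, map_one, map_zero]; ring)

lemma Wholo (S : Setup D t h P) {f : ℂ → ℂ} (hf : DifferentiableOn ℂ f D) {w : ℂ} (hw : w ∈ D) :
    HasW f (deriv f w) 0 w :=
  HasW.of_deriv (hf.differentiableAt (S.op.mem_nhds hw)).hasDerivAt

lemma Wk (S : Setup D t h P) {w : ℂ} (hw : w ∈ D) : HasW (kk t P) (P w + (w - t) * deriv P w) 0 w := by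
  have := (HasW.const 1 w).add ((S.Wz w).mul (S.Wholo S.holo hw))
  exact this.congr_val (by ring) (by ring)

lemma kholo (S : Setup D t h P) : DifferentiableOn ℂ (kk t P) D :=
  (differentiableOn_const _).add ((differentiableOn_id.sub (differentiableOn_const _)).mul S.holo)

lemma vcont (S : Setup D t h P) : ContinuousOn (vv h) D := by
  have : ContinuousOn (fun x => (vv h x : ℂ)) D := fun w hw => (S.Wv hw).continuousAt.continuousWithinAt
  exact (Complex.continuous_re.comp_continuousOn this).congr fun x _ => by simp

lemma ucont (S : Setup D t h P) : ContinuousOn (uu t h) D := by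
  unfold uu
  exact ((continuous_id.sub continuous_const).norm.pow 2).continuousOn.mul S.vcont

lemma derivcont (S : Setup D t h P) {f : ℂ → ℂ} (hf : DifferentiableOn ℂ f D) : ContinuousOn (deriv f) D :=
  (hf.deriv S.op).continuousOn

lemma vpos (S : Setup D t h P) (w : ℂ) : 0 < vv h w := Real.exp_pos _

lemma I1 (S : Setup D t h P) {θ θ' Ψ : ℝ → ℝ} {ε : ℝ} (C : Cut θ θ' Ψ ε) {c q : ℂ → ℂ} (hc : DifferentiableOn ℂ c D)
    (hq : q = fun w => deriv c w + P w * c w) :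
    (∫ w in D, Ψ (uu t h w) * (vv h w * ‖q w‖ ^ 2)) +
      ∫ w in D, θ (uu t h w) * (‖c w‖ ^ 2 * ‖kk t P w‖ ^ 2 * vv h w ^ 2) =
    ∫ w in D, - θ' (uu t h w) * (uu t h w * ‖c w‖ ^ 2 * ‖kk t P w‖ ^ 2 * vv h w ^ 2) := by
  have hqh : DifferentiableOn ℂ q D := by
    rw [hq]; exact (hc.deriv S.op).add (S.holo.mul hc)
  have hK := S.cpt ε C.pos
  have hKD : {w | w ∈ D ∧ uu t h w ≤ 1 - ε} ⊆ D := fun w hw => hw.1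
  have hout : ∀ w ∈ D \ {w | w ∈ D ∧ uu t h w ≤ 1 - ε}, 1 - ε ≤ uu t h w := by
    rintro w ⟨h1, h2⟩
    by_contra h3
    exact h2 ⟨h1, (not_le.1 h3).le⟩
  -- continuity
  have cof {f : ℂ → ℝ} (hf : ContinuousOn f D) : ContinuousOn (fun w => (f w : ℂ)) D :=
    Complex.continuous_ofReal.comp_continuousOn hf
  have ccj {f : ℂ → ℂ} (hf : ContinuousOn f D) : ContinuousOn (fun w => conj (f w)) D :=
    Complex.continuous_conj.comp_continuousOn hf
  have θc : Continuous θ := continuous_iff_continuousAt.2 fun x => (C.dθ x).continuousAt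
  have Ψc : Continuous Ψ := continuous_iff_continuousAt.2 fun x => (C.dΨ x).continuousAt
  have cθ := θc.comp_continuousOn S.ucont
  have cΨ := Ψc.comp_continuousOn S.ucont
  have cθ' := C.cθ'.comp_continuousOn S.ucont
  have cv := S.vcont
  have cu := S.ucont
  have cc := hc.continuousOn
  have cq := hqh.continuousOn
  have ck := S.kholo.continuousOn
  have cP := S.holo.continuousOn
  have cc' := S.derivcont hc
  have cq' := S.derivcont hqh
  have cz : ContinuousOn (fun w : ℂ => w - t) D := (continuous_id.sub continuous_const).continuousOn
  have WΨ : ∀ w ∈ D, _ := fun w hw => (S.Wu hw).real_comp (C.dΨ (uu t h w))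
  have Wθ : ∀ w ∈ D, _ := fun w hw => (S.Wu hw).real_comp (C.dθ (uu t h w))
  have W1 : ∀ w ∈ D, _ := fun w hw =>
    (WΨ w hw).mul ((S.Wv hw).mul ((S.Wholo hc hw).conj.mul (S.Wholo hqh hw)))
  have W2 : ∀ w ∈ D, _ := fun w hw =>
    (((S.Wholo hc hw).mul ((S.Wholo hc hw).conj.mul (S.Wv hw))).mul
      ((Wθ w hw).mul ((S.Wz w).mul ((S.Wk hw).conj.mul (S.Wv hw)))))
  have E1 := (ibp S.op hK hKD (b := fun w => -((θ (uu t h w) : ℂ) * ((w - t) * conj (kk t P w) * vv h w) *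
      (vv h w * (conj (c w) * q w))) + ((Ψ (uu t h w) * (vv h w * ‖q w‖ ^ 2) : ℝ) : ℂ))
      (fun w hw => (W1 w hw).congr_val rfl (by
        have hn : ((‖q w‖ : ℂ)) ^ 2 = q w * conj (q w) := by
          rw [Complex.mul_conj, Complex.normSq_eq_norm_sq]; push_cast; rfl
        push_cast
        rw [hn]
        simp only [hq, map_add, map_mul, map_zero]
        ring)) (by
        refine ((ContinuousOn.mul ?_ ?_)).mul ?_ |>.add ((cof cΨ).mul ?_)
        · exact cof cθ.neg
        · exact ((ccj cz).mul ck).mul (cof cv)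
        · exact (cof cv).mul ((ccj cc).mul cq)
        · refine ((cP.mul (cof cv)).mul ((ccj cc).mul cq)).add ((cof cv).mul ?_)
          exact ((ccj continuousOn_const).mul cq).add ((ccj cc).mul cq')) (by
        refine ((cof cθ).mul ((cz.mul (ccj ck)).mul (cof cv)) |>.mul ((cof cv).mul ((ccj cc).mul cq))).neg.add
          (cof (cΨ.mul (cv.mul (cq.norm.pow 2))))) (fun w hw => by
        have := C.zΨ _ (hout w hw)
        simp [this])).2
  have E2 := (ibp S.op hK hKD (a := fun w => (θ (uu t h w) : ℂ) * ((w - t) * conj (kk t P w) * vv h w) *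
      (vv h w * (conj (c w) * q w)) +
      (((θ' (uu t h w) * (uu t h w * ‖c w‖ ^ 2 * ‖kk t P w‖ ^ 2 * vv h w ^ 2) : ℝ) : ℂ) +
       ((θ (uu t h w) * (‖c w‖ ^ 2 * ‖kk t P w‖ ^ 2 * vv h w ^ 2) : ℝ) : ℂ)))
      (fun w hw => (W2 w hw).congr_val (by
        have hn : ((‖c w‖ : ℂ)) ^ 2 = c w * conj (c w) := by
          rw [Complex.mul_conj, Complex.normSq_eq_norm_sq]; push_cast; rfl
        have hn2 : ((‖kk t P w‖ : ℂ)) ^ 2 = kk t P w * conj (kk t P w) := by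
          rw [Complex.mul_conj, Complex.normSq_eq_norm_sq]; push_cast; rfl
        push_cast
        rw [hn, hn2, S.uu_eq]
        simp only [hq, map_add, map_mul, map_zero, kk, map_one]
        ring) rfl) (by
        refine ((cof cθ).mul ((cz.mul (ccj ck)).mul (cof cv)) |>.mul ((cof cv).mul ((ccj cc).mul cq))).add
          ((cof (cθ'.mul ?_)).add (cof (cθ.mul ?_)))
        · exact ((cu.mul (cc.norm.pow 2)).mul (ck.norm.pow 2)).mul (cv.pow 2)
        · exact ((cc.norm.pow 2).mul (ck.norm.pow 2)).mul (cv.pow 2)) (by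
        refine ContinuousOn.add (ContinuousOn.mul ?_ ?_) (ContinuousOn.mul ?_ ?_)
        · exact (continuousOn_const.mul ((ccj cc).mul (cof cv))).add
            (cc.mul (((ccj cc').mul (cof cv)).add ((ccj cc).mul ((ccj cP).mul (cof cv)))))
        · exact (cof cθ).mul (cz.mul ((ccj ck).mul (cof cv)))
        · exact cc.mul ((ccj cc).mul (cof cv))
        · refine (((cof cθ').mul ((cz.mul (ccj ck)).mul (cof cv))).mul (cz.mul ((ccj ck).mul (cof cv)))).add
            ((cof cθ).mul ((continuousOn_const.mul ((ccj ck).mul (cof cv))).add (cz.mul ?_)))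
          exact ((ccj (cP.add (cz.mul (S.derivcont S.holo)))).mul (cof cv)).add
            ((ccj ck).mul ((ccj cP).mul (cof cv)))) (fun w hw => by
        have := C.zθ _ (hout w hw)
        simp [this])).1
  have i1 : IntegrableOn (fun w => (θ (uu t h w) : ℂ) * ((w - t) * conj (kk t P w) * vv h w) *
      (vv h w * (conj (c w) * q w))) D :=
    integrableOn_of_compact S.op hK hKD
      ((cof cθ).mul ((cz.mul (ccj ck)).mul (cof cv)) |>.mul ((cof cv).mul ((ccj cc).mul cq)))
      (fun w hw => by have := C.zθ _ (hout w hw); simp [this])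
  have i2 : IntegrableOn (fun w => ((Ψ (uu t h w) * (vv h w * ‖q w‖ ^ 2) : ℝ) : ℂ)) D :=
    integrableOn_of_compact S.op hK hKD (cof (cΨ.mul (cv.mul (cq.norm.pow 2))))
      (fun w hw => by have := C.zΨ _ (hout w hw); simp [this])
  have i3 : IntegrableOn (fun w => ((θ' (uu t h w) * (uu t h w * ‖c w‖ ^ 2 * ‖kk t P w‖ ^ 2 * vv h w ^ 2) : ℝ) : ℂ)) D :=
    integrableOn_of_compact S.op hK hKD
      (cof (cθ'.mul (((cu.mul (cc.norm.pow 2)).mul (ck.norm.pow 2)).mul (cv.pow 2))))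
      (fun w hw => by have := C.zθ' _ (hout w hw); simp [this])
  have i4 : IntegrableOn (fun w => ((θ (uu t h w) * (‖c w‖ ^ 2 * ‖kk t P w‖ ^ 2 * vv h w ^ 2) : ℝ) : ℂ)) D :=
    integrableOn_of_compact S.op hK hKD
      (cof (cθ.mul (((cc.norm.pow 2).mul (ck.norm.pow 2)).mul (cv.pow 2))))
      (fun w hw => by have := C.zθ _ (hout w hw); simp [this])
  have E0 := integral_add i1.neg i2
  simp only [Pi.neg_apply] at E0
  rw [E0, integral_neg] at E1
  have E00 := integral_add i1 (i3.add i4)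
  simp only [Pi.add_apply] at E00
  rw [E00] at E2
  have E3 : ∫ w in D, (((θ' (uu t h w) * (uu t h w * ‖c w‖ ^ 2 * ‖kk t P w‖ ^ 2 * vv h w ^ 2) : ℝ) : ℂ) +
       ((θ (uu t h w) * (‖c w‖ ^ 2 * ‖kk t P w‖ ^ 2 * vv h w ^ 2) : ℝ) : ℂ)) = _ := integral_add i3 i4
  rw [E3, integral_complex_ofReal, integral_complex_ofReal] at E2
  rw [integral_complex_ofReal] at E1
  have E4 : (((∫ w in D, Ψ (uu t h w) * (vv h w * ‖q w‖ ^ 2)) +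
      ∫ w in D, θ (uu t h w) * (‖c w‖ ^ 2 * ‖kk t P w‖ ^ 2 * vv h w ^ 2) : ℝ) : ℂ) =
    ((-∫ w in D, θ' (uu t h w) * (uu t h w * ‖c w‖ ^ 2 * ‖kk t P w‖ ^ 2 * vv h w ^ 2) : ℝ) : ℂ) := by
    push_cast
    linear_combination E1 + E2
  rw [Complex.ofReal_inj.1 E4, ← integral_neg]
  congr 1
  ext w
  ring

lemma I2 (S : Setup D t h P) {θ θ' Ψ : ℝ → ℝ} {ε : ℝ} (C : Cut θ θ' Ψ ε) {f : ℂ → ℂ} (hf : DifferentiableOn ℂ f D) :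
    ∫ w in D, f w * conj (kk t P w) * vv h w * θ (uu t h w) = Real.pi * f t * Ψ 0 := by
  have hK := S.cpt ε C.pos
  have hKD : {w | w ∈ D ∧ uu t h w ≤ 1 - ε} ⊆ D := fun w hw => hw.1
  have hout : ∀ w ∈ D \ {w | w ∈ D ∧ uu t h w ≤ 1 - ε}, 1 - ε ≤ uu t h w := by
    rintro w ⟨h1, h2⟩
    by_contra h3
    exact h2 ⟨h1, (not_le.1 h3).le⟩
  have cof {f : ℂ → ℝ} (hf : ContinuousOn f D) : ContinuousOn (fun w => (f w : ℂ)) D :=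
    Complex.continuous_ofReal.comp_continuousOn hf
  have ccj {f : ℂ → ℂ} (hf : ContinuousOn f D) : ContinuousOn (fun w => conj (f w)) D :=
    Complex.continuous_conj.comp_continuousOn hf
  have θc : Continuous θ := continuous_iff_continuousAt.2 fun x => (C.dθ x).continuousAt
  have Ψc : Continuous Ψ := continuous_iff_continuousAt.2 fun x => (C.dΨ x).continuousAt
  have cθ := θc.comp_continuousOn S.ucont
  have cΨ := Ψc.comp_continuousOn S.ucont
  have cv := S.vcont
  have ck := S.kholo.continuousOn
  have cz : ContinuousOn (fun w : ℂ => w - t) D := (continuous_id.sub continuous_const).continuousOn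
  have WΨ : ∀ w ∈ D, _ := fun w hw => (S.Wu hw).real_comp (C.dΨ (uu t h w))
  have W1 : ∀ w ∈ D, _ := fun w hw => (S.Wholo hf hw).mul (WΨ w hw)
  have E := pompeiu_in S.op hK hKD (p := t) S.mem
    (R := fun w => -(f w * conj (kk t P w) * vv h w * θ (uu t h w)))
    (fun w hw => (W1 w hw).congr_val rfl (by push_cast; ring)) (by
      refine ((S.derivcont hf).mul (cof cΨ)).add (hf.continuousOn.mul ((cof cθ.neg).mul ?_))
      exact ((ccj cz).mul ck).mul (cof cv)) (by
      exact (((hf.continuousOn.mul (ccj ck)).mul (cof cv)).mul (cof cθ)).neg)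
    (fun w hw => by have := C.zΨ _ (hout w hw); simp [this])
    (fun w hw => by have := C.zθ _ (hout w hw); simp [this])
  rw [integral_neg] at E
  have hu0 : uu t h t = 0 := by simp [uu]
  rw [hu0] at E
  linear_combination -E

/-- Cauchy-type formula for the cut-off. -/
lemma I3 (S : Setup D t h P) {θ θ' Ψ : ℝ → ℝ} {ε : ℝ} (C : Cut θ θ' Ψ ε) {p : ℂ}
    (hR : ∀ᶠ w in 𝓝 p, w ∈ D → θ' (uu t h w) = 0) :
    ∫ w in D, (- θ' (uu t h w)) * ((w - t) * conj (kk t P w) * vv h w) / (w - p) =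
      D.indicator (fun p => (Real.pi * θ (uu t h p) : ℂ)) p := by
  have hK := S.cpt ε C.pos
  have hKD : {w | w ∈ D ∧ uu t h w ≤ 1 - ε} ⊆ D := fun w hw => hw.1
  have hout : ∀ w ∈ D \ {w | w ∈ D ∧ uu t h w ≤ 1 - ε}, 1 - ε ≤ uu t h w := by
    rintro w ⟨h1, h2⟩
    by_contra h3
    exact h2 ⟨h1, (not_le.1 h3).le⟩
  have cof {f : ℂ → ℝ} (hf : ContinuousOn f D) : ContinuousOn (fun w => (f w : ℂ)) D :=
    Complex.continuous_ofReal.comp_continuousOn hf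
  have ccj {f : ℂ → ℂ} (hf : ContinuousOn f D) : ContinuousOn (fun w => conj (f w)) D :=
    Complex.continuous_conj.comp_continuousOn hf
  have cθ' := C.cθ'.comp_continuousOn S.ucont
  have cv := S.vcont
  have ck := S.kholo.continuousOn
  have cz : ContinuousOn (fun w : ℂ => w - t) D := (continuous_id.sub continuous_const).continuousOn
  have cR : ContinuousOn (fun w => (θ' (uu t h w)) * ((w - t) * conj (kk t P w) * vv h w) / (w - p)) D := by
    intro w hw
    refine ContinuousAt.continuousWithinAt ?_
    by_cases hwp : w = p
    · subst hwp
      refine (continuousAt_const (y := (0 : ℂ))).congr ?_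
      filter_upwards [hR, S.op.mem_nhds hw] with x hx hxD
      simp [hx hxD]
    · have : ContinuousOn (fun w => (θ' (uu t h w)) * ((w - t) * conj (kk t P w) * vv h w)) D :=
        (cof cθ').mul ((cz.mul (ccj ck)).mul (cof cv))
      exact (this.continuousAt (S.op.mem_nhds hw)).div
        (continuousAt_id.sub continuousAt_const) (sub_ne_zero.2 hwp)
  have W1 : ∀ w ∈ D, HasW (fun x => ((θ (uu t h x) : ℝ) : ℂ))
      (θ' (uu t h w) * (conj (w - t) * kk t P w * vv h w))
      ((w - p) * ((θ' (uu t h w)) * ((w - t) * conj (kk t P w) * vv h w) / (w - p))) w := by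
    intro w hw
    refine ((S.Wu hw).real_comp (C.dθ (uu t h w))).congr_val rfl ?_
    by_cases hwp : w = p
    · subst hwp
      simp [hR.self_of_nhds hw]
    · have := sub_ne_zero.2 hwp
      field_simp
  have ca : ContinuousOn (fun w => (θ' (uu t h w) * (conj (w - t) * kk t P w * vv h w) : ℂ)) D :=
    (cof cθ').mul (((ccj cz).mul ck).mul (cof cv))
  have hrw : ∫ w in D, (- θ' (uu t h w)) * ((w - t) * conj (kk t P w) * vv h w) / (w - p) =
     - ∫ w in D, (θ' (uu t h w)) * ((w - t) * conj (kk t P w) * vv h w) / (w - p) := by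
    rw [← integral_neg]; congr 1; ext w; ring
  rw [hrw]
  by_cases hpD : p ∈ D
  · rw [indicator_of_mem hpD]
    have := pompeiu_in S.op hK hKD hpD W1 ca cR
      (fun w hw => by have := C.zθ _ (hout w hw); simp [this])
      (fun w hw => by have := C.zθ' _ (hout w hw); simp [this])
    linear_combination -this
  · rw [indicator_of_notMem hpD]
    have := pompeiu_out S.op hK hKD hpD W1 ca cR
      (fun w hw => by have := C.zθ _ (hout w hw); simp [this])
    linear_combination -this
end Setup
end SaitohB

noncomputable section SaitohC

lemma H1graph {σ σ' : ℝ → ℂ} {l : ℂ → ℝ} {J : Set ℝ} (hJ : IsOpen J) (hl : Continuous l)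
    (hls : ∀ y ∈ J, l (σ y) = y) (hσ : ∀ y ∈ J, HasStrictDerivAt σ (σ' y) y)
    {L : NNReal} (hL : LipschitzOnWith L σ J) :
    Measure.map l ((Measure.hausdorffMeasure 1).restrict (σ '' J)) =
      (volume.restrict J).withDensity (fun y => ENNReal.ofReal ‖σ' y‖) := by
  set ρ := Measure.map l ((Measure.hausdorffMeasure 1).restrict (σ '' J)) with hρ
  have hρA : ∀ A : Set ℝ, MeasurableSet A → ρ A = Measure.hausdorffMeasure 1 (σ '' (A ∩ J)) := by
    intro A hA
    rw [hρ, Measure.map_apply hl.measurable hA, Measure.restrict_apply (hl.measurable hA)]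
    congr 1
    ext w
    constructor
    · rintro ⟨h1, y, hy, rfl⟩
      exact ⟨y, ⟨by simpa [hls y hy] using h1, hy⟩, rfl⟩
    · rintro ⟨y, ⟨hA, hy⟩, rfl⟩
      exact ⟨by simpa [hls y hy] using hA, y, hy, rfl⟩
  have hlip : ∀ (M : NNReal) (A : Set ℝ), LipschitzOnWith M σ A →
      Measure.hausdorffMeasure 1 (σ '' A) ≤ M * volume A := by
    intro M A h
    have := h.hausdorffMeasure_image_le (d := 1) zero_le_one
    rw [hausdorffMeasure_real] at this
    simpa using this
  have hanti : ∀ (M : NNReal) (A : Set ℝ), A ⊆ J → (∀ a ∈ A, ∀ b ∈ A, ‖a - b‖ ≤ M * ‖σ a - σ b‖) →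
      volume A ≤ M * Measure.hausdorffMeasure 1 (σ '' A) := by
    intro M A hA h
    have h1 : LipschitzOnWith M l (σ '' A) := by
      apply LipschitzOnWith.of_dist_le_mul
      rintro _ ⟨a, ha, rfl⟩ _ ⟨b, hb, rfl⟩
      rw [hls a (hA ha), hls b (hA hb), dist_eq_norm, dist_eq_norm]
      exact h a ha b hb
    have := h1.hausdorffMeasure_image_le (d := 1) zero_le_one
    rw [hausdorffMeasure_real] at this
    have h2 : l '' (σ '' A) = A := by
      rw [image_image]
      ext y
      constructor
      · rintro ⟨x, hx, rfl⟩; simpa [hls x (hA hx)] using hx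
      · intro hy; exact ⟨y, hy, hls y (hA hy)⟩
    rw [h2] at this
    simpa using this
  have hle : ρ ≤ (L : ENNReal) • volume.restrict J := by
    refine Measure.le_iff.2 fun A hA => ?_
    rw [hρA A hA, Measure.smul_apply, Measure.restrict_apply hA]
    exact hlip L _ (hL.mono inter_subset_right)
  have hac : ρ ≪ volume.restrict J := by
    refine (Measure.absolutelyContinuous_of_le hle).trans ?_
    exact Measure.smul_absolutelyContinuous
  haveI : IsLocallyFiniteMeasure ρ := by
    refine ⟨fun x => ⟨closedBall x 1, closedBall_mem_nhds x one_pos, ?_⟩⟩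
    refine (hle _).trans_lt ?_
    rw [Measure.smul_apply]
    exact ENNReal.mul_lt_top ENNReal.coe_lt_top ((isCompact_closedBall x 1).measure_lt_top)
  haveI : SigmaFinite ρ := inferInstance
  have hd := Besicovitch.ae_tendsto_rnDeriv ρ (volume.restrict J)
  rw [← Measure.withDensity_rnDeriv_eq ρ (volume.restrict J) hac]
  refine withDensity_congr_ae ?_
  filter_upwards [hd, ae_restrict_mem hJ.measurableSet] with y hy hyJ
  -- small balls
  have hstr : ∀ η : ℝ, 0 < η → ∀ᶠ r in 𝓝[>] (0:ℝ), closedBall y r ⊆ J ∧ ∀ a ∈ closedBall y r, ∀ b ∈ closedBall y r,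
      ‖σ a - σ b - (a - b) • σ' y‖ ≤ η * ‖a - b‖ := by
    intro η hη
    have h1 := (hσ y hyJ).hasStrictFDerivAt.isLittleO
    have h2 := h1.def hη
    rw [nhds_prod_eq] at h2
    obtain ⟨N, hN, h3⟩ := mem_prod_self_iff.1 h2
    obtain ⟨r0, hr0, h4⟩ := Metric.nhds_basis_closedBall.mem_iff.1 (inter_mem hN (hJ.mem_nhds hyJ))
    filter_upwards [Ioc_mem_nhdsGT hr0] with r hr
    have h5 : closedBall y r ⊆ N ∩ J := (closedBall_subset_closedBall hr.2).trans h4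
    refine ⟨fun a ha => (h5 ha).2, fun a ha b hb => ?_⟩
    simpa using h3 (mk_mem_prod (h5 ha).1 (h5 hb).1)
  have up : ∀ η : ℝ, 0 < η → ρ.rnDeriv (volume.restrict J) y ≤ ENNReal.ofReal (‖σ' y‖ + η) := by
    intro η hη
    refine le_of_tendsto hy ?_
    filter_upwards [hstr η hη, self_mem_nhdsWithin] with r hr hr0
    obtain ⟨hrJ, hr⟩ := hr
    rw [hρA _ measurableSet_closedBall, Measure.restrict_apply measurableSet_closedBall,
      inter_eq_left.2 hrJ]
    refine ENNReal.div_le_of_le_mul ?_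
    refine hlip (Real.toNNReal (‖σ' y‖ + η)) _ ?_
    apply LipschitzOnWith.of_dist_le_mul
    intro a ha b hb
    rw [dist_eq_norm, dist_eq_norm, Real.coe_toNNReal _ (by positivity)]
    have := hr a ha b hb
    calc ‖σ a - σ b‖ = ‖(σ a - σ b - (a - b) • σ' y) + (a - b) • σ' y‖ := by congr 1; ring
      _ ≤ η * ‖a - b‖ + ‖(a - b) • σ' y‖ := (norm_add_le _ _).trans (by gcongr)
      _ = _ := by rw [norm_smul]; ring
  have low : ∀ η : ℝ, 0 < η → ENNReal.ofReal (‖σ' y‖ - η) ≤ ρ.rnDeriv (volume.restrict J) y := by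
    intro η hη
    rcases le_or_gt (‖σ' y‖ - η) 0 with h0 | h0
    · rw [ENNReal.ofReal_of_nonpos h0]; exact bot_le
    refine ge_of_tendsto hy ?_
    filter_upwards [hstr η hη, self_mem_nhdsWithin] with r hr hr0
    have hr0' : (0:ℝ) < r := hr0
    obtain ⟨hrJ, hr⟩ := hr
    rw [hρA _ measurableSet_closedBall, Measure.restrict_apply measurableSet_closedBall,
      inter_eq_left.2 hrJ]
    have hv : volume (closedBall y r) = ENNReal.ofReal (2 * r) := Real.volume_closedBall y r
    rw [ENNReal.le_div_iff_mul_le (Or.inl (by rw [hv]; exact (ENNReal.ofReal_pos.2 (by linarith)).ne')) (Or.inl (by rw [hv]; exact ENNReal.ofReal_ne_top))]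
    have := hanti (Real.toNNReal (‖σ' y‖ - η)⁻¹) _ hrJ (by
      intro a ha b hb
      rw [Real.coe_toNNReal _ (by positivity), ← div_eq_inv_mul, le_div_iff₀ h0]
      have h1 := hr a ha b hb
      have h2 : ‖(a - b) • σ' y‖ ≤ ‖σ a - σ b‖ + ‖σ a - σ b - (a - b) • σ' y‖ := by
        calc ‖(a - b) • σ' y‖ = ‖(σ a - σ b) - (σ a - σ b - (a - b) • σ' y)‖ := by congr 1; ring
          _ ≤ _ := norm_sub_le _ _
      rw [norm_smul] at h2
      linarith)
    calc ENNReal.ofReal (‖σ' y‖ - η) * volume (closedBall y r)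
        ≤ ENNReal.ofReal (‖σ' y‖ - η) * ((Real.toNNReal (‖σ' y‖ - η)⁻¹ : ENNReal) *
          Measure.hausdorffMeasure 1 (σ '' closedBall y r)) := by gcongr
      _ = (ENNReal.ofReal (‖σ' y‖ - η) * ENNReal.ofReal (‖σ' y‖ - η)⁻¹) *
          Measure.hausdorffMeasure 1 (σ '' closedBall y r) := by rw [mul_assoc]; rfl
      _ = Measure.hausdorffMeasure 1 (σ '' closedBall y r) := by
          rw [← ENNReal.ofReal_mul h0.le, mul_inv_cancel₀ h0.ne']; simp
  have t0 : Tendsto (fun η : ℝ => η) (𝓝[>] 0) (𝓝 0) := tendsto_id.mono_left nhdsWithin_le_nhds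
  apply le_antisymm
  · have : Tendsto (fun η : ℝ => ENNReal.ofReal (‖σ' y‖ + η)) (𝓝[>] 0) (𝓝 (ENNReal.ofReal (‖σ' y‖ + 0))) :=
      ENNReal.tendsto_ofReal (tendsto_const_nhds.add t0)
    rw [add_zero] at this
    refine ge_of_tendsto this ?_
    filter_upwards [self_mem_nhdsWithin] with η hη using up η hη
  · have : Tendsto (fun η : ℝ => ENNReal.ofReal (‖σ' y‖ - η)) (𝓝[>] 0) (𝓝 (ENNReal.ofReal (‖σ' y‖ - 0))) :=
      ENNReal.tendsto_ofReal (tendsto_const_nhds.sub t0)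
    rw [sub_zero] at this
    refine le_of_tendsto this ?_
    filter_upwards [self_mem_nhdsWithin] with η hη using low η hη

end SaitohC

noncomputable section SaitohD

/-- `x ↦ Re (conj g * x)` -/
def RD (g : ℂ) : ℂ →L[ℝ] ℝ := Complex.reCLM.comp ((conj g) • (ContinuousLinearMap.id ℝ ℂ))

lemma RD_apply (g x : ℂ) : RD g x = (conj g * x).re := by simp [RD]

structure Bdry (D U : Set ℂ) (Γ : ℂ → ℝ) (gr : ℂ → ℂ) : Prop where
  op : IsOpen D
  bdd : Bornology.IsBounded D
  Uop : IsOpen U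
  fU : frontier D ⊆ U
  cgr : ContinuousOn gr U
  dΓ : ∀ w ∈ U, HasStrictFDerivAt Γ (RD (gr w)) w
  zero : ∀ w ∈ frontier D, Γ w = 0
  neg : ∀ w ∈ D, w ∈ U → Γ w < 0
  ne : ∀ w ∈ frontier D, gr w ≠ 0

def TH (Γ : ℂ → ℝ) (e w : ℂ) : ℂ := (Γ w : ℂ) + I * ((conj e * w).im : ℂ)

def DTH (g e : ℂ) : ℂ →L[ℝ] ℂ :=
  Complex.ofRealCLM.comp (RD g) +
    I • (Complex.ofRealCLM.comp (Complex.imCLM.comp ((conj e) • (ContinuousLinearMap.id ℝ ℂ))))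

lemma DTH_apply (g e x : ℂ) : DTH g e x = ((conj g * x).re : ℂ) + I * ((conj e * x).im : ℂ) := by
  simp [DTH, RD]

def ITH (g e : ℂ) : ℂ →L[ℝ] ℂ :=
  ((((conj e * g).re⁻¹ : ℝ) : ℂ) * e) • (Complex.ofRealCLM.comp Complex.reCLM) +
  ((((conj e * g).re⁻¹ : ℝ) : ℂ) * (I * g)) • (Complex.ofRealCLM.comp Complex.imCLM)

lemma ITH_apply (g e x : ℂ) : ITH g e x =
    (((conj e * g).re⁻¹ : ℝ) : ℂ) * e * (x.re : ℂ) + (((conj e * g).re⁻¹ : ℝ) : ℂ) * (I * g) * (x.im : ℂ) := by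
  simp [ITH]

def ETH (g e : ℂ) (hd : (conj e * g).re ≠ 0) : ℂ ≃L[ℝ] ℂ :=
  ContinuousLinearEquiv.equivOfInverse (DTH g e) (ITH g e)
    (by
      intro x
      rw [ITH_apply, DTH_apply]
      apply Complex.ext <;>
      · have hd' := hd
        generalize hdd : (conj e * g).re = d at hd' ⊢
        simp at hdd
        simp
        field_simp
        rw [← hdd]
        ring)
    (by
      intro x
      rw [DTH_apply, ITH_apply]
      apply Complex.ext <;>
      · have hd' := hd
        generalize hdd : (conj e * g).re = d at hd' ⊢
        simp at hdd
        simp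
        field_simp
        rw [← hdd]
        ring)

lemma ETH_coe (g e : ℂ) (hd : (conj e * g).re ≠ 0) : (ETH g e hd : ℂ →L[ℝ] ℂ) = DTH g e := by
  rfl

lemma ETH_symm_coe (g e : ℂ) (hd : (conj e * g).re ≠ 0) :
    ((ETH g e hd).symm : ℂ →L[ℝ] ℂ) = ITH g e := by
  rfl

lemma det_DTH (g e : ℂ) : (DTH g e).det = (conj e * g).re := by
  rw [ContinuousLinearMap.det, ← LinearMap.det_toMatrix Complex.basisOneI, Matrix.det_fin_two]
  simp [LinearMap.toMatrix_apply, DTH_apply]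
  ring

lemma TH_deriv {Γ : ℂ → ℝ} {g e w : ℂ} (h : HasStrictFDerivAt Γ (RD g) w) :
    HasStrictFDerivAt (TH Γ e) (DTH g e) w := by
  have h1 : HasStrictFDerivAt (fun w => (Γ w : ℂ)) (Complex.ofRealCLM.comp (RD g)) w :=
    (Complex.ofRealCLM.hasStrictFDerivAt).comp w h
  have h2 : HasStrictFDerivAt (fun w => (conj e * w).im)
      (Complex.imCLM.comp ((conj e) • (ContinuousLinearMap.id ℝ ℂ))) w :=
    (Complex.imCLM.comp ((conj e) • (ContinuousLinearMap.id ℝ ℂ))).hasStrictFDerivAt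
  have h3 : HasStrictFDerivAt (fun w => ((conj e * w).im : ℂ)) _ w :=
    (Complex.ofRealCLM.hasStrictFDerivAt).comp w h2
  exact h1.add (h3.const_smul I)

structure Chart (D U : Set ℂ) (Γ : ℂ → ℝ) (gr : ℂ → ℂ) (e : ℂ) (R : OpenPartialHomeomorph ℂ ℂ)
    (y0 δ : ℝ) : Prop where
  pos : 0 < δ
  ne : e ≠ 0
  coe : ∀ w, R w = TH Γ e w
  src : R.source ⊆ U
  tgt : R.target = {z | |z.re| < δ ∧ |z.im - y0| < δ}
  close : ∀ w ∈ R.source, ‖gr w - e‖ ≤ ‖e‖ / 4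
  hD : ∀ w ∈ R.source, (w ∈ D ↔ Γ w < 0)
  hF : ∀ w ∈ R.source, (w ∈ frontier D ↔ Γ w = 0)
  lin : ∀ a ∈ R.source, ∀ b ∈ R.source, ‖R a - R b - conj e * (a - b)‖ ≤ ‖e‖ / 4 * ‖a - b‖

lemma box_open (y0 δ : ℝ) : IsOpen {z : ℂ | |z.re| < δ ∧ |z.im - y0| < δ} := by
  apply IsOpen.inter
  · exact isOpen_lt (f := fun z : ℂ => |z.re|) (by fun_prop) continuous_const
  · exact isOpen_lt (f := fun z : ℂ => |z.im - y0|) (by fun_prop) continuous_const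

theorem preconn_frontier {Q D : Set ℂ} (hQ : IsPreconnected Q) (hD : IsOpen D)
    (h1 : (Q ∩ D).Nonempty) (h2 : (Q ∩ Dᶜ).Nonempty) : (Q ∩ frontier D).Nonempty := by
  by_contra hcon
  rw [Set.not_nonempty_iff_eq_empty] at hcon
  have hF : ∀ w ∈ Q, w ∉ D → w ∉ closure D := by
    intro w hw hwD hwc
    have : w ∈ Q ∩ frontier D := ⟨hw, by rw [hD.frontier_eq]; exact ⟨hwc, hwD⟩⟩
    rw [hcon] at this; exact this
  obtain ⟨w, hw⟩ := h2
  obtain ⟨x, hx, hx1, hx2⟩ := hQ D (closure D)ᶜ hD isClosed_closure.isOpen_compl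
    (fun w hw => by
      by_cases h : w ∈ D
      · exact Or.inl h
      · exact Or.inr (hF w hw h)) h1 ⟨w, hw.1, hF w hw.1 hw.2⟩
  exact hx2 (subset_closure hx1)

namespace Bdry
variable {D U : Set ℂ} {Γ : ℂ → ℝ} {gr : ℂ → ℂ}

lemma exists_chart (B : Bdry D U Γ gr) {p : ℂ} (hp : p ∈ frontier D) :
    ∃ (R : OpenPartialHomeomorph ℂ ℂ) (δ : ℝ), Chart D U Γ gr (gr p) R ((conj (gr p) * p).im) δ ∧
      p ∈ R.source := by
  set e := gr p with he
  have hpU := B.fU hp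
  have e0 : e ≠ 0 := B.ne p hp
  have hd : (conj e * e).re ≠ 0 := by
    rw [mul_comm, Complex.mul_conj]; simpa using e0
  have hst : HasStrictFDerivAt (TH Γ e) (ETH e e hd : ℂ →L[ℝ] ℂ) p := by
    rw [ETH_coe]; exact TH_deriv (B.dΓ p hpU)
  have hDe : ∀ x, DTH e e x = conj e * x := by
    intro x; rw [DTH_apply]; apply Complex.ext <;> simp
  have e4 : 0 < ‖e‖ / 4 := by have := norm_pos_iff.2 e0; positivity
  have h2 := hst.isLittleO.def e4
  rw [nhds_prod_eq] at h2
  obtain ⟨N1, hN1, h3⟩ := mem_prod_self_iff.1 h2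
  have hcl : ∀ᶠ w in 𝓝 p, ‖gr w - e‖ ≤ ‖e‖ / 4 := by
    have := (B.cgr.continuousAt (B.Uop.mem_nhds hpU))
    have h4 := Metric.tendsto_nhds.1 this.tendsto (‖e‖ / 4) e4
    filter_upwards [h4] with w hw
    rw [dist_eq_norm] at hw; exact hw.le
  obtain ⟨N, hNsub, hNo, hpN⟩ := _root_.mem_nhds_iff.1 (inter_mem (inter_mem hN1 hcl) (B.Uop.mem_nhds hpU))
  set R1 := (hst.toOpenPartialHomeomorph (TH Γ e)).restrOpen N hNo with hR1
  have R1coe : ∀ w, R1 w = TH Γ e w := fun w => rfl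
  have hpR1 : p ∈ R1.source := ⟨hst.mem_toOpenPartialHomeomorph_source, hpN⟩
  have hR1N : R1.source ⊆ N := fun w hw => hw.2
  set y0 := (conj e * p).im with hy0
  have hTp : TH Γ e p = I * y0 := by simp [TH, B.zero p hp, hy0]
  have htm : I * (y0 : ℂ) ∈ R1.target := by
    have := R1.map_source hpR1
    rw [R1coe, hTp] at this; exact this
  obtain ⟨δ, hδ, hball⟩ := Metric.isOpen_iff.1 R1.open_target _ htm
  have hbox : {z : ℂ | |z.re| < δ / 2 ∧ |z.im - y0| < δ / 2} ⊆ R1.target := by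
    rintro z ⟨h1, h2⟩
    apply hball
    rw [mem_ball, dist_eq_norm]
    refine (Complex.norm_le_abs_re_add_abs_im _).trans_lt ?_
    simp
    linarith
  set Bx := {z : ℂ | |z.re| < δ / 2 ∧ |z.im - y0| < δ / 2} with hBx
  have hBo : IsOpen Bx := box_open _ _
  set R := (R1.symm.restrOpen Bx hBo).symm with hR
  have Rcoe : ∀ w, R w = TH Γ e w := fun w => rfl
  have Rtgt : R.target = Bx := by
    have : R.target = R1.target ∩ Bx := rfl
    rw [this, inter_eq_right.2 hbox]
  have Rsrc : R.source = R1.source ∩ R1 ⁻¹' Bx := by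
    simp [hR]
  have hpR : p ∈ R.source := by
    rw [Rsrc]
    refine ⟨hpR1, ?_⟩
    rw [mem_preimage, R1coe, hTp]
    simp only [hBx, mem_setOf_eq]
    simp [hδ]
  have hRN : R.source ⊆ N := fun w hw => by rw [Rsrc] at hw; exact hR1N hw.1
  have hRU : R.source ⊆ U := fun w hw => (hNsub (hRN hw)).2
  have re_TH : ∀ w, (TH Γ e w).re = Γ w := by intro w; simp [TH]
  have hDiff : ∀ w ∈ R.source, Γ w < 0 → w ∈ D := by
    have hconv : Convex ℝ {z : ℂ | (|z.re| < δ / 2 ∧ |z.im - y0| < δ / 2) ∧ z.re < 0} := by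
      have : {z : ℂ | (|z.re| < δ / 2 ∧ |z.im - y0| < δ / 2) ∧ z.re < 0} =
        Complex.reLm ⁻¹' (Ioo (-(δ/2)) (δ/2) ∩ Iio 0) ∩ Complex.imLm ⁻¹' (Ioo (y0 - δ/2) (y0 + δ/2)) := by
        ext z
        simp only [mem_setOf_eq, mem_inter_iff, mem_preimage, mem_Ioo, mem_Iio, Complex.reLm_coe, Complex.imLm_coe, abs_lt]
        constructor
        · rintro ⟨⟨⟨h1, h2⟩, h3, h4⟩, h5⟩
          exact ⟨⟨⟨h1, h2⟩, h5⟩, by linarith, by linarith⟩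
        · rintro ⟨⟨⟨h1, h2⟩, h5⟩, h3, h4⟩
          exact ⟨⟨⟨h1, h2⟩, by linarith, by linarith⟩, h5⟩
      rw [this]
      exact (((convex_Ioo _ _).inter (convex_Iio _)).linear_preimage _).inter
        ((convex_Ioo _ _).linear_preimage _)
    have hQ : IsPreconnected (R.symm '' {z : ℂ | (|z.re| < δ / 2 ∧ |z.im - y0| < δ / 2) ∧ z.re < 0}) := by
      refine hconv.isPreconnected.image _ (R.continuousOn_symm.mono ?_)
      rw [Rtgt]; exact fun z hz => hz.1
    intro w hw hneg
    have hwQ : ∀ w ∈ R.source, Γ w < 0 → w ∈ (R.symm '' {z : ℂ | (|z.re| < δ / 2 ∧ |z.im - y0| < δ / 2) ∧ z.re < 0}) := by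
      intro w hw hneg
      refine ⟨R w, ⟨?_, ?_⟩, R.left_inv hw⟩
      · have := R.map_source hw; rw [Rtgt] at this; exact this
      · rw [Rcoe, re_TH]; exact hneg
    by_contra hwD
    have hpc : p ∈ closure D := frontier_subset_closure hp
    obtain ⟨w1, hw1, hw1D⟩ := mem_closure_iff.1 hpc R.source R.open_source hpR
    obtain ⟨w2, ⟨z, hz, hz2⟩, hw2F⟩ := preconn_frontier hQ B.op
      ⟨w1, hwQ w1 hw1 (B.neg w1 hw1D (hRU hw1)), hw1D⟩ ⟨w, hwQ w hw hneg, hwD⟩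
    have hzt : z ∈ R.target := by rw [Rtgt]; exact hz.1
    have h6 := B.zero w2 hw2F
    have h7 : R w2 = z := by rw [← hz2]; exact R.right_inv hzt
    have h8 := re_TH w2
    rw [← Rcoe, h7, h6] at h8
    exact absurd hz.2 (by rw [h8]; exact lt_irrefl _)
  refine ⟨R, δ / 2, ⟨by positivity, e0, Rcoe, hRU, Rtgt, fun w hw => (hNsub (hRN hw)).1.2, ?_, ?_, ?_⟩, hpR⟩
  · exact fun w hw => ⟨fun h => B.neg w h (hRU hw), hDiff w hw⟩
  · intro w hw
    refine ⟨B.zero w, fun h0 => ?_⟩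
    rw [B.op.frontier_eq]
    refine ⟨?_, fun hwD => absurd (B.neg w hwD (hRU hw)) (by rw [h0]; exact lt_irrefl _)⟩
    have t1 : Tendsto (fun s : ℝ => R w - (s : ℂ)) (𝓝[>] 0) (𝓝 (R w)) := by
      have : Continuous fun s : ℝ => R w - (s : ℂ) := by fun_prop
      have h1 := this.tendsto 0
      simp only [ofReal_zero, sub_zero] at h1
      exact h1.mono_left nhdsWithin_le_nhds
    have t2 := (R.continuousAt_symm (R.map_source hw)).tendsto.comp t1
    rw [R.left_inv hw] at t2
    refine mem_closure_of_tendsto t2 ?_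
    filter_upwards [t1 (R.open_target.mem_nhds (R.map_source hw)), self_mem_nhdsWithin] with s hs hs0
    apply hDiff _ (R.map_target hs)
    rw [← re_TH, ← Rcoe]
    show (R (R.symm (R w - s))).re < 0
    rw [R.right_inv hs, sub_re, Rcoe w, re_TH, h0]
    have : (0:ℝ) < s := hs0
    simpa using this
  · intro a ha b hb
    have := h3 (mk_mem_prod (hNsub (hRN ha)).1.1 (hNsub (hRN hb)).1.1)
    simp only [mem_setOf_eq, ETH_coe, hDe] at this
    exact this
end Bdry

namespace Chart
variable {D U : Set ℂ} {Γ : ℂ → ℝ} {gr : ℂ → ℂ} {e : ℂ} {R : OpenPartialHomeomorph ℂ ℂ} {y0 δ : ℝ}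

lemma re_R (C : Chart D U Γ gr e R y0 δ) (w : ℂ) : (R w).re = Γ w := by rw [C.coe]; simp [TH]
lemma im_R (C : Chart D U Γ gr e R y0 δ) (w : ℂ) : (R w).im = (conj e * w).im := by rw [C.coe]; simp [TH]

lemma low (C : Chart D U Γ gr e R y0 δ) {a b : ℂ} (ha : a ∈ R.source) (hb : b ∈ R.source) :
    3 / 4 * ‖e‖ * ‖a - b‖ ≤ ‖R a - R b‖ := by
  have h1 := C.lin a ha b hb
  have h2 : ‖conj e * (a - b)‖ ≤ ‖R a - R b‖ + ‖R a - R b - conj e * (a - b)‖ := by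
    calc ‖conj e * (a - b)‖ = ‖(R a - R b) - (R a - R b - conj e * (a - b))‖ := by congr 1; ring
      _ ≤ _ := norm_sub_le _ _
  rw [norm_mul, RCLike.norm_conj] at h2
  linarith

lemma det_low (C : Chart D U Γ gr e R y0 δ) {w : ℂ} (hw : w ∈ R.source) : 3 / 4 * ‖e‖ ^ 2 ≤ (conj e * gr w).re := by
  have h1 := C.close w hw
  have h2 : (conj e * gr w).re = ‖e‖ ^ 2 + (conj e * (gr w - e)).re := by
    have : (conj e * e).re = ‖e‖ ^ 2 := by
      rw [mul_comm, Complex.mul_conj, Complex.normSq_eq_norm_sq]; exact Complex.ofReal_re _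
    rw [← this, ← Complex.add_re]; congr 1; ring
  have h3 : |(conj e * (gr w - e)).re| ≤ ‖e‖ * (‖e‖ / 4) := by
    refine (Complex.abs_re_le_norm _).trans ?_
    rw [norm_mul, RCLike.norm_conj]; gcongr
  have := (abs_le.1 h3).1
  rw [h2]; nlinarith

lemma epos (C : Chart D U Γ gr e R y0 δ) : 0 < ‖e‖ := norm_pos_iff.2 C.ne

lemma det_pos (C : Chart D U Γ gr e R y0 δ) {w : ℂ} (hw : w ∈ R.source) : 0 < (conj e * gr w).re := by
  have := C.epos
  exact lt_of_lt_of_le (by positivity) (C.det_low hw)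

lemma gr_le (C : Chart D U Γ gr e R y0 δ) {w : ℂ} (hw : w ∈ R.source) : ‖gr w‖ ≤ 5 / 4 * ‖e‖ := by
  have h1 := C.close w hw
  have : ‖gr w‖ ≤ ‖e‖ + ‖gr w - e‖ := by
    calc ‖gr w‖ = ‖e + (gr w - e)‖ := by congr 1; ring
      _ ≤ _ := norm_add_le _ _
  linarith

lemma mem_tgt (C : Chart D U Γ gr e R y0 δ) {y : ℝ} (hy : |y - y0| < δ) : I * (y : ℂ) ∈ R.target := by
  rw [C.tgt]; simp [C.pos, hy]

def sg (R : OpenPartialHomeomorph ℂ ℂ) (y : ℝ) : ℂ := R.symm (I * y)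

lemma sg_mem (C : Chart D U Γ gr e R y0 δ) {y : ℝ} (hy : |y - y0| < δ) : sg R y ∈ R.source := R.map_target (C.mem_tgt hy)

lemma R_sg (C : Chart D U Γ gr e R y0 δ) {y : ℝ} (hy : |y - y0| < δ) : R (sg R y) = I * y := R.right_inv (C.mem_tgt hy)

lemma J_open (C : Chart D U Γ gr e R y0 δ) : IsOpen {y : ℝ | |y - y0| < δ} := isOpen_lt (by fun_prop) continuous_const

lemma sg_image (C : Chart D U Γ gr e R y0 δ) : sg R '' {y : ℝ | |y - y0| < δ} = frontier D ∩ R.source := by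
  ext w
  constructor
  · rintro ⟨y, hy, rfl⟩
    refine ⟨(C.hF _ (C.sg_mem hy)).2 ?_, C.sg_mem hy⟩
    rw [← C.re_R, C.R_sg hy]; simp
  · rintro ⟨h1, h2⟩
    have h3 := (C.hF w h2).1 h1
    have h4 : R w = I * ((R w).im : ℂ) := by
      apply Complex.ext
      · rw [C.re_R, h3]; simp
      · simp
    have h5 : |(R w).im - y0| < δ := by
      have := R.map_source h2
      rw [C.tgt] at this; exact this.2
    refine ⟨(R w).im, h5, ?_⟩
    unfold sg
    rw [← h4]; exact R.left_inv h2

lemma l_sg (C : Chart D U Γ gr e R y0 δ) {y : ℝ} (hy : |y - y0| < δ) : (conj e * sg R y).im = y := by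
  rw [← C.im_R, C.R_sg hy]; simp

lemma sg_low (C : Chart D U Γ gr e R y0 δ) {a b : ℝ} (ha : |a - y0| < δ) (hb : |b - y0| < δ) :
    ‖sg R a - sg R b‖ ≤ 4 / 3 * ‖e‖⁻¹ * |a - b| := by
  have h1 := C.low (C.sg_mem ha) (C.sg_mem hb)
  rw [C.R_sg ha, C.R_sg hb, ← mul_sub, norm_mul, ← Complex.ofReal_sub, Complex.norm_real] at h1
  simp only [norm_I, one_mul, Real.norm_eq_abs] at h1
  have := C.epos
  field_simp
  linarith

lemma sg_high (C : Chart D U Γ gr e R y0 δ) {a b : ℝ} (ha : |a - y0| < δ) (hb : |b - y0| < δ) :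
    |a - b| ≤ ‖e‖ * ‖sg R a - sg R b‖ := by
  have h1 : a - b = (conj e * (sg R a - sg R b)).im := by
    rw [mul_sub, Complex.sub_im, C.l_sg ha, C.l_sg hb]
  rw [h1]
  refine (Complex.abs_im_le_norm _).trans ?_
  rw [norm_mul, RCLike.norm_conj]

lemma sg_deriv (C : Chart D U Γ gr e R y0 δ) (B : Bdry D U Γ gr) {y : ℝ} (hy : |y - y0| < δ) :
    HasStrictDerivAt (sg R) ((((conj e * gr (sg R y)).re⁻¹ : ℝ) : ℂ) * (I * gr (sg R y))) y := by
  have hs := C.sg_mem hy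
  have hd := (C.det_pos hs).ne'
  have h1 : HasStrictFDerivAt R (ETH (gr (sg R y)) e hd : ℂ →L[ℝ] ℂ) (R.symm (I * y)) := by
    rw [ETH_coe]
    have : (R : ℂ → ℂ) = TH Γ e := funext C.coe
    rw [this]
    exact TH_deriv (B.dΓ _ (C.src hs))
  have h2 := R.hasStrictFDerivAt_symm (C.mem_tgt hy) h1
  have h3 : HasStrictDerivAt (fun y : ℝ => I * (y : ℂ)) I y := by
    have := (Complex.ofRealCLM.hasStrictDerivAt (x := y)).const_mul I
    simpa using this
  have h4 := h2.comp_hasStrictDerivAt y h3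
  rw [ETH_symm_coe] at h4
  refine HasStrictDerivAt.congr_deriv (f := sg R) h4 ?_
  rw [ITH_apply]; simp

lemma sg_cont (C : Chart D U Γ gr e R y0 δ) : ContinuousOn (sg R) {y : ℝ | |y - y0| < δ} := by
  refine R.continuousOn_symm.comp (by fun_prop) ?_
  intro y hy; exact C.mem_tgt hy

lemma H1 (C : Chart D U Γ gr e R y0 δ) (B : Bdry D U Γ gr) :
    Measure.map (fun w => (conj e * w).im) ((Measure.hausdorffMeasure 1).restrict (frontier D ∩ R.source)) =
      (volume.restrict {y : ℝ | |y - y0| < δ}).withDensity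
        (fun y => ENNReal.ofReal (‖gr (sg R y)‖ / (conj e * gr (sg R y)).re)) := by
  rw [← C.sg_image]
  have hL : LipschitzOnWith (Real.toNNReal (4 / 3 * ‖e‖⁻¹)) (sg R) {y : ℝ | |y - y0| < δ} := by
    apply LipschitzOnWith.of_dist_le_mul
    intro a ha b hb
    rw [dist_eq_norm, Real.dist_eq, Real.coe_toNNReal _ (by positivity)]
    exact C.sg_low ha hb
  rw [H1graph (σ := sg R) C.J_open (by fun_prop) (fun y hy => C.l_sg hy) (fun y hy => C.sg_deriv B hy) hL]
  refine withDensity_congr_ae ?_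
  filter_upwards [ae_restrict_mem C.J_open.measurableSet] with y hy
  have := C.det_pos (C.sg_mem hy)
  congr 1
  rw [norm_mul, norm_mul, norm_I, one_mul, Complex.norm_real, norm_inv, Real.norm_of_nonneg this.le]
  ring

end Chart
end SaitohD

noncomputable section SaitohE

structure KF (l : Filter ℝ) (κ : ℝ → ℝ → ℝ) : Prop where
  cont : ∀ᶠ ε in l, Continuous (κ ε)
  nonneg : ∀ᶠ ε in l, ∀ x, 0 ≤ κ ε x
  supp : ∀ η > 0, ∀ᶠ ε in l, ∀ x, x ∉ Ioo (-η) 0 → κ ε x = 0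
  int : ∀ᶠ ε in l, ∫ x, κ ε x = 1 / 2

lemma kernel_integrable {k : ℝ → ℝ} (hk : Continuous k) {η : ℝ} (hs : ∀ x, x ∉ Ioo (-η) 0 → k x = 0)
    {Ξ : ℂ → ℂ} (hΞ : Continuous Ξ) (hc : HasCompactSupport Ξ) :
    Integrable (fun z : ℂ => (k z.re : ℂ) * Ξ z) := by
  refine Continuous.integrable_of_hasCompactSupport (by fun_prop) hc.mul_left

lemma complex_integral_prod (F : ℂ → ℂ) : ∫ z, F z = ∫ p : ℝ × ℝ, F (p.1 + p.2 * I) := by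
  have := (Complex.volume_preserving_equiv_real_prod.symm).integral_comp
    (Complex.measurableEquivRealProd.symm.measurableEmbedding) F
  rw [← this]
  refine integral_congr_ae (Eventually.of_forall fun p => ?_)
  simp only [Complex.measurableEquivRealProd_symm_apply]
  congr 1
  apply Complex.ext <;> simp

lemma KF.lim {l : Filter ℝ} {κ : ℝ → ℝ → ℝ} (hκ : KF l κ) {Ξ : ℂ → ℂ} (hΞ : Continuous Ξ)
    (hc : HasCompactSupport Ξ) :
    Tendsto (fun ε => ∫ z : ℂ, (κ ε z.re : ℂ) * Ξ z) l (𝓝 (1 / 2 * ∫ y : ℝ, Ξ (I * y))) := by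
  obtain ⟨M, hM⟩ := hc.isCompact.isBounded.subset_closedBall (0 : ℂ)
  have hz : ∀ x y : ℝ, M < |y| → Ξ (x + y * I) = 0 := by
    intro x y hy
    by_contra hne
    have h1 := hM (subset_tsupport _ hne)
    rw [mem_closedBall, dist_zero_right] at h1
    have h2 := Complex.abs_im_le_norm ((x : ℂ) + y * I)
    simp at h2
    linarith
  have hu := hΞ.uniformContinuous_of_tendsto_cocompact hc.is_zero_at_infty
  have hM0 : 0 ≤ |M| := abs_nonneg _
  rw [Metric.tendsto_nhds]
  intro η hη
  obtain ⟨ρ, hρ, hρ2⟩ := Metric.uniformContinuous_iff.1 hu (η / (2 * (|M| + 1))) (by positivity)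
  filter_upwards [hκ.cont, hκ.nonneg, hκ.supp ρ hρ, hκ.int] with ε h1 h2 h3 h4
  have hkc : HasCompactSupport (κ ε) := by
    refine HasCompactSupport.intro (isCompact_Icc (a := -ρ) (b := 0)) ?_
    intro x hx; exact h3 x fun h => hx (Ioo_subset_Icc_self h)
  have e1 : (1 / 2 : ℂ) * ∫ y : ℝ, Ξ (I * y) = ∫ p : ℝ × ℝ, (κ ε p.1 : ℂ) * Ξ (I * p.2) := by
    have := integral_prod_mul (μ := volume) (ν := volume) (fun x : ℝ => (κ ε x : ℂ)) (fun y : ℝ => Ξ (I * y))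
    rw [integral_complex_ofReal, h4] at this
    rw [Measure.volume_eq_prod, this]; norm_num
  have i1 : Integrable (fun p : ℝ × ℝ => (κ ε p.1 : ℂ) * Ξ (p.1 + p.2 * I)) := by
    refine Continuous.integrable_of_hasCompactSupport (by fun_prop) ?_
    refine HasCompactSupport.intro ((isCompact_Icc (a := -ρ) (b := 0)).prod (isCompact_Icc (a := -M) (b := M))) ?_
    intro p hp
    by_cases hp1 : p.1 ∈ Ioo (-ρ) 0
    · have : M < |p.2| := by
        by_contra hcon
        push Not at hcon
        exact hp ⟨Ioo_subset_Icc_self hp1, abs_le.1 hcon⟩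
      rw [hz _ _ this, mul_zero]
    · rw [h3 _ hp1]; simp
  have i2 : Integrable (fun p : ℝ × ℝ => (κ ε p.1 : ℂ) * Ξ (I * p.2)) := by
    refine Continuous.integrable_of_hasCompactSupport (by fun_prop) ?_
    refine HasCompactSupport.intro ((isCompact_Icc (a := -ρ) (b := 0)).prod (isCompact_Icc (a := -M) (b := M))) ?_
    intro p hp
    by_cases hp1 : p.1 ∈ Ioo (-ρ) 0
    · have : M < |p.2| := by
        by_contra hcon
        push Not at hcon
        exact hp ⟨Ioo_subset_Icc_self hp1, abs_le.1 hcon⟩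
      have := hz 0 _ this
      simp only [ofReal_zero, zero_add] at this
      rw [mul_comm I, this, mul_zero]
    · rw [h3 _ hp1]; simp
  rw [complex_integral_prod, dist_eq_norm, e1]
  have e2 : ∀ p : ℝ × ℝ, ((p.1 : ℂ) + p.2 * I).re = p.1 := by intro p; simp
  simp only [e2]
  rw [← integral_sub i1 i2]
  have hb : ∀ p : ℝ × ℝ, ‖(κ ε p.1 : ℂ) * Ξ (p.1 + p.2 * I) - (κ ε p.1 : ℂ) * Ξ (I * p.2)‖ ≤
      κ ε p.1 * (Icc (-|M|) |M|).indicator (fun _ => η / (2 * (|M| + 1))) p.2 := by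
    intro p
    rw [← mul_sub, norm_mul, Complex.norm_real, Real.norm_of_nonneg (h2 _)]
    by_cases hp1 : p.1 ∈ Ioo (-ρ) 0
    · refine mul_le_mul_of_nonneg_left ?_ (h2 _)
      by_cases hp2 : p.2 ∈ Icc (-|M|) |M|
      · rw [indicator_of_mem hp2, ← dist_eq_norm]
        refine (hρ2 ?_).le
        rw [dist_eq_norm, mul_comm I, add_sub_cancel_right, Complex.norm_real, Real.norm_eq_abs, abs_lt]
        exact ⟨hp1.1, by linarith [hp1.2]⟩
      · have : M < |p.2| := by
          by_contra hcon
          push Not at hcon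
          exact hp2 (abs_le.1 (hcon.trans (le_abs_self M)))
        have h5 := hz 0 _ this
        simp only [ofReal_zero, zero_add] at h5
        rw [hz _ _ this, mul_comm I, h5, indicator_of_notMem hp2]; simp
    · rw [h3 _ hp1]; simp
  have i3 : Integrable (fun p : ℝ × ℝ => κ ε p.1 * (Icc (-|M|) |M|).indicator (fun _ => η / (2 * (|M| + 1))) p.2) := by
    rw [Measure.volume_eq_prod]
    refine Integrable.mul_prod (h1.integrable_of_hasCompactSupport hkc) ?_
    rw [integrable_indicator_iff measurableSet_Icc]
    exact integrableOn_const (by simp)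
  calc _ ≤ ∫ p : ℝ × ℝ, κ ε p.1 * (Icc (-|M|) |M|).indicator (fun _ => η / (2 * (|M| + 1))) p.2 :=
        norm_integral_le_of_norm_le i3 (Eventually.of_forall hb)
    _ = 1 / 2 * (2 * |M| * (η / (2 * (|M| + 1)))) := by
        rw [Measure.volume_eq_prod, integral_prod_mul (fun x : ℝ => κ ε x) , h4, integral_indicator measurableSet_Icc,
          setIntegral_const, measureReal_def, Real.volume_Icc, ENNReal.toReal_ofReal (by linarith), smul_eq_mul]
        ring
    _ < η := by
        have : 1 / 2 * (2 * |M| * (η / (2 * (|M| + 1)))) = η * (|M| / (2 * (|M| + 1))) := by field_simp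
        rw [this]
        have : |M| / (2 * (|M| + 1)) < 1 := by
          rw [div_lt_one (by positivity)]; linarith
        nlinarith

namespace Chart
variable {D U : Set ℂ} {Γ : ℂ → ℝ} {gr : ℂ → ℂ} {e : ℂ} {R : OpenPartialHomeomorph ℂ ℂ} {y0 δ : ℝ}

/-- the boundary measure in the chart -/
def tau (gr : ℂ → ℂ) (e : ℂ) (R : OpenPartialHomeomorph ℂ ℂ) (y0 δ : ℝ) : Measure ℝ :=
  (volume.restrict {y : ℝ | |y - y0| < δ}).withDensity
        (fun y => ENNReal.ofReal (‖gr (sg R y)‖ / (conj e * gr (sg R y)).re))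


lemma sg_aem (C : Chart D U Γ gr e R y0 δ) {μ : Measure ℝ} (h : μ ≪ volume.restrict {y : ℝ | |y - y0| < δ}) : AEMeasurable (sg R) μ :=
  (C.sg_cont.aemeasurable C.J_open.measurableSet).mono_ac h

lemma sg_aem' (C : Chart D U Γ gr e R y0 δ) : AEMeasurable (sg R) (tau gr e R y0 δ) := C.sg_aem (withDensity_absolutelyContinuous _ _)

lemma H1' (C : Chart D U Γ gr e R y0 δ) (B : Bdry D U Γ gr) :
    (Measure.hausdorffMeasure 1).restrict (frontier D ∩ R.source) = Measure.map (sg R) (tau gr e R y0 δ) := by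
  have h1 := C.H1 B
  rw [← tau] at h1
  have h2 : AEMeasurable (sg R) (tau gr e R y0 δ) := C.sg_aem (withDensity_absolutelyContinuous _ _)
  rw [← h1] at h2 ⊢
  rw [AEMeasurable.map_map_of_aemeasurable h2 (by fun_prop)]
  conv_lhs => rw [← Measure.map_id (μ := (Measure.hausdorffMeasure 1).restrict (frontier D ∩ R.source))]
  refine Measure.map_congr ?_
  filter_upwards [ae_restrict_mem (isClosed_frontier.measurableSet.inter R.open_source.measurableSet)] with w hw
  rw [← C.sg_image] at hw
  obtain ⟨y, hy, rfl⟩ := hw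
  simp only [id, Function.comp]
  rw [C.l_sg hy]

lemma dens_le (C : Chart D U Γ gr e R y0 δ) {y : ℝ} (hy : |y - y0| < δ) :
    ‖gr (sg R y)‖ / (conj e * gr (sg R y)).re ≤ 5 / 3 * ‖e‖⁻¹ := by
  have h1 := C.det_low (C.sg_mem hy)
  have h2 := C.gr_le (C.sg_mem hy)
  have h3 := C.epos
  rw [div_le_iff₀ (C.det_pos (C.sg_mem hy))]
  calc _ ≤ 5 / 4 * ‖e‖ := h2
    _ = 5 / 3 * ‖e‖⁻¹ * (3 / 4 * ‖e‖ ^ 2) := by field_simp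
    _ ≤ _ := by gcongr

lemma tau_le (C : Chart D U Γ gr e R y0 δ) : tau gr e R y0 δ ≤ ENNReal.ofReal (5 / 3 * ‖e‖⁻¹) • volume.restrict {y : ℝ | |y - y0| < δ} := by
  rw [← withDensity_const]
  refine withDensity_mono ?_
  filter_upwards [ae_restrict_mem C.J_open.measurableSet] with y hy
  exact ENNReal.ofReal_le_ofReal (C.dens_le hy)

lemma vol_J (C : Chart D U Γ gr e R y0 δ) : volume {y : ℝ | |y - y0| < δ} < ⊤ := by
  have : {y : ℝ | |y - y0| < δ} = ball y0 δ := by ext y; simp [Real.dist_eq]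
  rw [this]; exact measure_ball_lt_top

lemma fin (C : Chart D U Γ gr e R y0 δ) (B : Bdry D U Γ gr) : (Measure.hausdorffMeasure 1 : Measure ℂ) (frontier D ∩ R.source) < ⊤ := by
  have h1 : (Measure.hausdorffMeasure 1 : Measure ℂ) (frontier D ∩ R.source) =
      ((Measure.hausdorffMeasure 1).restrict (frontier D ∩ R.source)) univ := by simp
  rw [h1, C.H1' B, Measure.map_apply_of_aemeasurable (C.sg_aem') MeasurableSet.univ]
  refine lt_of_le_of_lt (C.tau_le _) ?_
  simp only [preimage_univ, Measure.smul_apply, Measure.restrict_apply_univ, smul_eq_mul]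
  exact ENNReal.mul_lt_top ENNReal.ofReal_lt_top C.vol_J

end Chart

lemma Bdry.fin {D U : Set ℂ} {Γ : ℂ → ℝ} {gr : ℂ → ℂ} (B : Bdry D U Γ gr) : IsFiniteMeasure (bdryArc D) := by
  constructor
  rw [bdryArc, Measure.restrict_apply_univ]
  have hcpt : IsCompact (frontier D) := isCompact_of_isClosed_isBounded isClosed_frontier
    (B.bdd.closure.subset frontier_subset_closure)
  refine hcpt.induction_on (p := fun s => (Measure.hausdorffMeasure 1 : Measure ℂ) s < ⊤) (by simp)
    (fun s t hst ht => lt_of_le_of_lt (measure_mono hst) ht)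
    (fun s t hs ht => lt_of_le_of_lt (measure_union_le _ _) (ENNReal.add_lt_top.2 ⟨hs, ht⟩)) ?_
  intro p hp
  obtain ⟨R, δ, C, hpR⟩ := B.exists_chart hp
  refine ⟨frontier D ∩ R.source, ?_, C.fin B⟩
  exact inter_mem_nhdsWithin _ (R.open_source.mem_nhds hpR)

end SaitohE

noncomputable section SaitohF

namespace Chart
variable {D U : Set ℂ} {Γ : ℂ → ℝ} {gr : ℂ → ℂ} {e : ℂ} {R : OpenPartialHomeomorph ℂ ℂ} {y0 δ : ℝ}

lemma gr_cont (C : Chart D U Γ gr e R y0 δ) (B : Bdry D U Γ gr) : ContinuousOn gr R.source := B.cgr.mono C.src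

lemma Rcont (C : Chart D U Γ gr e R y0 δ) (B : Bdry D U Γ gr) : ContinuousOn R R.source := R.continuousOn

lemma integral_bdry (C : Chart D U Γ gr e R y0 δ) (B : Bdry D U Γ gr) {ψ : ℂ → ℂ} (hψ : ContinuousOn ψ (frontier D ∩ R.source)) (h0 : ∀ w ∈ frontier D, w ∉ R.source → ψ w = 0) :
    ∫ w, ψ w ∂bdryArc D = ∫ y in {y : ℝ | |y - y0| < δ},
      ((‖gr (sg R y)‖ / (conj e * gr (sg R y)).re : ℝ) : ℂ) * ψ (sg R y) := by
  have hm : MeasurableSet (frontier D ∩ R.source) :=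
    isClosed_frontier.measurableSet.inter R.open_source.measurableSet
  rw [bdryArc, setIntegral_eq_of_subset_of_forall_sdiff_eq_zero (s := frontier D ∩ R.source)
    isClosed_frontier.measurableSet inter_subset_left (fun w hw => h0 w hw.1 (fun h => hw.2 ⟨hw.1, h⟩))]
  have hae := hψ.aestronglyMeasurable (μ := (Measure.hausdorffMeasure 1 : Measure ℂ)) hm
  rw [C.H1' B] at hae ⊢
  rw [integral_map C.sg_aem' hae]
  unfold tau
  have hg : ContinuousOn (fun y => gr (sg R y)) {y : ℝ | |y - y0| < δ} :=
    (C.gr_cont B).comp C.sg_cont (fun y hy => C.sg_mem hy)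
  have hd : ContinuousOn (fun y => ‖gr (sg R y)‖ / (conj e * gr (sg R y)).re) {y : ℝ | |y - y0| < δ} := by
    refine hg.norm.div ?_ (fun y hy => (C.det_pos (C.sg_mem hy)).ne')
    exact Complex.continuous_re.comp_continuousOn (continuousOn_const.mul hg)
  rw [integral_withDensity_eq_integral_toReal_smul₀]
  · refine setIntegral_congr_fun C.J_open.measurableSet ?_
    intro y hy
    dsimp only
    rw [ENNReal.toReal_ofReal, Complex.real_smul]
    exact div_nonneg (norm_nonneg _) (C.det_pos (C.sg_mem hy)).le
  · exact (hd.aemeasurable C.J_open.measurableSet).ennreal_ofReal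
  · exact Eventually.of_forall fun y => ENNReal.ofReal_lt_top

lemma loc (C : Chart D U Γ gr e R y0 δ) (B : Bdry D U Γ gr) {l : Filter ℝ} {κ : ℝ → ℝ → ℝ} (hκ : KF l κ) {ψ : ℂ → ℂ} (hψ : Continuous ψ)
    (hs : tsupport ψ ⊆ R.source) (hc : HasCompactSupport ψ) {J : ℝ → ℂ → ℝ}
    (hJ : ∀ ε, ∀ w ∈ D, w ∈ U → J ε w = κ ε (Γ w) * ‖gr w‖ ^ 2) :
    (∀ᶠ ε in l, IntegrableOn (fun w => (J ε w : ℂ) * ψ w) D) ∧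
    Tendsto (fun ε => ∫ w in D, (J ε w : ℂ) * ψ w) l (𝓝 (1 / 2 * ∫ w, ψ w * ‖gr w‖ ∂bdryArc D)) := by
  have hψ0 : ∀ w, w ∉ R.source → ψ w = 0 := fun w hw => image_eq_zero_of_notMem_tsupport (fun h => hw (hs h))
  set Ξ0 : ℂ → ℂ := fun z => ((‖gr (R.symm z)‖ ^ 2 / (conj e * gr (R.symm z)).re : ℝ) : ℂ) * ψ (R.symm z) with hΞ0
  have hgs : ContinuousOn (fun z => gr (R.symm z)) R.target :=
    (C.gr_cont B).comp R.continuousOn_symm (fun z hz => R.map_target hz)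
  have hΞ0c : ContinuousOn Ξ0 R.target := by
    refine ContinuousOn.mul ?_ (hψ.comp_continuousOn R.continuousOn_symm)
    refine Complex.continuous_ofReal.comp_continuousOn ?_
    refine (hgs.norm.pow 2).div ?_ (fun z hz => (C.det_pos (R.map_target hz)).ne')
    exact Complex.continuous_re.comp_continuousOn (continuousOn_const.mul hgs)
  obtain ⟨hΞ, hΞc⟩ := continuous_indicator_of_compact (Kc := R '' tsupport ψ) R.open_target
    (hc.isCompact.image_of_continuousOn (R.continuousOn.mono hs))
    (by rintro _ ⟨w, hw, rfl⟩; exact R.map_source (hs hw)) hΞ0c (by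
      rintro z ⟨hz, hz2⟩
      rw [hΞ0]
      have : ψ (R.symm z) = 0 := image_eq_zero_of_notMem_tsupport
        (fun h => hz2 ⟨_, h, R.right_inv hz⟩)
      simp [this])
  set Ξ := R.target.indicator Ξ0 with hΞd
  have hΞR : ∀ w ∈ R.source, Ξ (R w) = ((‖gr w‖ ^ 2 / (conj e * gr w).re : ℝ) : ℂ) * ψ w := by
    intro w hw
    rw [hΞd, indicator_of_mem (R.map_source hw), hΞ0]
    simp only [R.left_inv hw]
  have hms : MeasurableSet (D ∩ R.source) := (B.op.inter R.open_source).measurableSet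
  have hder : ∀ w ∈ D ∩ R.source, HasFDerivWithinAt R (DTH (gr w) e) (D ∩ R.source) w := by
    intro w hw
    have : (R : ℂ → ℂ) = TH Γ e := funext C.coe
    rw [this]
    exact (TH_deriv (B.dΓ _ (C.src hw.2))).hasFDerivAt.hasFDerivWithinAt
  have hinj : InjOn R (D ∩ R.source) := R.injOn.mono inter_subset_right
  have hpt : ∀ ε, ∀ w ∈ D ∩ R.source,
      |(DTH (gr w) e).det| • ((κ ε (R w).re : ℂ) * Ξ (R w)) = (J ε w : ℂ) * ψ w := by
    intro ε w hw
    have hdp := C.det_pos hw.2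
    rw [det_DTH, abs_of_pos hdp, hΞR w hw.2, C.re_R, hJ ε w hw.1 (C.src hw.2), Complex.real_smul]
    push_cast
    have : (((conj e * gr w).re : ℝ) : ℂ) ≠ 0 := by exact_mod_cast hdp.ne'
    field_simp
  have hzero : ∀ᶠ ε in l, ∀ z, z ∉ R '' (D ∩ R.source) → (κ ε z.re : ℂ) * Ξ z = 0 := by
    filter_upwards [hκ.supp 1 one_pos] with ε hε z hz
    by_cases hzt : z ∈ R.target
    · have h1 : ¬ (z.re < 0) := by
        intro hneg
        apply hz
        refine ⟨R.symm z, ⟨(C.hD _ (R.map_target hzt)).2 ?_, R.map_target hzt⟩, R.right_inv hzt⟩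
        rw [← C.re_R, R.right_inv hzt]; exact hneg
      rw [hε z.re (fun h => h1 h.2)]; simp
    · rw [hΞd, indicator_of_notMem hzt, mul_zero]
  have hdiff : ∀ ε, ∀ w ∈ D \ (D ∩ R.source), (J ε w : ℂ) * ψ w = 0 := by
    intro ε w hw
    rw [hψ0 w (fun h => hw.2 ⟨hw.1, h⟩), mul_zero]
  constructor
  · filter_upwards [hκ.cont, hκ.supp 1 one_pos] with ε h1 h2
    have i1 := (kernel_integrable h1 h2 hΞ hΞc).integrableOn (s := R '' (D ∩ R.source))
    rw [integrableOn_image_iff_integrableOn_abs_det_fderiv_smul volume hms hder hinj] at i1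
    have i2 : IntegrableOn (fun w => (J ε w : ℂ) * ψ w) (D ∩ R.source) :=
      i1.congr_fun (fun w hw => hpt ε w hw) hms
    exact i2.of_forall_sdiff_eq_zero B.op.measurableSet (hdiff ε)
  · have h1 := hκ.lim hΞ hΞc
    have e1 : ∫ w, ψ w * ‖gr w‖ ∂bdryArc D = ∫ y : ℝ, Ξ (I * y) := by
      have hcg : ContinuousOn (fun w => ψ w * (‖gr w‖ : ℂ)) (frontier D ∩ R.source) :=
        (hψ.continuousOn).mul (Complex.continuous_ofReal.comp_continuousOn
          ((C.gr_cont B).norm.mono inter_subset_right))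
      rw [C.integral_bdry B hcg (fun w _ hw => by rw [hψ0 w hw, zero_mul])]
      rw [← setIntegral_eq_integral_of_forall_compl_eq_zero (s := {y : ℝ | |y - y0| < δ})
        (f := fun y : ℝ => Ξ (I * y)) (μ := volume)]
      · refine setIntegral_congr_fun C.J_open.measurableSet ?_
        intro y hy
        dsimp only
        rw [← C.R_sg hy, hΞR _ (C.sg_mem hy)]
        push_cast; ring
      · intro y hy
        have : I * (y : ℂ) ∉ R.target := by
          rw [C.tgt]; intro h
          have := h.2
          simp at this
          exact hy this
        rw [hΞd, indicator_of_notMem this]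
    rw [e1]
    refine h1.congr' ?_
    filter_upwards [hzero] with ε h0
    rw [setIntegral_eq_of_subset_of_forall_sdiff_eq_zero (s := D ∩ R.source) B.op.measurableSet inter_subset_left
      (hdiff ε), ← setIntegral_eq_integral_of_forall_compl_eq_zero h0,
      integral_image_eq_integral_abs_det_fderiv_smul volume hms hder hinj]
    exact setIntegral_congr_fun hms (fun w hw => hpt ε w hw)

end Chart

namespace Bdry
variable {D U : Set ℂ} {Γ : ℂ → ℝ} {gr : ℂ → ℂ}

lemma cpt (B : Bdry D U Γ gr) : IsCompact (frontier D) := isCompact_of_isClosed_isBounded isClosed_frontier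
    (B.bdd.closure.subset frontier_subset_closure)

lemma ccl (B : Bdry D U Γ gr) : IsCompact (closure D) := B.bdd.isCompact_closure

lemma CL (B : Bdry D U Γ gr) {l : Filter ℝ} {κ : ℝ → ℝ → ℝ} (hκ : KF l κ) {J : ℝ → ℂ → ℝ}
    (hJ : ∀ ε, ∀ w ∈ D, w ∈ U → J ε w = κ ε (Γ w) * ‖gr w‖ ^ 2)
    (hJ0 : ∀ N, IsOpen N → frontier D ⊆ N → ∀ᶠ ε in l, ∀ w ∈ D, w ∉ N → J ε w = 0)
    {φ : ℂ → ℂ} {N : Set ℂ} (hN : IsOpen N) (hfN : frontier D ⊆ N) (hφ : ContinuousOn φ (closure D ∩ N)) :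
    Tendsto (fun ε => ∫ w in D, (J ε w : ℂ) * φ w) l (𝓝 (1 / 2 * ∫ w, φ w * ‖gr w‖ ∂bdryArc D)) := by
  haveI := B.fin
  -- charts
  have hch : ∀ p : frontier D, ∃ R : OpenPartialHomeomorph ℂ ℂ, ∃ δ : ℝ,
      Chart D U Γ gr (gr p) R ((conj (gr p) * p).im) δ ∧ (p : ℂ) ∈ R.source := fun p => B.exists_chart p.2
  choose R δ hC hpR using hch
  obtain ⟨T, hT⟩ := B.cpt.elim_finite_subcover (fun p => (R p).source) (fun p => (R p).open_source)
    (fun p hp => mem_iUnion.2 ⟨⟨p, hp⟩, hpR _⟩)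
  set V : Set ℂ := N ∩ ⋃ p ∈ T, (R p).source with hV
  have hVo : IsOpen V := hN.inter (isOpen_biUnion fun p _ => (R p).open_source)
  have hfV : frontier D ⊆ V := fun w hw => ⟨hfN hw, hT hw⟩
  obtain ⟨η, hη, hηV⟩ := B.cpt.exists_cthickening_subset_open hVo hfV
  set A := closure D ∩ cthickening η (frontier D) with hA
  have hAc : IsClosed A := isClosed_closure.inter isClosed_cthickening
  have hφA : ContinuousOn φ A := hφ.mono fun w hw => ⟨hw.1, (hηV hw.2).1⟩
  obtain ⟨g, hg⟩ := ContinuousMap.exists_restrict_eq hAc ⟨A.restrict φ, hφA.restrict⟩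
  have hgA : ∀ w ∈ A, g w = φ w := by
    intro w hw
    exact congrArg (fun f : C(A, ℂ) => f ⟨w, hw⟩) hg
  obtain ⟨χ, hχ1, hχ2, -, hχ4⟩ := exists_continuous_sum_one_of_isOpen_isCompact
    (s := fun i : Fin T.card => (R (T.equivFin.symm i)).source) (t := cthickening η (frontier D))
    (fun i => (R _).open_source) B.cpt.cthickening (by
      intro w hw
      obtain ⟨p, hp, hwp⟩ := mem_iUnion₂.1 (hηV hw).2
      refine mem_iUnion.2 ⟨T.equivFin ⟨p, hp⟩, ?_⟩
      simpa using hwp)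
  have hsum : ∀ w ∈ cthickening η (frontier D), ∑ i, ((χ i w : ℝ) : ℂ) = 1 := by
    intro w hw
    have := hχ2 hw
    simp only [ContinuousMap.coe_sum, Finset.sum_apply, Pi.one_apply] at this
    exact_mod_cast this
  have hψ : ∀ i, Continuous fun w => ((χ i w : ℝ) : ℂ) * g w := fun i => by fun_prop
  have hts : ∀ i, tsupport (fun w => ((χ i w : ℝ) : ℂ) * g w) ⊆ tsupport (χ i) := by
    intro i
    refine closure_mono ?_
    intro w hw h
    apply hw
    simp [h]
  have hloc := fun i => (hC (T.equivFin.symm i)).loc B hκ (hψ i) ((hts i).trans (hχ1 i))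
    (HasCompactSupport.of_support_subset_isCompact (hχ4 i) ((subset_tsupport _).trans (hts i))) hJ
  have hlim := tendsto_finsetSum Finset.univ fun i _ => (hloc i).2
  have hfth : frontier D ⊆ cthickening η (frontier D) := self_subset_cthickening _
  have e1 : ∑ i, (1 / 2 * ∫ w, ((χ i w : ℝ) : ℂ) * g w * ‖gr w‖ ∂bdryArc D) =
      1 / 2 * ∫ w, φ w * ‖gr w‖ ∂bdryArc D := by
    rw [← Finset.mul_sum, ← integral_finset_sum]
    · congr 1
      unfold bdryArc
      refine setIntegral_congr_fun isClosed_frontier.measurableSet ?_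
      intro w hw
      dsimp only
      rw [← Finset.sum_mul, ← Finset.sum_mul, hsum w (hfth hw), one_mul,
        hgA w ⟨frontier_subset_closure hw, hfth hw⟩]
    · intro i _
      have : ContinuousOn (fun w => ((χ i w : ℝ) : ℂ) * g w * (‖gr w‖ : ℂ)) (frontier D) :=
        (hψ i).continuousOn.mul (Complex.continuous_ofReal.comp_continuousOn (B.cgr.norm.mono B.fU))
      have h2 := B.fin
      rw [bdryArc] at h2 ⊢
      have h3 : (Measure.hausdorffMeasure 1 : Measure ℂ) (frontier D) < ⊤ := by
        have := h2.measure_univ_lt_top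
        rwa [Measure.restrict_apply_univ] at this
      obtain ⟨M, hM⟩ := B.cpt.exists_bound_of_continuousOn this
      refine Integrable.of_bound (this.aestronglyMeasurable isClosed_frontier.measurableSet) M ?_
      filter_upwards [ae_restrict_mem isClosed_frontier.measurableSet] with w hw using hM w hw
  rw [e1] at hlim
  refine hlim.congr' ?_
  filter_upwards [eventually_all.2 fun i => (hloc i).1, hJ0 (thickening η (frontier D)) isOpen_thickening
    (self_subset_thickening hη _)] with ε h1 h2
  rw [← integral_finset_sum _ (fun i _ => h1 i)]
  refine setIntegral_congr_fun B.op.measurableSet ?_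
  intro w hw
  dsimp only
  by_cases hwt : w ∈ thickening η (frontier D)
  · have hwc := thickening_subset_cthickening _ _ hwt
    rw [← Finset.mul_sum, ← Finset.sum_mul, hsum w hwc, one_mul, hgA w ⟨subset_closure hw, hwc⟩]
  · simp [h2 w hw hwt]

end Bdry
end SaitohF

noncomputable section SaitohG

def th (ε x : ℝ) : ℝ := Real.smoothTransition ((1 - ε - x) / ε)
def thd (ε x : ℝ) : ℝ := deriv (th ε) x
def Ps (ε x : ℝ) : ℝ := ∫ s in x..1, th ε s

lemma th_contDiff (ε : ℝ) : ContDiff ℝ 1 (th ε) := by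
  unfold th
  exact (Real.smoothTransition.contDiff (n := 1)).comp (by fun_prop)

lemma th_cont (ε : ℝ) : Continuous (th ε) := (th_contDiff ε).continuous

lemma th_deriv (ε x : ℝ) : HasDerivAt (th ε) (thd ε x) x :=
  ((th_contDiff ε).differentiable (by simp) x).hasDerivAt

lemma thd_cont (ε : ℝ) : Continuous (thd ε) := (th_contDiff ε).continuous_deriv (by simp)

lemma th_one {ε x : ℝ} (hε : 0 < ε) (hx : x ≤ 1 - 2 * ε) : th ε x = 1 := by
  apply Real.smoothTransition.one_of_one_le
  rw [le_div_iff₀ hε]; linarith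

lemma th_zero {ε x : ℝ} (hε : 0 < ε) (hx : 1 - ε ≤ x) : th ε x = 0 := by
  apply Real.smoothTransition.zero_of_nonpos
  exact div_nonpos_of_nonpos_of_nonneg (by linarith) hε.le

lemma th_le (ε x : ℝ) : th ε x ≤ 1 := Real.smoothTransition.le_one _
lemma th_nonneg (ε x : ℝ) : 0 ≤ th ε x := Real.smoothTransition.nonneg _

lemma thd_one {ε x : ℝ} (hε : 0 < ε) (hx : x ≤ 1 - 2 * ε) : thd ε x = 0 := by
  refine IsLocalMax.hasDerivAt_eq_zero (f := th ε) (a := x) ?_ (th_deriv ε x)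
  exact Eventually.of_forall fun y => by rw [th_one hε hx]; exact th_le _ _

lemma thd_zero {ε x : ℝ} (hε : 0 < ε) (hx : 1 - ε ≤ x) : thd ε x = 0 := by
  refine IsLocalMin.hasDerivAt_eq_zero (f := th ε) (a := x) ?_ (th_deriv ε x)
  exact Eventually.of_forall fun y => by rw [th_zero hε hx]; exact th_nonneg _ _

lemma thd_nonpos {ε : ℝ} (hε : 0 < ε) (x : ℝ) : thd ε x ≤ 0 := by
  have : Antitone (th ε) := by
    intro a b hab
    apply Real.smoothTransition.monotone
    gcongr
  exact this.deriv_nonpos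

lemma Ps_deriv (ε x : ℝ) : HasDerivAt (Ps ε) (- th ε x) x := by
  have := intervalIntegral.integral_hasDerivAt_left ((th_cont ε).intervalIntegrable x 1)
    ((th_cont ε).stronglyMeasurableAtFilter _ _) (th_cont ε).continuousAt
  exact this

lemma Ps_zero {ε x : ℝ} (hε : 0 < ε) (hx : 1 - ε ≤ x) : Ps ε x = 0 := by
  unfold Ps
  rw [intervalIntegral.integral_congr (g := fun _ => (0 : ℝ)), intervalIntegral.integral_zero]
  intro s hs
  apply th_zero hε
  rcases le_total x 1 with h | h
  · rw [uIcc_of_le h] at hs; linarith [hs.1]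
  · rw [uIcc_of_ge h] at hs; linarith [hs.1]

lemma Ps_low {ε x : ℝ} (hε : 0 < ε) (hx : x ≤ 1) : 1 - 2 * ε - x ≤ Ps ε x := by
  unfold Ps
  rcases le_total x (1 - 2 * ε) with h | h
  · rw [← intervalIntegral.integral_add_adjacent_intervals ((th_cont ε).intervalIntegrable x (1 - 2 * ε))
      ((th_cont ε).intervalIntegrable (1 - 2 * ε) 1)]
    have h1 : ∫ s in x..(1 - 2 * ε), th ε s = 1 - 2 * ε - x := by
      rw [intervalIntegral.integral_congr (g := fun _ => (1 : ℝ))]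
      · simp
      · intro s hs
        rw [uIcc_of_le h] at hs
        exact th_one hε hs.2
    have h2 : 0 ≤ ∫ s in (1 - 2 * ε)..1, th ε s :=
      intervalIntegral.integral_nonneg (by linarith) fun s _ => th_nonneg _ _
    linarith
  · have h2 : 0 ≤ ∫ s in x..1, th ε s :=
      intervalIntegral.integral_nonneg hx fun s _ => th_nonneg _ _
    linarith

lemma Ps_nonneg {ε x : ℝ} (hx : x ≤ 1) : 0 ≤ Ps ε x :=
  intervalIntegral.integral_nonneg hx fun s _ => th_nonneg _ _

lemma cut {ε : ℝ} (hε : 0 < ε) : Cut (th ε) (thd ε) (Ps ε) ε where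
  pos := hε
  dθ := th_deriv ε
  cθ' := thd_cont ε
  dΨ := Ps_deriv ε
  zθ := fun x hx => th_zero hε hx
  zθ' := fun x hx => thd_zero hε hx
  zΨ := fun x hx => Ps_zero hε hx

def kap (ε x : ℝ) : ℝ := - thd ε (Real.exp (2 * x)) * Real.exp (2 * x)

lemma small_ev {a : ℝ} (ha : a < 1) : ∀ᶠ ε in 𝓝[>] (0 : ℝ), 0 < ε ∧ a < 1 - 2 * ε := by
  have : ∀ᶠ ε in 𝓝[>] (0 : ℝ), ε < (1 - a) / 2 :=
    nhdsWithin_le_nhds (Iio_mem_nhds (by linarith))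
  filter_upwards [self_mem_nhdsWithin, this] with ε h1 h2
  exact ⟨h1, by linarith⟩

lemma kap_supp {η : ℝ} (hη : 0 < η) : ∀ᶠ ε in 𝓝[>] (0 : ℝ), ∀ x, x ∉ Ioo (-η) 0 → kap ε x = 0 := by
  filter_upwards [small_ev (a := Real.exp (2 * -η)) (by rw [Real.exp_lt_one_iff]; linarith)] with ε hε x hx
  unfold kap
  rcases le_or_gt x (-η) with h | h
  · have : Real.exp (2 * x) ≤ Real.exp (2 * -η) := Real.exp_le_exp.2 (by linarith)
    rw [thd_one hε.1 (by linarith)]; simp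
  · have : 0 ≤ x := by
      by_contra h0
      exact hx ⟨h, not_le.1 h0⟩
    have : 1 ≤ Real.exp (2 * x) := Real.one_le_exp (by linarith)
    rw [thd_zero hε.1 (by linarith [hε.1])]; simp

lemma kap_KF : KF (𝓝[>] (0 : ℝ)) kap where
  cont := by
    refine Eventually.of_forall fun ε => ?_
    have := thd_cont ε
    unfold kap; fun_prop
  nonneg := by
    filter_upwards [self_mem_nhdsWithin] with ε hε x
    exact mul_nonneg (neg_nonneg.2 (thd_nonpos hε _)) (Real.exp_pos _).le
  supp := fun η hη => kap_supp hη
  int := by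
    filter_upwards [kap_supp one_pos, small_ev (a := Real.exp (2 * (-1 : ℝ))) (by rw [Real.exp_lt_one_iff]; linarith)] with ε h1 h2
    rw [← setIntegral_eq_integral_of_forall_compl_eq_zero (s := Ioc (-1) 0) (f := kap ε) (μ := volume)
      (fun x hx => h1 x fun h => hx (Ioo_subset_Ioc_self h)), ← intervalIntegral.integral_of_le (by norm_num)]
    have hd : ∀ x, HasDerivAt (fun x => -(1 / 2) * th ε (Real.exp (2 * x))) (kap ε x) x := by
      intro x
      have e1 : HasDerivAt (fun x : ℝ => Real.exp (2 * x)) (Real.exp (2 * x) * (2 * 1)) x :=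
        ((hasDerivAt_id x).const_mul 2).exp
      have := ((th_deriv ε (Real.exp (2 * x))).comp x e1).const_mul (-(1 / 2))
      refine this.congr_deriv ?_
      unfold kap; ring
    rw [intervalIntegral.integral_eq_sub_of_hasDerivAt (fun x _ => hd x)]
    · rw [th_one h2.1 h2.2.le, th_zero h2.1 (by simp [h2.1.le])]; ring
    · have : Continuous (kap ε) := by
        have := thd_cont ε
        unfold kap; fun_prop
      exact this.intervalIntegrable _ _

/-- the density -/
def JJ (t : ℂ) (h : ℂ → ℝ) (P : ℂ → ℂ) (ε : ℝ) (w : ℂ) : ℝ :=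
  - thd ε (uu t h w) * (‖kk t P w‖ ^ 2 * vv h w)

structure Full (D : Set ℂ) (t : ℂ) (h : ℂ → ℝ) (P : ℂ → ℂ) (U : Set ℂ) (Γ : ℂ → ℝ) (gr : ℂ → ℂ) : Prop where
  S : Setup D t h P
  B : Bdry D U Γ gr
  tU : t ∉ U
  u_eq : ∀ w ∈ D, w ∈ U → uu t h w = Real.exp (2 * Γ w)
  gr_eq : ∀ w ∈ D, w ∈ U → conj (gr w) * (w - t) = kk t P w

namespace Full
variable {D : Set ℂ} {t : ℂ} {h : ℂ → ℝ} {P : ℂ → ℂ} {U : Set ℂ} {Γ : ℂ → ℝ} {gr : ℂ → ℂ}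

lemma k2v (F : Full D t h P U Γ gr) {w : ℂ} (hw : w ∈ D) (hU : w ∈ U) : ‖kk t P w‖ ^ 2 * vv h w = uu t h w * ‖gr w‖ ^ 2 := by
  rw [← F.gr_eq w hw hU, norm_mul, RCLike.norm_conj]
  unfold uu; ring

lemma J_eq (F : Full D t h P U Γ gr) (ε : ℝ) {w : ℂ} (hw : w ∈ D) (hU : w ∈ U) : JJ t h P ε w = kap ε (Γ w) * ‖gr w‖ ^ 2 := by
  unfold JJ kap
  rw [F.k2v hw hU, F.u_eq w hw hU]; ring

lemma off (F : Full D t h P U Γ gr) {N : Set ℂ} (hN : IsOpen N) (hfN : frontier D ⊆ N) :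
    ∃ a < 1, ∀ w ∈ D, w ∉ N → uu t h w ≤ a := by
  have hK : IsCompact (closure D \ N) := F.B.ccl.diff hN
  have hKD : closure D \ N ⊆ D := by
    rintro w ⟨h1, h2⟩
    by_contra h3
    exact h2 (hfN (by rw [F.S.op.frontier_eq]; exact ⟨h1, h3⟩))
  rcases (closure D \ N).eq_empty_or_nonempty with he | hne
  · refine ⟨0, one_pos, fun w hw hwN => ?_⟩
    have : w ∈ closure D \ N := ⟨subset_closure hw, hwN⟩
    rw [he] at this; exact absurd this (notMem_empty _)
  · obtain ⟨x, hx, hmax⟩ := hK.exists_isMaxOn hne (F.S.ucont.mono hKD)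
    exact ⟨_, F.S.lt_one x (hKD hx), fun w hw hwN => hmax ⟨subset_closure hw, hwN⟩⟩

lemma thd_off (F : Full D t h P U Γ gr) {N : Set ℂ} (hN : IsOpen N) (hfN : frontier D ⊆ N) :
    ∀ᶠ ε in 𝓝[>] (0 : ℝ), ∀ w ∈ D, w ∉ N → thd ε (uu t h w) = 0 := by
  obtain ⟨a, ha, ha2⟩ := F.off hN hfN
  filter_upwards [small_ev ha] with ε hε w hw hwN
  exact thd_one hε.1 (by linarith [ha2 w hw hwN])

lemma CL (F : Full D t h P U Γ gr) {φ : ℂ → ℂ} {N : Set ℂ} (hN : IsOpen N) (hfN : frontier D ⊆ N) (hφ : ContinuousOn φ (closure D ∩ N)) :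
    Tendsto (fun ε => ∫ w in D, (JJ t h P ε w : ℂ) * φ w) (𝓝[>] 0) (𝓝 (1 / 2 * ∫ w, φ w * ‖gr w‖ ∂bdryArc D)) := by
  refine F.B.CL kap_KF (fun ε w hw hU => F.J_eq ε hw hU) ?_ hN hfN hφ
  intro N hN hfN
  filter_upwards [F.thd_off hN hfN] with ε hε w hw hwN
  unfold JJ; rw [hε w hw hwN]; simp

/-- constant formula -/
lemma const_formula (F : Full D t h P U Γ gr) {p : ℂ} (hp : p ∉ frontier D) :
    1 / 2 * ∫ w, (gr w / ‖gr w‖) / (w - p) ∂bdryArc D = D.indicator (fun _ => (Real.pi : ℂ)) p := by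
  have hne : ∀ w ∈ frontier D, gr w ≠ 0 := F.B.ne
  set N0 : Set ℂ := U ∩ gr ⁻¹' {0}ᶜ with hN0
  have hN0o : IsOpen N0 := F.B.cgr.isOpen_inter_preimage F.B.Uop isOpen_compl_singleton
  have hfN0 : frontier D ⊆ N0 := fun w hw => ⟨F.B.fU hw, hne w hw⟩
  obtain ⟨r, hr, hrp⟩ := Metric.isOpen_iff.1 isClosed_frontier.isOpen_compl p hp
  set N : Set ℂ := N0 ∩ (closedBall p (r / 2))ᶜ with hN
  have hNo : IsOpen N := hN0o.inter isClosed_closedBall.isOpen_compl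
  have hfN : frontier D ⊆ N := by
    intro w hw
    refine ⟨hfN0 hw, fun h => ?_⟩
    exact hrp (mem_ball.2 (lt_of_le_of_lt (mem_closedBall.1 h) (by linarith))) hw
  have hwp : ∀ w ∈ N, w - p ≠ 0 := by
    intro w hw h
    rw [sub_eq_zero] at h
    exact hw.2 (by rw [h]; exact mem_closedBall_self (by linarith))
  have hφ : ContinuousOn (fun w => 1 / (conj (gr w) * (w - p))) N := by
    refine continuousOn_const.div ?_ ?_
    · exact ((Complex.continuous_conj.comp_continuousOn F.B.cgr).mono (fun w hw => hw.1.1)).mul (by fun_prop)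
    · intro w hw
      exact mul_ne_zero ((map_ne_zero _).2 hw.1.2) (hwp w hw)
  have h1 := F.CL hNo hfN (hφ.mono inter_subset_right)
  have e1 : ∫ w, 1 / (conj (gr w) * (w - p)) * ‖gr w‖ ∂bdryArc D = ∫ w, (gr w / ‖gr w‖) / (w - p) ∂bdryArc D := by
    unfold bdryArc
    refine setIntegral_congr_fun isClosed_frontier.measurableSet ?_
    intro w hw
    dsimp only
    have a1 : conj (gr w) ≠ 0 := (map_ne_zero _).2 (hne w hw)
    have a2 : (‖gr w‖ : ℂ) ≠ 0 := by exact_mod_cast norm_ne_zero_iff.2 (hne w hw)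
    have a3 := hwp w (hfN hw)
    have a4 : gr w * conj (gr w) = (‖gr w‖ : ℂ) ^ 2 := by
      rw [Complex.mul_conj, Complex.normSq_eq_norm_sq]; push_cast; rfl
    field_simp
    rw [← a4]; ring
  rw [e1] at h1
  have h2 : Tendsto (fun ε => ∫ w in D, (JJ t h P ε w : ℂ) * (1 / (conj (gr w) * (w - p)))) (𝓝[>] 0)
      (𝓝 (D.indicator (fun _ => (Real.pi : ℂ)) p)) := by
    refine tendsto_const_nhds.congr' ?_
    have hth : ∀ᶠ ε in 𝓝[>] (0 : ℝ), p ∈ D → th ε (uu t h p) = 1 := by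
      by_cases hpD : p ∈ D
      · filter_upwards [small_ev (F.S.lt_one p hpD)] with ε hε _
        exact th_one hε.1 hε.2.le
      · exact Eventually.of_forall fun ε h => absurd h hpD
    filter_upwards [F.thd_off hNo hfN, self_mem_nhdsWithin, hth] with ε hε hε0 hth
    have hball : ∀ᶠ w in 𝓝 p, w ∈ D → thd ε (uu t h w) = 0 := by
      filter_upwards [closedBall_mem_nhds p (show 0 < r / 2 by linarith)] with w hw hwD
      exact hε w hwD (fun h => h.2 hw)
    have e2 := F.S.I3 (cut hε0) hball
    have e3 : D.indicator (fun _ => (Real.pi : ℂ)) p = D.indicator (fun p => (Real.pi * th ε (uu t h p) : ℂ)) p := by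
      by_cases hpD : p ∈ D
      · rw [indicator_of_mem hpD, indicator_of_mem hpD, hth hpD]; simp
      · rw [indicator_of_notMem hpD, indicator_of_notMem hpD]
    rw [e3, ← e2]
    refine setIntegral_congr_fun F.S.op.measurableSet ?_
    intro w hw
    dsimp only
    by_cases hwN : w ∈ N
    · have a1 : conj (gr w) ≠ 0 := (map_ne_zero _).2 hwN.1.2
      have a3 := hwp w hwN
      have a5 := F.gr_eq w hw hwN.1.1
      have a6 : kk t P w * conj (kk t P w) = (‖kk t P w‖ : ℂ) ^ 2 := by
        rw [Complex.mul_conj, Complex.normSq_eq_norm_sq]; push_cast; rfl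
      unfold JJ
      push_cast
      rw [← a6]
      field_simp
      rw [← a5]; ring
    · unfold JJ
      rw [hε w hw hwN]; simp
  exact tendsto_nhds_unique h1 h2

end Full
end SaitohG

noncomputable section SaitohH

lemma poisson_real {m s : ℝ} (hm : 0 < m) (hs : 0 < s) (a : ℝ) :
    Integrable (fun y : ℝ => s / (s ^ 2 + m ^ 2 * (y - a) ^ 2)) ∧
      ∫ y : ℝ, s / (s ^ 2 + m ^ 2 * (y - a) ^ 2) = Real.pi / m := by
  have e : (fun y : ℝ => s / (s ^ 2 + m ^ 2 * (y - a) ^ 2)) =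
      fun y : ℝ => s⁻¹ * (1 + ((m / s) * (y - a)) ^ 2)⁻¹ := by
    funext y
    have : 0 < s ^ 2 + m ^ 2 * (y - a) ^ 2 := by positivity
    field_simp
  rw [e]
  constructor
  · have h1 := (integrable_inv_one_add_sq.comp_mul_left' (R := m / s) (by positivity)).comp_sub_right a
    exact h1.const_mul _
  · rw [integral_const_mul, integral_sub_right_eq_self (fun y : ℝ => (1 + ((m / s) * y) ^ 2)⁻¹) a,
      Measure.integral_comp_mul_left (fun y : ℝ => (1 + y ^ 2)⁻¹) (m / s), integral_univ_inv_one_add_sq,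
      abs_of_pos (by positivity)]
    simp only [smul_eq_mul]
    field_simp

namespace Chart
variable {D U : Set ℂ} {Γ : ℂ → ℝ} {gr : ℂ → ℂ} {e : ℂ} {R : OpenPartialHomeomorph ℂ ℂ} {y0 δ : ℝ}

lemma poisson (C : Chart D U Γ gr e R y0 δ) (B : Bdry D U Γ gr) {w p : ℂ} {s : ℝ} (hs : 0 < s) (hp : p ∈ frontier D) (hpV : p ∈ R.source)
    (hwp : ‖p - w‖ = s) (hmin : ∀ ζ ∈ frontier D, s ≤ ‖ζ - w‖) :
    Integrable (R.source.indicator fun ζ => s / ‖ζ - w‖ ^ 2) (bdryArc D) ∧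
    ∫ ζ, R.source.indicator (fun ζ => s / ‖ζ - w‖ ^ 2) ζ ∂bdryArc D ≤ 7 * Real.pi := by
  have he := C.epos
  have hcont : ContinuousOn (fun ζ => s / ‖ζ - w‖ ^ 2) (frontier D) := by
    refine continuousOn_const.div (by fun_prop) ?_
    intro ζ hζ
    have := hmin ζ hζ
    exact pow_ne_zero 2 (by linarith)
  haveI := B.fin
  constructor
  · refine Integrable.indicator ?_ R.open_source.measurableSet
    obtain ⟨M, hM⟩ := B.cpt.exists_bound_of_continuousOn hcont
    refine Integrable.of_bound (hcont.aestronglyMeasurable isClosed_frontier.measurableSet) M ?_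
    unfold bdryArc
    filter_upwards [ae_restrict_mem isClosed_frontier.measurableSet] with w hw using hM w hw
  have hψ : ContinuousOn (fun ζ => ((R.source.indicator (fun ζ => s / ‖ζ - w‖ ^ 2) ζ : ℝ) : ℂ)) (frontier D ∩ R.source) := by
    refine Complex.continuous_ofReal.comp_continuousOn ?_
    refine (hcont.mono inter_subset_left).congr ?_
    intro ζ hζ
    rw [indicator_of_mem hζ.2]
  have h1 := C.integral_bdry B hψ (fun ζ _ hζ => by rw [indicator_of_notMem hζ]; simp)
  rw [integral_complex_ofReal] at h1
  have h2 : ∫ y in {y : ℝ | |y - y0| < δ},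
      ((‖gr (sg R y)‖ / (conj e * gr (sg R y)).re : ℝ) : ℂ) *
        ((R.source.indicator (fun ζ => s / ‖ζ - w‖ ^ 2) (sg R y) : ℝ) : ℂ) =
      ((∫ y in {y : ℝ | |y - y0| < δ}, (‖gr (sg R y)‖ / (conj e * gr (sg R y)).re) *
        (R.source.indicator (fun ζ => s / ‖ζ - w‖ ^ 2) (sg R y)) : ℝ) : ℂ) := by
    rw [← integral_complex_ofReal]
    simp only [Complex.ofReal_mul]
  rw [h2] at h1
  rw [Complex.ofReal_inj.1 h1]
  have hp' : p ∈ frontier D ∩ R.source := ⟨hp, hpV⟩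
  rw [← C.sg_image] at hp'
  obtain ⟨a, ha, rfl⟩ := hp'
  set m : ℝ := (2 * ‖e‖)⁻¹ with hm
  have hm0 : 0 < m := by positivity
  obtain ⟨i1, i2⟩ := poisson_real hm0 hs a
  have hg0 : ∀ y, 0 ≤ s / (s ^ 2 + m ^ 2 * (y - a) ^ 2) := fun y => by positivity
  calc _ ≤ ∫ y in {y : ℝ | |y - y0| < δ}, 10 / 3 * ‖e‖⁻¹ * (s / (s ^ 2 + m ^ 2 * (y - a) ^ 2)) := by
        refine integral_mono_of_nonneg ?_ ((i1.const_mul _).integrableOn) ?_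
        · filter_upwards [ae_restrict_mem C.J_open.measurableSet] with y hy
          refine mul_nonneg (div_nonneg (norm_nonneg _) (C.det_pos (C.sg_mem hy)).le) ?_
          exact indicator_nonneg (fun _ _ => by positivity) _
        · filter_upwards [ae_restrict_mem C.J_open.measurableSet] with y hy
          rw [indicator_of_mem (C.sg_mem hy)]
          have b1 := C.dens_le hy
          have b2 := C.sg_high hy ha
          have hyF : sg R y ∈ frontier D := by
            have : sg R y ∈ sg R '' {y : ℝ | |y - y0| < δ} := ⟨y, hy, rfl⟩
            rw [C.sg_image] at this; exact this.1
          have b3 := hmin _ hyF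
          have b4 : ‖sg R y - sg R a‖ ≤ 2 * ‖sg R y - w‖ := by
            calc ‖sg R y - sg R a‖ = ‖(sg R y - w) - (sg R a - w)‖ := by congr 1; ring
              _ ≤ ‖sg R y - w‖ + ‖sg R a - w‖ := norm_sub_le _ _
              _ ≤ _ := by rw [hwp]; linarith
          have b5 : m * |y - a| ≤ ‖sg R y - w‖ := by
            have : |y - a| ≤ 2 * ‖e‖ * ‖sg R y - w‖ := by nlinarith
            rw [hm, inv_mul_le_iff₀ (by positivity)]; exact this
          have b6 : s ^ 2 + m ^ 2 * (y - a) ^ 2 ≤ 2 * ‖sg R y - w‖ ^ 2 := by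
            have c1 : (m * |y - a|) ^ 2 ≤ ‖sg R y - w‖ ^ 2 := by gcongr
            have c2 : s ^ 2 ≤ ‖sg R y - w‖ ^ 2 := by gcongr
            rw [mul_pow, sq_abs] at c1
            linarith
          have b7 : s / ‖sg R y - w‖ ^ 2 ≤ 2 * (s / (s ^ 2 + m ^ 2 * (y - a) ^ 2)) := by
            have hpos : 0 < ‖sg R y - w‖ := by linarith
            rw [← mul_div_assoc, div_le_div_iff₀ (by positivity) (by positivity)]
            nlinarith
          calc _ ≤ (5 / 3 * ‖e‖⁻¹) * (2 * (s / (s ^ 2 + m ^ 2 * (y - a) ^ 2))) := by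
                refine mul_le_mul b1 b7 (by positivity) (by positivity)
            _ = _ := by ring
    _ ≤ ∫ y, 10 / 3 * ‖e‖⁻¹ * (s / (s ^ 2 + m ^ 2 * (y - a) ^ 2)) :=
        setIntegral_le_integral (i1.const_mul _)
          (Eventually.of_forall fun y => mul_nonneg (by positivity) (hg0 y))
    _ = 20 / 3 * Real.pi := by
        rw [integral_const_mul, i2, hm]
        field_simp
        norm_num
    _ ≤ 7 * Real.pi := by nlinarith [Real.pi_pos]

lemma star (C : Chart D U Γ gr e R y0 δ) (B : Bdry D U Γ gr) {w' p : ℂ} {s : ℝ} (hs : 0 < s) (hp : p ∈ frontier D) (hpV : p ∈ R.source)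
    (hw : w' = p + s * (e / ‖e‖)) (hwV : w' ∈ R.source) :
    w' ∉ closure D ∧ ∀ ζ ∈ frontier D, ζ ∈ R.source → 3 / 5 * s ≤ ‖ζ - w'‖ := by
  have he := C.epos
  have hG : 3 / 4 * s * ‖e‖ ≤ (R w').re := by
    have h1 := C.lin w' hwV p hpV
    have h2 : conj e * (w' - p) = ((s * ‖e‖ : ℝ) : ℂ) := by
      have a2 : (‖e‖ : ℂ) ≠ 0 := by exact_mod_cast he.ne'
      have a4 : conj e * e = (‖e‖ : ℂ) ^ 2 := by
        rw [mul_comm, Complex.mul_conj, Complex.normSq_eq_norm_sq]; push_cast; rfl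
      rw [hw, add_sub_cancel_left]
      push_cast
      calc conj e * (s * (e / ‖e‖)) = s * (conj e * e) / ‖e‖ := by ring
        _ = _ := by rw [a4]; field_simp
    have h3 : ‖w' - p‖ = s := by
      rw [hw, add_sub_cancel_left, norm_mul, norm_div, Complex.norm_real, Complex.norm_real, norm_norm,
        div_self he.ne', Real.norm_of_nonneg hs.le, mul_one]
    have h4 : (R p).re = 0 := by rw [C.re_R]; exact (C.hF p hpV).1 hp
    have h5 := (abs_le.1 ((Complex.abs_re_le_norm _).trans h1)).1
    rw [h2, h3] at h5
    simp only [Complex.sub_re, Complex.ofReal_re, h4] at h5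
    nlinarith
  constructor
  · intro hcl
    have h0 : 0 < Γ w' := by
      rw [← C.re_R]; exact lt_of_lt_of_le (by positivity) hG
    by_cases hD : w' ∈ D
    · exact absurd ((C.hD w' hwV).1 hD) (by linarith)
    · have : w' ∈ frontier D := by rw [B.op.frontier_eq]; exact ⟨hcl, hD⟩
      exact absurd ((C.hF w' hwV).1 this) (by linarith)
  · intro ζ hζ hζV
    have h1 := C.lin w' hwV ζ hζV
    have h4 : (R ζ).re = 0 := by rw [C.re_R]; exact (C.hF ζ hζV).1 hζ
    have h5 : ‖R w' - R ζ‖ ≤ 5 / 4 * ‖e‖ * ‖w' - ζ‖ := by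
      have : ‖R w' - R ζ‖ ≤ ‖R w' - R ζ - conj e * (w' - ζ)‖ + ‖conj e * (w' - ζ)‖ := by
        calc _ = ‖(R w' - R ζ - conj e * (w' - ζ)) + conj e * (w' - ζ)‖ := by congr 1; ring
          _ ≤ _ := norm_add_le _ _
      rw [norm_mul, RCLike.norm_conj] at this
      linarith
    have h6 := (le_abs_self _).trans (Complex.abs_re_le_norm (R w' - R ζ))
    rw [Complex.sub_re, h4] at h6
    have h7 : 3 / 4 * s * ‖e‖ ≤ 5 / 4 * ‖e‖ * ‖w' - ζ‖ := by linarith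
    rw [norm_sub_rev ζ]
    by_contra hcon
    push Not at hcon
    nlinarith

end Chart

lemma norm_dir {s : ℝ} {e : ℂ} (hs : 0 < s) (he : 0 < ‖e‖) : ‖(s : ℂ) * (e / ‖e‖)‖ = s := by
  rw [norm_mul, norm_div, Complex.norm_real, Complex.norm_real, norm_norm,
        div_self he.ne', Real.norm_of_nonneg hs.le, mul_one]

namespace Full
variable {D : Set ℂ} {t : ℂ} {h : ℂ → ℝ} {P : ℂ → ℂ} {U : Set ℂ} {Γ : ℂ → ℝ} {gr : ℂ → ℂ}

lemma bdry_integrable (F : Full D t h P U Γ gr) {E : Type*} [NormedAddCommGroup E] [SecondCountableTopologyEither ℂ E] {f : ℂ → E}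
    (hf : ContinuousOn f (frontier D)) : Integrable f (bdryArc D) := by
  haveI := F.B.fin
  obtain ⟨M, hM⟩ := F.B.cpt.exists_bound_of_continuousOn hf
  refine Integrable.of_bound (hf.aestronglyMeasurable isClosed_frontier.measurableSet) M ?_
  unfold bdryArc
  filter_upwards [ae_restrict_mem isClosed_frontier.measurableSet] with w hw using hM w hw

def nu (gr : ℂ → ℂ) (w : ℂ) : ℂ := gr w / ‖gr w‖

lemma nu_cont (F : Full D t h P U Γ gr) : ContinuousOn (nu gr) (frontier D) := by
  have h1 := F.B.cgr.mono F.B.fU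
  refine h1.div (Complex.continuous_ofReal.comp_continuousOn h1.norm) ?_
  intro w hw
  exact_mod_cast norm_ne_zero_iff.2 (F.B.ne w hw)

lemma nu_norm (F : Full D t h P U Γ gr) {w : ℂ} (hw : w ∈ frontier D) : ‖nu gr w‖ = 1 := by
  unfold nu
  rw [norm_div, Complex.norm_real, norm_norm, div_self (norm_ne_zero_iff.2 (F.B.ne w hw))]

/-- Cauchy integral of the boundary density `b * ν` -/
def CI (D : Set ℂ) (gr b : ℂ → ℂ) (w : ℂ) : ℂ :=
  (2 * Real.pi : ℂ)⁻¹ * ∫ ζ, b ζ * nu gr ζ / (ζ - w) ∂bdryArc D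

lemma CI_one (F : Full D t h P U Γ gr) {w : ℂ} (hw : w ∉ frontier D) :
    (2 * Real.pi : ℂ)⁻¹ * ∫ ζ, nu gr ζ / (ζ - w) ∂bdryArc D = D.indicator (fun _ => (1 : ℂ)) w := by
  have h1 := F.const_formula hw
  have hpi : (Real.pi : ℂ) ≠ 0 := by exact_mod_cast Real.pi_ne_zero
  have h2 : ∫ ζ, nu gr ζ / (ζ - w) ∂bdryArc D = 2 * D.indicator (fun _ => (Real.pi : ℂ)) w := by
    rw [← h1]; unfold nu; ring
  rw [h2]
  by_cases hD : w ∈ D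
  · rw [indicator_of_mem hD, indicator_of_mem hD]; field_simp
  · rw [indicator_of_notMem hD, indicator_of_notMem hD]; simp

lemma cauchy_cont (F : Full D t h P U Γ gr) {b : ℂ → ℂ} (hb : ContinuousOn b (frontier D)) {w : ℂ} (hw : w ∉ frontier D) :
    ContinuousOn (fun ζ => b ζ * nu gr ζ / (ζ - w)) (frontier D) := by
  refine (hb.mul F.nu_cont).div (by fun_prop) ?_
  intro ζ hζ h0
  rw [sub_eq_zero] at h0
  exact hw (h0 ▸ hζ)

lemma CI_diff (F : Full D t h P U Γ gr) {b : ℂ → ℂ} (hb : ContinuousOn b (frontier D)) {w w' : ℂ} (hw : w ∈ D) (hw' : w' ∉ closure D) (β : ℂ) :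
    CI D gr b w - β - CI D gr b w' =
      (2 * Real.pi : ℂ)⁻¹ * ∫ ζ, (b ζ - β) * nu gr ζ * ((ζ - w)⁻¹ - (ζ - w')⁻¹) ∂bdryArc D := by
  have hwF : w ∉ frontier D := by rw [F.S.op.frontier_eq]; exact fun h => h.2 hw
  have hwF' : w' ∉ frontier D := fun h => hw' (frontier_subset_closure h)
  have hwD' : w' ∉ D := fun h => hw' (subset_closure h)
  have h1 := F.CI_one hwF
  have h2 := F.CI_one hwF'
  rw [indicator_of_mem hw] at h1
  rw [indicator_of_notMem hwD'] at h2
  have one : ContinuousOn (fun _ : ℂ => (1 : ℂ)) (frontier D) := continuousOn_const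
  have i1 := F.bdry_integrable (F.cauchy_cont hb hwF)
  have i2 := F.bdry_integrable (F.cauchy_cont hb hwF')
  have i3 := F.bdry_integrable (F.cauchy_cont one hwF)
  have i4 := F.bdry_integrable (F.cauchy_cont one hwF')
  simp only [one_mul] at i3 i4
  have e1 : ∫ ζ, (b ζ - β) * nu gr ζ * ((ζ - w)⁻¹ - (ζ - w')⁻¹) ∂bdryArc D =
      ∫ ζ, ((b ζ * nu gr ζ / (ζ - w) - b ζ * nu gr ζ / (ζ - w')) -
        β * (nu gr ζ / (ζ - w) - nu gr ζ / (ζ - w'))) ∂bdryArc D := by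
    congr 1; funext ζ; ring
  have j1 : Integrable (fun ζ => b ζ * nu gr ζ / (ζ - w) - b ζ * nu gr ζ / (ζ - w')) (bdryArc D) := i1.sub i2
  have j2 : Integrable (fun ζ => β * (nu gr ζ / (ζ - w) - nu gr ζ / (ζ - w'))) (bdryArc D) :=
    (i3.sub i4).const_mul β
  rw [e1, integral_sub j1 j2, integral_const_mul,
    integral_sub i1 i2, integral_sub i3 i4]
  unfold CI
  linear_combination β * h1 - β * h2

lemma PL (F : Full D t h P U Γ gr) {b : ℂ → ℂ} (hb : ContinuousOn b (frontier D))
    (hext : ∀ w, w ∉ closure D → CI D gr b w + 1 / (w - t) = 0) {p0 : ℂ} (hp0 : p0 ∈ frontier D) :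
    Tendsto (fun w => CI D gr b w + 1 / (w - t)) (𝓝[D] p0) (𝓝 (b p0)) := by
  haveI := F.B.fin
  obtain ⟨R, δ, C, hpR⟩ := F.B.exists_chart hp0
  set e := gr p0 with he
  have htp : p0 ≠ t := fun h => F.tU (h ▸ F.B.fU hp0)
  obtain ⟨M, hM⟩ := F.B.cpt.exists_bound_of_continuousOn hb
  have hM0 : 0 ≤ M := (norm_nonneg _).trans (hM p0 hp0)
  set H := ((bdryArc D).real univ) with hH
  have hH0 : 0 ≤ H := measureReal_nonneg
  rw [Metric.tendsto_nhds]
  intro η hη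
  -- choice of constants
  set η1 : ℝ := η / 100 with hη1
  have hη1p : 0 < η1 := by positivity
  obtain ⟨rb, hrb, hrb2⟩ := Metric.continuousWithinAt_iff.1 (hb p0 hp0) η1 hη1p
  obtain ⟨rV, hrV, hrV2⟩ := Metric.isOpen_iff.1 R.open_source p0 hpR
  set r := min rb rV with hr
  have hr0 : 0 < r := lt_min hrb hrV
  have hinv : ContinuousAt (fun w : ℂ => 1 / (w - t)) p0 := by
    refine continuousAt_const.div (by fun_prop) (sub_ne_zero.2 htp)
  obtain ⟨ri, hri, hri2⟩ := Metric.continuousAt_iff.1 hinv η1 hη1p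
  set Q := 16 * M * H / r ^ 2 with hQ
  have hQ0 : 0 ≤ Q := by positivity
  set ρ := min (min (r / 6) (ri / 6)) (η1 / (Q + 1)) with hρ
  have hρ0 : 0 < ρ := by positivity
  have hρr : ρ ≤ r / 6 := (min_le_left _ _).trans (min_le_left _ _)
  have hρi : ρ ≤ ri / 6 := (min_le_left _ _).trans (min_le_right _ _)
  have hρQ : Q * ρ ≤ η1 := by
    have : ρ ≤ η1 / (Q + 1) := min_le_right _ _
    rw [le_div_iff₀ (by positivity)] at this
    nlinarith
  filter_upwards [inter_mem_nhdsWithin D (ball_mem_nhds p0 hρ0)] with w hw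
  obtain ⟨hwD, hwρ⟩ := hw
  rw [mem_ball, dist_eq_norm] at hwρ
  obtain ⟨p, hpF, hpd⟩ := F.B.cpt.exists_infDist_eq_dist ⟨p0, hp0⟩ w
  set s := ‖p - w‖ with hs
  have hmin : ∀ ζ ∈ frontier D, s ≤ ‖ζ - w‖ := by
    intro ζ hζ
    have := infDist_le_dist_of_mem (x := w) hζ
    rw [hpd, dist_comm, dist_comm w ζ, dist_eq_norm, dist_eq_norm] at this
    exact this
  have hwF : w ∉ frontier D := by rw [F.S.op.frontier_eq]; exact fun h => h.2 hwD
  have hs0 : 0 < s := norm_pos_iff.2 (sub_ne_zero.2 fun h => hwF (h ▸ hpF))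
  have hsρ : s < ρ := lt_of_le_of_lt (hmin p0 hp0) (by rw [norm_sub_rev]; exact hwρ)
  have hpp0 : ‖p - p0‖ < 2 * ρ := by
    calc ‖p - p0‖ = ‖(p - w) + (w - p0)‖ := by congr 1; ring
      _ ≤ ‖p - w‖ + ‖w - p0‖ := norm_add_le _ _
      _ < 2 * ρ := by linarith
  have hsub : ∀ x, ‖x - p0‖ < r → x ∈ R.source := fun x hx =>
    hrV2 (mem_ball.2 (by rw [dist_eq_norm]; exact hx.trans_le (min_le_right _ _)))
  set w' := p + s * (e / ‖e‖) with hw'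
  have hepos := C.epos
  have hw'p : ‖w' - p‖ = s := by
    rw [hw', add_sub_cancel_left]
    exact norm_dir hs0 hepos
  have hw'p0 : ‖w' - p0‖ < 3 * ρ := by
    calc ‖w' - p0‖ = ‖(w' - p) + (p - p0)‖ := by congr 1; ring
      _ ≤ ‖w' - p‖ + ‖p - p0‖ := norm_add_le _ _
      _ < 3 * ρ := by linarith
  have hww' : ‖w - w'‖ ≤ 2 * s := by
    calc ‖w - w'‖ = ‖(p - w) + (w' - p)‖ := by rw [← norm_neg]; congr 1; ring
      _ ≤ ‖p - w‖ + ‖w' - p‖ := norm_add_le _ _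
      _ ≤ 2 * s := by linarith
  have hpV : p ∈ R.source := hsub p (by linarith)
  obtain ⟨hw'c, hst⟩ := C.star F.B hs0 hpF hpV hw' (hsub w' (by linarith))
  obtain ⟨pi1, pi2⟩ := C.poisson F.B hs0 hpF hpV rfl hmin
  have hpt : ∀ ζ ∈ frontier D, ‖(b ζ - b p0) * nu gr ζ * ((ζ - w)⁻¹ - (ζ - w')⁻¹)‖ ≤
      9 * η1 * R.source.indicator (fun ζ => s / ‖ζ - w‖ ^ 2) ζ + 16 * M * s / r ^ 2 := by
    intro ζ hζ
    have hζw : 0 < ‖ζ - w‖ := hs0.trans_le (hmin ζ hζ)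
    have hζw0 : ζ - w ≠ 0 := norm_pos_iff.1 hζw
    have hζw'0 : ζ - w' ≠ 0 := fun h => hw'c (by
      rw [sub_eq_zero] at h; rw [← h]; exact frontier_subset_closure hζ)
    have hζw' : 0 < ‖ζ - w'‖ := norm_pos_iff.2 hζw'0
    have hk : ‖(ζ - w)⁻¹ - (ζ - w')⁻¹‖ ≤ 2 * s / (‖ζ - w‖ * ‖ζ - w'‖) := by
      have : (ζ - w)⁻¹ - (ζ - w')⁻¹ = (w - w') / ((ζ - w) * (ζ - w')) := by field_simp; ring
      rw [this, norm_div, norm_mul]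
      gcongr
    rw [norm_mul, norm_mul, F.nu_norm hζ, mul_one]
    by_cases hζr : ‖ζ - p0‖ < r
    · have hζV := hsub ζ hζr
      rw [indicator_of_mem hζV]
      have b1 : ‖b ζ - b p0‖ ≤ η1 := by
        rw [← dist_eq_norm]
        refine (hrb2 hζ ?_).le
        rw [dist_eq_norm]; exact hζr.trans_le (min_le_left _ _)
      have b2 := hst ζ hζ hζV
      have b3 : ‖ζ - w‖ ≤ 13 / 3 * ‖ζ - w'‖ := by
        have : ‖ζ - w‖ ≤ ‖ζ - w'‖ + ‖w - w'‖ := by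
          calc ‖ζ - w‖ = ‖(ζ - w') - (w - w')‖ := by congr 1; ring
            _ ≤ _ := norm_sub_le _ _
        linarith
      have b4 : 2 * s / (‖ζ - w‖ * ‖ζ - w'‖) ≤ 9 * (s / ‖ζ - w‖ ^ 2) := by
        rw [← mul_div_assoc, div_le_div_iff₀ (by positivity) (by positivity)]
        have : 2 * s * ‖ζ - w‖ ^ 2 ≤ 2 * s * ‖ζ - w‖ * (13 / 3 * ‖ζ - w'‖) := by
          rw [sq, ← mul_assoc]; gcongr
        have : 0 < s * ‖ζ - w‖ * ‖ζ - w'‖ := by positivity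
        nlinarith
      have b5 : 0 ≤ 16 * M * s / r ^ 2 := by positivity
      calc _ ≤ η1 * (9 * (s / ‖ζ - w‖ ^ 2)) := by
            refine mul_le_mul b1 (hk.trans b4) (norm_nonneg _) hη1p.le
        _ ≤ _ := by linarith
    · push Not at hζr
      have b1 : ‖b ζ - b p0‖ ≤ 2 * M := by
        refine (norm_sub_le _ _).trans ?_
        linarith [hM ζ hζ, hM p0 hp0]
      have b2 : r / 2 ≤ ‖ζ - w‖ := by
        have : ‖ζ - p0‖ ≤ ‖ζ - w‖ + ‖w - p0‖ := by
          calc ‖ζ - p0‖ = ‖(ζ - w) + (w - p0)‖ := by congr 1; ring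
            _ ≤ _ := norm_add_le _ _
        linarith
      have b3 : r / 2 ≤ ‖ζ - w'‖ := by
        have : ‖ζ - p0‖ ≤ ‖ζ - w'‖ + ‖w' - p0‖ := by
          calc ‖ζ - p0‖ = ‖(ζ - w') + (w' - p0)‖ := by congr 1; ring
            _ ≤ _ := norm_add_le _ _
        linarith
      have b4 : 2 * s / (‖ζ - w‖ * ‖ζ - w'‖) ≤ 2 * s / ((r / 2) * (r / 2)) := by gcongr
      have b5 : 0 ≤ 9 * η1 * R.source.indicator (fun ζ => s / ‖ζ - w‖ ^ 2) ζ :=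
        mul_nonneg (by positivity) (indicator_nonneg (fun _ _ => by positivity) _)
      calc _ ≤ (2 * M) * (2 * s / ((r / 2) * (r / 2))) := by
            refine mul_le_mul b1 (hk.trans b4) (norm_nonneg _) (by positivity)
        _ = 16 * M * s / r ^ 2 := by field_simp; ring
        _ ≤ _ := by linarith
  have hInt0 : ‖∫ ζ, (b ζ - b p0) * nu gr ζ * ((ζ - w)⁻¹ - (ζ - w')⁻¹) ∂bdryArc D‖ ≤ 63 * Real.pi * η1 + η1 := by
    refine (norm_integral_le_of_norm_le ((pi1.const_mul (9 * η1)).add (integrable_const (16 * M * s / r ^ 2))) ?_).trans ?_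
    · unfold bdryArc
      filter_upwards [ae_restrict_mem isClosed_frontier.measurableSet] with ζ hζ using hpt ζ hζ
    · simp only [Pi.add_apply]
      rw [integral_add (pi1.const_mul (9 * η1)) (integrable_const _), integral_const_mul, integral_const, smul_eq_mul, ← hH]
      have c1 : H * (16 * M * s / r ^ 2) = Q * s := by rw [hQ]; ring
      have c2 : Q * s ≤ Q * ρ := by gcongr
      have c3 : 9 * η1 * ∫ ζ, R.source.indicator (fun ζ => s / ‖ζ - w‖ ^ 2) ζ ∂bdryArc D ≤ 9 * η1 * (7 * Real.pi) := by
        gcongr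
      linarith
  have hd := F.CI_diff hb hwD hw'c (b p0)
  have hx := hext w' hw'c
  have hmain : CI D gr b w + 1 / (w - t) - b p0 = (1 / (w - t) - 1 / (w' - t)) +
      (2 * Real.pi : ℂ)⁻¹ * ∫ ζ, (b ζ - b p0) * nu gr ζ * ((ζ - w)⁻¹ - (ζ - w')⁻¹) ∂bdryArc D := by
    rw [← hd]; linear_combination hx
  rw [dist_eq_norm, hmain]
  have d1 : ‖1 / (w - t) - 1 / (w' - t)‖ ≤ 2 * η1 := by
    have a1 := hri2 (x := w) (by rw [dist_eq_norm]; linarith)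
    have a2 := hri2 (x := w') (by rw [dist_eq_norm]; linarith)
    rw [← dist_eq_norm]
    refine (dist_triangle_right _ _ (1 / (p0 - t))).trans ?_
    linarith
  have d2 : ‖(2 * Real.pi : ℂ)⁻¹ * ∫ ζ, (b ζ - b p0) * nu gr ζ * ((ζ - w)⁻¹ - (ζ - w')⁻¹) ∂bdryArc D‖ ≤
      (2 * Real.pi)⁻¹ * (63 * Real.pi * η1 + η1) := by
    rw [norm_mul]
    have : ‖(2 * Real.pi : ℂ)⁻¹‖ = (2 * Real.pi)⁻¹ := by
      rw [norm_inv, norm_mul, Complex.norm_real, Real.norm_of_nonneg Real.pi_pos.le]; simp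
    rw [this]
    have := Real.pi_pos
    gcongr
  have d3 : (2 * Real.pi)⁻¹ * (63 * Real.pi * η1 + η1) ≤ 40 * η1 := by
    have := Real.pi_gt_three
    rw [inv_mul_le_iff₀ (by positivity)]
    nlinarith
  refine lt_of_le_of_lt (norm_add_le _ _) ?_
  have : η = 100 * η1 := by rw [hη1]; ring
  linarith

end Full
end SaitohH

noncomputable section SaitohI

namespace Full
variable {D : Set ℂ} {t : ℂ} {h : ℂ → ℝ} {P : ℂ → ℂ} {U : Set ℂ} {Γ : ℂ → ℝ} {gr : ℂ → ℂ}

lemma CI_holo (F : Full D t h P U Γ gr) {b : ℂ → ℂ} (hb : ContinuousOn b (frontier D)) : DifferentiableOn ℂ (CI D gr b) D := by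
  intro w0 hw0
  apply DifferentiableAt.differentiableWithinAt
  haveI := F.B.fin
  obtain ⟨r, hr, hrD⟩ := Metric.isOpen_iff.1 F.S.op w0 hw0
  have hDF : ∀ w ∈ D, w ∉ frontier D := by
    intro w hw; rw [F.S.op.frontier_eq]; exact fun h => h.2 hw
  obtain ⟨M, hM⟩ := F.B.cpt.exists_bound_of_continuousOn hb
  have key := hasDerivAt_integral_of_dominated_loc_of_deriv_le (μ := bdryArc D) (𝕜 := ℂ)
    (F := fun w ζ => b ζ * nu gr ζ / (ζ - w)) (F' := fun w ζ => b ζ * nu gr ζ / (ζ - w) ^ 2) (x₀ := w0)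
    (s := ball w0 (r / 2)) (bound := fun _ => M / (r / 2) ^ 2) (ball_mem_nhds w0 (by positivity)) ?_ ?_ ?_ ?_ ?_ ?_
  · exact (key.2.differentiableAt).const_mul _
  · filter_upwards [ball_mem_nhds w0 hr] with w hw
    exact (F.bdry_integrable (F.cauchy_cont hb (hDF w (hrD hw)))).aestronglyMeasurable
  · exact F.bdry_integrable (F.cauchy_cont hb (hDF w0 hw0))
  · refine (F.bdry_integrable (f := fun ζ => b ζ * nu gr ζ / (ζ - w0) ^ 2) ?_).aestronglyMeasurable
    refine (hb.mul F.nu_cont).div (by fun_prop) ?_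
    intro ζ hζ h0
    have : ζ = w0 := sub_eq_zero.1 (pow_eq_zero_iff (two_ne_zero) |>.1 h0)
    exact hDF w0 hw0 (this ▸ hζ)
  · unfold bdryArc
    filter_upwards [ae_restrict_mem isClosed_frontier.measurableSet] with ζ hζ w hw
    rw [norm_div, norm_mul, F.nu_norm hζ, mul_one, norm_pow]
    have h1 : r / 2 ≤ ‖ζ - w‖ := by
      have h2 : r ≤ ‖ζ - w0‖ := by
        by_contra hcon
        push Not at hcon
        exact hDF ζ (hrD (by rw [mem_ball, dist_eq_norm]; exact hcon)) hζ
      rw [mem_ball, dist_eq_norm] at hw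
      have : ‖ζ - w0‖ ≤ ‖ζ - w‖ + ‖w - w0‖ := by
        calc ‖ζ - w0‖ = ‖(ζ - w) + (w - w0)‖ := by congr 1; ring
          _ ≤ _ := norm_add_le _ _
      linarith
    have := hM ζ hζ
    have hM0 := (norm_nonneg _).trans this
    gcongr
  · exact integrable_const _
  · unfold bdryArc
    filter_upwards [ae_restrict_mem isClosed_frontier.measurableSet] with ζ hζ w hw
    have hne : ζ - w ≠ 0 := by
      intro h0
      rw [sub_eq_zero] at h0
      exact hDF w (hrD (ball_subset_ball (by linarith) hw)) (h0 ▸ hζ)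
    have h1 : HasDerivAt (fun w => ζ - w) (-1) w := by
      simpa using (hasDerivAt_id w).const_sub ζ
    have h2 := (h1.inv hne).const_mul (b ζ * nu gr ζ)
    refine (h2.congr_deriv ?_)
    field_simp

/-- the holomorphic density -/
def cc (D : Set ℂ) (t : ℂ) (gr b : ℂ → ℂ) (w : ℂ) : ℂ := (w - t) * CI D gr b w + 1

lemma cc_t (b : ℂ → ℂ) : cc D t gr b t = 1 := by simp [cc]

lemma cc_holo (F : Full D t h P U Γ gr) {b : ℂ → ℂ} (hb : ContinuousOn b (frontier D)) : DifferentiableOn ℂ (cc D t gr b) D := by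
  unfold cc
  exact ((differentiableOn_id.sub (differentiableOn_const _)).mul (F.CI_holo hb)).add (differentiableOn_const _)

lemma M_lim (F : Full D t h P U Γ gr) {b : ℂ → ℂ} (hb : ContinuousOn b (frontier D))
    (hext : ∀ w, w ∉ closure D → CI D gr b w + 1 / (w - t) = 0) :
    Tendsto (fun ε => ∫ w in D, - thd ε (uu t h w) *
        (uu t h w * ‖cc D t gr b w‖ ^ 2 * ‖kk t P w‖ ^ 2 * vv h w ^ 2)) (𝓝[>] 0)
      (𝓝 (1 / 2 * ∫ w, ‖b w‖ ^ 2 * ‖gr w‖ ∂bdryArc D)) := by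
  classical
  set φ : ℂ → ℂ := fun w => if w ∈ D then ((‖CI D gr b w + 1 / (w - t)‖ ^ 2 * uu t h w ^ 2 : ℝ) : ℂ)
    else ((‖b w‖ ^ 2 : ℝ) : ℂ) with hφ
  have hDF : ∀ w ∈ frontier D, w ∉ D := by
    intro w hw; rw [F.S.op.frontier_eq] at hw; exact hw.2
  have hcont : ContinuousOn φ (closure D ∩ U) := by
    rintro p ⟨hp, hpU⟩
    by_cases hpD : p ∈ D
    · apply ContinuousAt.continuousWithinAt
      have hpt : p ≠ t := fun h => F.tU (h ▸ hpU)
      have h1 : ContinuousAt (fun w => ((‖CI D gr b w + 1 / (w - t)‖ ^ 2 * uu t h w ^ 2 : ℝ) : ℂ)) p := by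
        have c1 := (F.CI_holo hb).continuousOn.continuousAt (F.S.op.mem_nhds hpD)
        have c2 := F.S.ucont.continuousAt (F.S.op.mem_nhds hpD)
        have c3 : ContinuousAt (fun w : ℂ => 1 / (w - t)) p :=
          continuousAt_const.div (by fun_prop) (sub_ne_zero.2 hpt)
        exact Complex.continuous_ofReal.continuousAt.comp (((c1.add c3).norm.pow 2).mul (c2.pow 2))
      refine h1.congr ?_
      filter_upwards [F.S.op.mem_nhds hpD] with w hw
      simp [hφ, hw]
    · have hpF : p ∈ frontier D := by rw [F.S.op.frontier_eq]; exact ⟨hp, hpD⟩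
      have hval : φ p = ((‖b p‖ ^ 2 : ℝ) : ℂ) := by simp [hφ, hpD]
      have hsub : closure D ∩ U ⊆ D ∪ frontier D := by
        rintro w ⟨h1, -⟩
        by_cases hw : w ∈ D
        · exact Or.inl hw
        · right; rw [F.S.op.frontier_eq]; exact ⟨h1, hw⟩
      refine ContinuousWithinAt.mono (t := D ∪ frontier D) ?_ hsub
      refine ContinuousWithinAt.union ?_ ?_
      · have h1 := F.PL hb hext hpF
        have h2 : Tendsto (uu t h) (𝓝[D] p) (𝓝 1) := by
          have hΓ : ContinuousAt Γ p := (F.B.dΓ p (F.B.fU hpF)).continuousAt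
          have h3 : Tendsto (fun w => Real.exp (2 * Γ w)) (𝓝[D] p) (𝓝 1) := by
            have h4 : ContinuousAt (fun w => Real.exp (2 * Γ w)) p :=
              Real.continuous_exp.continuousAt.comp (continuousAt_const.mul hΓ)
            have h5 := h4.tendsto.mono_left (nhdsWithin_le_nhds (s := D))
            simpa [F.B.zero p hpF] using h5
          refine h3.congr' ?_
          filter_upwards [self_mem_nhdsWithin, nhdsWithin_le_nhds (F.B.Uop.mem_nhds (F.B.fU hpF))] with w hw hwU
          exact (F.u_eq w hw hwU).symm
        have h3 : Tendsto (fun w => ((‖CI D gr b w + 1 / (w - t)‖ ^ 2 * uu t h w ^ 2 : ℝ) : ℂ)) (𝓝[D] p)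
            (𝓝 ((‖b p‖ ^ 2 * 1 ^ 2 : ℝ) : ℂ)) :=
          (Complex.continuous_ofReal.tendsto _).comp ((h1.norm.pow 2).mul (h2.pow 2))
        unfold ContinuousWithinAt
        rw [hval]
        rw [one_pow, mul_one] at h3
        refine h3.congr' ?_
        filter_upwards [self_mem_nhdsWithin] with w hw
        simp [hφ, hw]
      · have h1 : ContinuousWithinAt (fun w => ((‖b w‖ ^ 2 : ℝ) : ℂ)) (frontier D) p :=
          Complex.continuous_ofReal.continuousAt.comp_continuousWithinAt ((hb p hpF).norm.pow 2)
        refine h1.congr (fun w hw => ?_) hval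
        simp [hφ, hDF w hw]
  have h1 := F.CL F.B.Uop F.B.fU hcont
  have e1 : (1 / 2 * ∫ w, φ w * ‖gr w‖ ∂bdryArc D : ℂ) =
      ((1 / 2 * ∫ w, ‖b w‖ ^ 2 * ‖gr w‖ ∂bdryArc D : ℝ) : ℂ) := by
    push_cast
    rw [← integral_complex_ofReal]
    congr 1
    unfold bdryArc
    refine setIntegral_congr_fun isClosed_frontier.measurableSet fun w hw => ?_
    simp [hφ, hDF w hw]
  rw [e1] at h1
  have h2 := (Complex.continuous_re.tendsto _).comp h1
  rw [Complex.ofReal_re] at h2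
  refine h2.congr fun ε => ?_
  simp only [Function.comp_apply]
  rw [← Complex.ofReal_re (∫ w in D, - thd ε (uu t h w) *
        (uu t h w * ‖cc D t gr b w‖ ^ 2 * ‖kk t P w‖ ^ 2 * vv h w ^ 2)), ← integral_complex_ofReal]
  congr 1
  refine setIntegral_congr_fun F.S.op.measurableSet fun w hw => ?_
  simp only [hφ, if_pos hw]
  rw [← Complex.ofReal_mul]
  congr 1
  unfold JJ
  by_cases hwt : w = t
  · subst hwt; simp [uu]
  · have hne : w - t ≠ 0 := sub_ne_zero.2 hwt
    have : cc D t gr b w = (w - t) * (CI D gr b w + 1 / (w - t)) := by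
      unfold cc; field_simp
    rw [this, norm_mul]
    unfold uu
    ring

lemma ineq (F : Full D t h P U Γ gr) {b f : ℂ → ℂ} (hb : ContinuousOn b (frontier D))
    (hext : ∀ w, w ∉ closure D → CI D gr b w + 1 / (w - t) = 0)
    (hf : DifferentiableOn ℂ f D) (hfi : IntegrableOn (fun w => ‖f w‖ ^ 2) D)
    {w0 : ℂ} (hw0 : w0 ∈ D) (hq0 : deriv (cc D t gr b) w0 + P w0 * cc D t gr b w0 ≠ 0) :
    Real.pi * (2 * ‖f t‖ - ∫ w in D, ‖f w‖ ^ 2) < 1 / Real.pi * (1 / 2 * ∫ w, ‖b w‖ ^ 2 * ‖gr w‖ ∂bdryArc D) := by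
  set c := cc D t gr b with hc
  have hch := F.cc_holo hb
  rw [← hc] at hch
  set q : ℂ → ℂ := fun w => deriv c w + P w * c w with hq
  have hqh : DifferentiableOn ℂ q D := (hch.deriv F.S.op).add (F.S.holo.mul hch)
  have hM := F.M_lim hb hext
  rw [← hc] at hM
  set M : ℝ → ℝ := fun ε => ∫ w in D, - thd ε (uu t h w) *
        (uu t h w * ‖c w‖ ^ 2 * ‖kk t P w‖ ^ 2 * vv h w ^ 2) with hMdef
  set L := 1 / 2 * ∫ w, ‖b w‖ ^ 2 * ‖gr w‖ ∂bdryArc D with hL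
  have uc := F.S.ucont
  have vc := F.S.vcont
  have kc := F.S.kholo.continuousOn
  have ci : ∀ ε > 0, ∀ g : ℂ → ℝ, ContinuousOn g D → (∀ w ∈ D, 1 - ε ≤ uu t h w → g w = 0) → IntegrableOn g D := by
    intro ε hε g hg h0
    refine integrableOn_of_compact F.S.op (F.S.cpt ε hε) (fun w hw => hw.1) hg ?_
    rintro w ⟨h1, h2⟩
    refine h0 w h1 ?_
    by_contra h3
    exact h2 ⟨h1, (not_le.1 h3).le⟩
  -- lower bound on the q-integral
  have hκ : ∃ κ > 0, ∀ᶠ ε in 𝓝[>] (0 : ℝ), κ ≤ ∫ w in D, Ps ε (uu t h w) * (vv h w * ‖q w‖ ^ 2) := by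
    have hu0 := F.S.lt_one w0 hw0
    set a := (1 + uu t h w0) / 2 with ha
    have ha1 : a < 1 := by rw [ha]; linarith
    have hua : uu t h w0 < a := by rw [ha]; linarith
    have hm0 : 0 < vv h w0 * ‖q w0‖ ^ 2 := by
      have := F.S.vpos w0
      have : 0 < ‖q w0‖ := norm_pos_iff.2 hq0
      positivity
    set m := vv h w0 * ‖q w0‖ ^ 2 / 2 with hm
    have hgc : ContinuousOn (fun w => vv h w * ‖q w‖ ^ 2) D := vc.mul (hqh.continuousOn.norm.pow 2)
    have e1 : ∀ᶠ w in 𝓝 w0, uu t h w < a :=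
      (uc.continuousAt (F.S.op.mem_nhds hw0)).eventually (Iio_mem_nhds hua)
    have e2 : ∀ᶠ w in 𝓝 w0, m < vv h w * ‖q w‖ ^ 2 :=
      (hgc.continuousAt (F.S.op.mem_nhds hw0)).eventually (Ioi_mem_nhds (by rw [hm]; linarith))
    obtain ⟨r, hr, hrs⟩ := Metric.mem_nhds_iff.1 (Filter.inter_mem (Filter.inter_mem e1 e2) (F.S.op.mem_nhds hw0))
    have hvol : 0 < (volume : Measure ℂ).real (ball w0 r) := by
      rw [measureReal_def]
      exact ENNReal.toReal_pos (measure_ball_pos _ _ hr).ne' measure_ball_lt_top.ne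
    refine ⟨(1 - a) / 2 * m * (volume : Measure ℂ).real (ball w0 r), by
      have : 0 < m := by rw [hm]; linarith
      have : 0 < (1 - a) / 2 := by linarith
      positivity, ?_⟩
    filter_upwards [small_ev (a := (1 + a) / 2) (by linarith)] with ε hε
    have hInt0 : IntegrableOn (fun w => Ps ε (uu t h w) * (vv h w * ‖q w‖ ^ 2)) D := by
      refine ci ε hε.1 _ ?_ ?_
      · have : Continuous (Ps ε) := continuous_iff_continuousAt.2 fun x => (Ps_deriv ε x).continuousAt
        exact (this.comp_continuousOn uc).mul hgc
      · intro w hw hw2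
        rw [Ps_zero hε.1 hw2, zero_mul]
    have hball : ball w0 r ⊆ D := fun w hw => (hrs hw).2
    calc (1 - a) / 2 * m * (volume : Measure ℂ).real (ball w0 r)
        = ∫ w in ball w0 r, (1 - a) / 2 * m := by
          rw [setIntegral_const, smul_eq_mul]; ring
      _ ≤ ∫ w in ball w0 r, Ps ε (uu t h w) * (vv h w * ‖q w‖ ^ 2) := by
          refine setIntegral_mono_on (integrableOn_const measure_ball_lt_top.ne) (hInt0.mono_set hball)
            measurableSet_ball ?_
          intro w hw
          obtain ⟨⟨h1, h2⟩, h3⟩ := hrs hw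
          simp only [mem_setOf_eq] at h1 h2
          have h4 := Ps_low hε.1 (F.S.lt_one w h3).le
          have : (1 - a) / 2 ≤ Ps ε (uu t h w) := by linarith
          have : 0 < m := by rw [hm]; linarith
          gcongr
          linarith
      _ ≤ _ := by
          refine setIntegral_mono_set hInt0 ?_ (Filter.Eventually.of_forall hball)
          filter_upwards [ae_restrict_mem F.S.op.measurableSet] with w hw
          have := Ps_nonneg (ε := ε) (F.S.lt_one w hw).le
          have := F.S.vpos w
          simp only [Pi.zero_apply]
          positivity
  obtain ⟨κ, hκ0, hκ⟩ := hκ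
  have main : ∀ᶠ ε in 𝓝[>] (0 : ℝ), 2 * Real.pi * (1 - 2 * ε) * ‖f t‖ ≤
      Real.pi * (∫ w in D, ‖f w‖ ^ 2) + 1 / Real.pi * (M ε - κ) := by
    filter_upwards [hκ, self_mem_nhdsWithin] with ε hε hε0
    have hε0 : 0 < ε := hε0
    have hI1 := F.S.I1 (cut hε0) hch hq
    have hI2 := F.S.I2 (cut hε0) (hf.mul hch)
    have hct : c t = 1 := cc_t b
    set g : ℂ → ℝ := fun w => ‖c w‖ * ‖kk t P w‖ * vv h w * th ε (uu t h w) with hg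
    have hgc : ContinuousOn g D :=
      ((hch.continuousOn.norm.mul kc.norm).mul vc).mul ((th_cont ε).comp_continuousOn uc)
    have hg0 : ∀ w ∈ D, 1 - ε ≤ uu t h w → g w = 0 := fun w hw h2 => by
      simp only [hg]; rw [th_zero hε0 h2, mul_zero]
    have hg2 : IntegrableOn (fun w => g w ^ 2) D :=
      ci ε hε0 _ (hgc.pow 2) fun w hw h2 => by simp [hg0 w hw h2]
    have hpi := Real.pi_pos
    -- norm bound
    have n1 : Real.pi * ‖f t‖ * Ps ε 0 ≤ ∫ w in D, (Real.pi / 2 * ‖f w‖ ^ 2 + 1 / (2 * Real.pi) * g w ^ 2) := by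
      have e1 : Real.pi * ‖f t‖ * Ps ε 0 = ‖∫ w in D, (f * c) w * conj (kk t P w) * vv h w * th ε (uu t h w)‖ := by
        rw [hI2, norm_mul, norm_mul, Complex.norm_real, Complex.norm_real, Real.norm_of_nonneg hpi.le,
          Real.norm_of_nonneg (Ps_nonneg zero_le_one), Pi.mul_apply, hct, mul_one]
      rw [e1]
      refine norm_integral_le_of_norm_le ((hfi.const_mul _).add (hg2.const_mul _)) ?_
      refine Eventually.of_forall fun w => ?_
      rw [norm_mul, norm_mul, norm_mul, Complex.norm_real, Complex.norm_real, RCLike.norm_conj, Pi.mul_apply, norm_mul,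
        Real.norm_of_nonneg (F.S.vpos w).le, Real.norm_of_nonneg (th_nonneg _ _)]
      have e2 : ‖f w‖ * ‖c w‖ * ‖kk t P w‖ * vv h w * th ε (uu t h w) = ‖f w‖ * g w := by simp only [hg]; ring
      rw [e2]
      have e3 : 0 ≤ (Real.pi * ‖f w‖ - g w) ^ 2 / (2 * Real.pi) := by positivity
      have e4 : (Real.pi * ‖f w‖ - g w) ^ 2 / (2 * Real.pi) =
        (Real.pi / 2 * ‖f w‖ ^ 2 + 1 / (2 * Real.pi) * g w ^ 2) - ‖f w‖ * g w := by field_simp; ring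
      linarith
    have n2 : ∫ w in D, (Real.pi / 2 * ‖f w‖ ^ 2 + 1 / (2 * Real.pi) * g w ^ 2) =
        Real.pi / 2 * (∫ w in D, ‖f w‖ ^ 2) + 1 / (2 * Real.pi) * ∫ w in D, g w ^ 2 := by
      rw [integral_add (hfi.const_mul _) (hg2.const_mul _), integral_const_mul, integral_const_mul]
    have n3 : ∫ w in D, g w ^ 2 ≤ ∫ w in D, th ε (uu t h w) * (‖c w‖ ^ 2 * ‖kk t P w‖ ^ 2 * vv h w ^ 2) := by
      refine setIntegral_mono_on hg2 ?_ F.S.op.measurableSet ?_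
      · refine ci ε hε0 _ ?_ fun w hw h2 => by rw [th_zero hε0 h2, zero_mul]
        exact ((th_cont ε).comp_continuousOn uc).mul
          (((hch.continuousOn.norm.pow 2).mul (kc.norm.pow 2)).mul (vc.pow 2))
      · intro w hw
        have t1 := th_le ε (uu t h w)
        have t2 := th_nonneg ε (uu t h w)
        have t3 : 0 ≤ ‖c w‖ ^ 2 * ‖kk t P w‖ ^ 2 * vv h w ^ 2 := by positivity
        simp only [hg]
        calc _ = th ε (uu t h w) * th ε (uu t h w) * (‖c w‖ ^ 2 * ‖kk t P w‖ ^ 2 * vv h w ^ 2) := by ring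
          _ ≤ th ε (uu t h w) * 1 * (‖c w‖ ^ 2 * ‖kk t P w‖ ^ 2 * vv h w ^ 2) := by gcongr
          _ = _ := by ring
    have n4 : ∫ w in D, g w ^ 2 ≤ M ε - κ := by
      simp only [hMdef]; linarith
    have n5 := Ps_low hε0 zero_le_one
    have n6 : Real.pi * ‖f t‖ * (1 - 2 * ε) ≤ Real.pi * ‖f t‖ * Ps ε 0 := by
      gcongr; linarith
    have n7 : 1 / (2 * Real.pi) * ∫ w in D, g w ^ 2 ≤ 1 / (2 * Real.pi) * (M ε - κ) := by gcongr
    have n8 : 1 / (2 * Real.pi) * (M ε - κ) = (1 / Real.pi * (M ε - κ)) / 2 := by field_simp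
    linarith
  have l1 : Tendsto (fun ε : ℝ => 2 * Real.pi * (1 - 2 * ε) * ‖f t‖) (𝓝[>] 0) (𝓝 (2 * Real.pi * (1 - 2 * 0) * ‖f t‖)) := by
    refine Tendsto.mono_left (Continuous.tendsto ?_ 0) nhdsWithin_le_nhds
    fun_prop
  have l2 : Tendsto (fun ε : ℝ => Real.pi * (∫ w in D, ‖f w‖ ^ 2) + 1 / Real.pi * (M ε - κ)) (𝓝[>] 0)
      (𝓝 (Real.pi * (∫ w in D, ‖f w‖ ^ 2) + 1 / Real.pi * (L - κ))) :=
    ((hM.sub_const κ).const_mul _).const_add _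
  have l3 := le_of_tendsto_of_tendsto l1 l2 main
  have hpi := Real.pi_pos
  have l4 : 0 < 1 / Real.pi * κ := by positivity
  linarith

end Full
end SaitohI

noncomputable section SaitohJ

lemma annulus_preconn {r : ℝ} (hr : 0 < r) : IsPreconnected {a : ℂ | r < ‖a‖ ∧ ‖a‖ < 1} := by
  have h1 : IsPreconnected (Complex.re ⁻¹' (Ioo (Real.log r) 0)) := by
    apply Convex.isPreconnected
    exact (convex_Ioo _ _).is_linear_preimage Complex.reLm.isLinear
  have h2 := h1.image Complex.exp Complex.continuous_exp.continuousOn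
  convert h2 using 1
  ext a
  constructor
  · rintro ⟨h3, h4⟩
    have ha : a ≠ 0 := norm_pos_iff.1 (hr.trans h3)
    refine ⟨Complex.log a, ?_, Complex.exp_log ha⟩
    rw [mem_preimage, Complex.log_re]
    exact ⟨Real.log_lt_log hr h3, Real.log_neg (hr.trans h3) h4⟩
  · rintro ⟨b, ⟨h3, h4⟩, rfl⟩
    rw [mem_setOf_eq, Complex.norm_exp]
    exact ⟨by rwa [← Real.log_lt_iff_lt_exp hr], by rwa [Real.exp_lt_one_iff]⟩

/-- a proper holomorphic map to the disc with one simple zero -/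
structure PM (D : Set ℂ) (F : ℂ → ℂ) (t : ℂ) : Prop where
  op : IsOpen D
  conn : IsConnected D
  mem : t ∈ D
  holo : DifferentiableOn ℂ F D
  uniq : ∀ w ∈ D, F w = 0 → w = t
  d0 : deriv F t ≠ 0
  lt : ∀ w ∈ D, ‖F w‖ < 1
  cpt : ∀ r < 1, IsCompact {w | w ∈ D ∧ ‖F w‖ ≤ r}

namespace PM
variable {D : Set ℂ} {F : ℂ → ℂ} {t : ℂ}

lemma an (M : PM D F t) : AnalyticOnNhd ℂ F D := M.holo.analyticOnNhd M.op

lemma openmap (M : PM D F t) : ∀ s ⊆ D, IsOpen s → IsOpen (F '' s) := by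
  rcases M.an.is_constant_or_isOpen M.conn.isPreconnected with h | h
  · exfalso
    obtain ⟨c, hc⟩ := h
    apply M.d0
    have : F =ᶠ[𝓝 t] fun _ => c := by
      filter_upwards [M.op.mem_nhds M.mem] with w hw using hc w hw
    rw [this.deriv_eq]; simp
  · exact h

lemma seq (M : PM D F t) {w : ℕ → ℂ} (hw : ∀ n, w n ∈ D) {a : ℂ} (ha : ‖a‖ < 1) (hl : Tendsto (fun n => F (w n)) atTop (𝓝 a)) :
    ∃ w0 ∈ D, ∃ φ : ℕ → ℕ, StrictMono φ ∧ Tendsto (w ∘ φ) atTop (𝓝 w0) ∧ F w0 = a := by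
  set r := (1 + ‖a‖) / 2 with hr
  have hK := M.cpt r (by rw [hr]; linarith)
  have hev : ∀ᶠ n in atTop, w n ∈ {w | w ∈ D ∧ ‖F w‖ ≤ r} := by
    have : ∀ᶠ n in atTop, ‖F (w n)‖ < r := hl.norm.eventually (Iio_mem_nhds (by rw [hr]; linarith))
    filter_upwards [this] with n hn using ⟨hw n, hn.le⟩
  obtain ⟨w0, hw0, φ, hφ, hφl⟩ := hK.tendsto_subseq' hev.frequently
  refine ⟨w0, hw0.1, φ, hφ, hφl, ?_⟩
  have h1 : Tendsto (fun n => F (w (φ n))) atTop (𝓝 (F w0)) :=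
    ((M.holo.continuousOn.continuousAt (M.op.mem_nhds hw0.1)).tendsto).comp hφl
  exact tendsto_nhds_unique h1 (hl.comp hφ.tendsto_atTop)

/-- values with two preimages -/
def T (D : Set ℂ) (F : ℂ → ℂ) : Set ℂ := {a | ∃ w1 ∈ D, ∃ w2 ∈ D, w1 ≠ w2 ∧ F w1 = a ∧ F w2 = a}

lemma T_open (M : PM D F t) : IsOpen (T D F) := by
  rw [isOpen_iff_mem_nhds]
  rintro a ⟨w1, h1, w2, h2, hne, e1, e2⟩
  obtain ⟨N1, N2, o1, o2, m1, m2, hd⟩ := t2_separation hne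
  have i1 : F '' (N1 ∩ D) ∈ 𝓝 a :=
    (M.openmap _ inter_subset_right (o1.inter M.op)).mem_nhds ⟨w1, ⟨m1, h1⟩, e1⟩
  have i2 : F '' (N2 ∩ D) ∈ 𝓝 a :=
    (M.openmap _ inter_subset_right (o2.inter M.op)).mem_nhds ⟨w2, ⟨m2, h2⟩, e2⟩
  filter_upwards [i1, i2]
  rintro x ⟨y1, ⟨hy1, hy1D⟩, ey1⟩ ⟨y2, ⟨hy2, hy2D⟩, ey2⟩
  refine ⟨y1, hy1D, y2, hy2D, ?_, ey1, ey2⟩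
  rintro rfl
  exact disjoint_left.1 hd hy1 hy2

lemma T_closed (M : PM D F t) {a : ℂ} (ha : ‖a‖ < 1) (hcl : a ∈ closure (T D F)) (hcrit : ∀ w ∈ D, F w = a → deriv F w ≠ 0) :
    a ∈ T D F := by
  obtain ⟨x, hx, hxa⟩ := mem_closure_iff_seq_limit.1 hcl
  choose w1 h1 w2 h2 hne e1 e2 using hx
  have l1 : Tendsto (fun n => F (w1 n)) atTop (𝓝 a) := by simpa only [e1] using hxa
  obtain ⟨y1, hy1, φ, hφ, lφ, ey1⟩ := M.seq h1 ha l1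
  have l2 : Tendsto (fun n => F (w2 (φ n))) atTop (𝓝 a) := by
    simp only [e2]; exact hxa.comp hφ.tendsto_atTop
  obtain ⟨y2, hy2, ψ, hψ, lψ, ey2⟩ := M.seq (fun n => h2 (φ n)) ha l2
  refine ⟨y1, hy1, y2, hy2, ?_, ey1, ey2⟩
  rintro rfl
  have hs : HasStrictDerivAt F (deriv F y1) y1 := (M.an y1 hy1).hasStrictDerivAt
  have hinj : ∃ N ∈ 𝓝 y1, InjOn F N := by
    have := hs.hasStrictFDerivAt_equiv (hcrit y1 hy1 ey1)
    exact ⟨_, this.toOpenPartialHomeomorph F |>.open_source.mem_nhds this.mem_toOpenPartialHomeomorph_source,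
      (this.toOpenPartialHomeomorph F).injOn⟩
  obtain ⟨N, hN, hinj⟩ := hinj
  have q1 : ∀ᶠ n in atTop, w1 (φ (ψ n)) ∈ N := (lφ.comp hψ.tendsto_atTop).eventually hN
  have q2 : ∀ᶠ n in atTop, w2 (φ (ψ n)) ∈ N := lψ.eventually hN
  obtain ⟨n, hn1, hn2⟩ := (q1.and q2).exists
  exact hne (φ (ψ n)) (hinj hn1 hn2 (by rw [e1, e2]))

lemma crit_countable (M : PM D F t) : {w | w ∈ D ∧ deriv F w = 0}.Countable := by
  have hd : AnalyticOnNhd ℂ (deriv F) D := M.an.deriv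
  rcases hd.eqOn_zero_or_eventually_ne_zero_of_preconnected M.conn.isPreconnected with h | h
  · exact absurd (h M.mem) M.d0
  · have h1 : IsDiscrete ({w | deriv F w = 0} ∩ D) := by
      apply isDiscrete_of_codiscreteWithin
      exact h
    have h2 := (HereditarilyLindelofSpace.isLindelof ({w | deriv F w = 0} ∩ D)).countable_of_isDiscrete h1
    refine h2.mono ?_
    intro w hw
    exact ⟨hw.2, hw.1⟩

lemma exists_dir (M : PM D F t) : ∃ e : ℂ, ‖e‖ = 1 ∧ ∀ s : ℝ, 0 < s → ∀ w ∈ D, F w = s * e → deriv F w ≠ 0 := by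
  have hc : ((fun w => Complex.arg (F w)) '' {w | w ∈ D ∧ deriv F w = 0}).Countable := M.crit_countable.image _
  have hnc : ¬ (Ioo (0 : ℝ) 1).Countable := by
    intro hcc
    have h0 := hcc.measure_zero volume
    rw [Real.volume_Ioo] at h0
    norm_num at h0
  obtain ⟨φ, hφ, hφn⟩ : ∃ φ ∈ Ioo (0 : ℝ) 1, φ ∉ (fun w => Complex.arg (F w)) '' {w | w ∈ D ∧ deriv F w = 0} := by
    by_contra hcon
    push Not at hcon
    exact hnc (hc.mono hcon)
  refine ⟨Complex.exp (φ * I), Complex.norm_exp_ofReal_mul_I φ, ?_⟩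
  intro s hs w hw hF hd
  apply hφn
  refine ⟨w, ⟨hw, hd⟩, ?_⟩
  simp only []
  rw [hF, Complex.arg_real_mul _ hs, Complex.arg_exp_mul_I, toIocMod_eq_self]
  have := Real.pi_gt_three
  constructor <;> linarith [hφ.1, hφ.2]

lemma ray (M : PM D F t) {e : ℂ} (he : ‖e‖ = 1) (hcrit : ∀ s : ℝ, 0 < s → ∀ w ∈ D, F w = s * e → deriv F w ≠ 0)
    {r : ℝ} (hr0 : 0 < r) (hr1 : r < 1) : (r : ℂ) * e ∉ T D F := by
  intro hT
  have hcont : Continuous (fun s : ℝ => (s : ℂ) * e) := by fun_prop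
  set u := (fun s : ℝ => (s : ℂ) * e) ⁻¹' (T D F) with hu
  have hu_open : IsOpen u := M.T_open.preimage hcont
  have hsub : Icc 0 r ⊆ u := by
    refine isPreconnected_Icc.subset_of_closure_inter_subset hu_open ⟨r, ⟨hr0.le, le_rfl⟩, hT⟩ ?_
    rintro s ⟨hs, hs0, hsr⟩
    have h1 : (s : ℂ) * e ∈ closure (T D F) := hcont.closure_preimage_subset _ hs
    refine M.T_closed ?_ h1 ?_
    · rw [norm_mul, he, Complex.norm_real, Real.norm_of_nonneg hs0]; linarith
    · intro w hw hF
      rcases hs0.eq_or_lt with h | h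
      · rw [← h] at hF
        simp only [Complex.ofReal_zero, zero_mul] at hF
        rw [M.uniq w hw hF]; exact M.d0
      · exact hcrit s h w hw hF
  obtain ⟨w1, h1, w2, h2, hne, e1, e2⟩ := hsub ⟨le_rfl, hr0.le⟩
  simp only [Complex.ofReal_zero, zero_mul] at e1 e2
  exact hne ((M.uniq w1 h1 e1).trans (M.uniq w2 h2 e2).symm)

lemma cover (M : PM D F t) {r : ℝ} (hr0 : 0 < r) (hr1 : r < 1) {O1 O2 : Set ℂ} (ho1 : IsOpen O1) (ho2 : IsOpen O2) (hd : Disjoint O1 O2)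
    (hout : ∀ w ∈ D, r < ‖F w‖ → w ∈ O1 ∪ O2) {p : ℂ} (hp : p ∈ frontier D) (hpO : p ∈ O1) :
    {a : ℂ | r < ‖a‖ ∧ ‖a‖ < 1} ⊆ F '' {w | w ∈ D ∧ w ∈ O1 ∧ r < ‖F w‖} := by
  set W := {w | w ∈ D ∧ w ∈ O1 ∧ r < ‖F w‖} with hW
  have hWo : IsOpen W := by
    have h1 : IsOpen (D ∩ (fun w => ‖F w‖) ⁻¹' (Ioi r)) :=
      M.holo.continuousOn.norm.isOpen_inter_preimage M.op isOpen_Ioi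
    have h2 : W = O1 ∩ (D ∩ (fun w => ‖F w‖) ⁻¹' (Ioi r)) := by
      ext w; simp only [hW, mem_setOf_eq, mem_inter_iff, mem_preimage, mem_Ioi]; tauto
    rw [h2]; exact ho1.inter h1
  have hpD : p ∉ D := by rw [M.op.frontier_eq] at hp; exact hp.2
  refine (annulus_preconn hr0).subset_of_closure_inter_subset
    (M.openmap W (fun w hw => hw.1) hWo) ?_ ?_
  · have hN : O1 ∩ {w | w ∈ D ∧ ‖F w‖ ≤ r}ᶜ ∈ 𝓝 p :=
      (ho1.inter (M.cpt r hr1).isClosed.isOpen_compl).mem_nhds ⟨hpO, fun h => hpD h.1⟩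
    obtain ⟨w, ⟨hw1, hw2⟩, hwD⟩ := mem_closure_iff_nhds.1 (frontier_subset_closure hp) _ hN
    have hwr : r < ‖F w‖ := by
      by_contra hcon
      exact hw2 ⟨hwD, not_lt.1 hcon⟩
    exact ⟨F w, ⟨hwr, M.lt w hwD⟩, ⟨w, ⟨hwD, hw1, hwr⟩, rfl⟩⟩
  · rintro a ⟨hcl, har, ha1⟩
    obtain ⟨x, hx, hxa⟩ := mem_closure_iff_seq_limit.1 hcl
    choose w hw ew using hx
    obtain ⟨y, hy, φ, hφ, lφ, ey⟩ := M.seq (fun n => (hw n).1) ha1 (by simpa only [ew] using hxa)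
    have hyr : r < ‖F y‖ := by rw [ey]; exact har
    refine ⟨y, ⟨hy, ?_, hyr⟩, ey⟩
    rcases hout y hy hyr with h | h
    · exact h
    · exfalso
      obtain ⟨n, hn⟩ := (lφ.eventually (ho2.mem_nhds h)).exists
      exact disjoint_left.1 hd (hw (φ n)).2.1 hn

lemma false_of_split (M : PM D F t) (hbd : Bornology.IsBounded D) {E1 E2 : Set ℂ} (hE1 : IsClosed E1) (hE2 : IsClosed E2)
    (hd : Disjoint E1 E2) (hun : frontier D = E1 ∪ E2) (hn1 : E1.Nonempty) (hn2 : E2.Nonempty) : False := by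
  obtain ⟨O1, O2, o1, o2, s1, s2, hO⟩ := normal_separation hE1 hE2 hd
  have hKD : closure D \ (O1 ∪ O2) ⊆ D := by
    rintro w ⟨h1, h2⟩
    by_contra h3
    have : w ∈ frontier D := by rw [M.op.frontier_eq]; exact ⟨h1, h3⟩
    rw [hun] at this
    exact h2 (this.imp (fun h => s1 h) (fun h => s2 h))
  have hK : IsCompact (closure D \ (O1 ∪ O2)) := hbd.isCompact_closure.diff (o1.union o2)
  obtain ⟨r, hr0, hr1, hr⟩ : ∃ r : ℝ, 0 < r ∧ r < 1 ∧ ∀ w ∈ closure D \ (O1 ∪ O2), ‖F w‖ ≤ r := by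
    rcases (closure D \ (O1 ∪ O2)).eq_empty_or_nonempty with h | h
    · exact ⟨1 / 2, by norm_num, by norm_num, by rw [h]; simp⟩
    · obtain ⟨w, hw, hmax⟩ := hK.exists_isMaxOn h (M.holo.continuousOn.norm.mono hKD)
      have := M.lt w (hKD hw)
      refine ⟨(1 + ‖F w‖) / 2, by positivity, by linarith, fun y hy => ?_⟩
      have : ‖F y‖ ≤ ‖F w‖ := hmax hy
      linarith
  have hout : ∀ w ∈ D, r < ‖F w‖ → w ∈ O1 ∪ O2 := by
    intro w hw hlt
    by_contra hcon
    exact absurd (hr w ⟨subset_closure hw, hcon⟩) (not_le.2 hlt)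
  obtain ⟨p1, hp1⟩ := hn1
  obtain ⟨p2, hp2⟩ := hn2
  have c1 := M.cover hr0 hr1 o1 o2 hO hout (hun ▸ Or.inl hp1 : p1 ∈ frontier D) (s1 hp1)
  have c2 := M.cover hr0 hr1 o2 o1 hO.symm (fun w hw h => (hout w hw h).symm)
    (hun ▸ Or.inr hp2 : p2 ∈ frontier D) (s2 hp2)
  obtain ⟨e, he, hcrit⟩ := M.exists_dir
  set r' := (1 + r) / 2 with hr'
  have h0 : 0 < r' := by positivity
  have h1 : r' < 1 := by rw [hr']; linarith
  have hm : (r' : ℂ) * e ∈ {a : ℂ | r < ‖a‖ ∧ ‖a‖ < 1} := by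
    rw [mem_setOf_eq, norm_mul, he, Complex.norm_real, Real.norm_of_nonneg h0.le]
    constructor
    · rw [hr']; linarith
    · linarith
  obtain ⟨w1, ⟨a1, a2, -⟩, a3⟩ := c1 hm
  obtain ⟨w2, ⟨b1, b2, -⟩, b3⟩ := c2 hm
  refine M.ray he hcrit h0 h1 ⟨w1, a1, w2, b1, ?_, a3, b3⟩
  rintro rfl
  exact disjoint_left.1 hO a2 b2

end PM

/-- equality case: the density produces a proper map -/
lemma Setup.exists_PM {D : Set ℂ} {t : ℂ} {h : ℂ → ℝ} {P : ℂ → ℂ} (S : Setup D t h P) {c : ℂ → ℂ}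
    (hc : DifferentiableOn ℂ c D) (hct : c t = 1) (hq : ∀ w ∈ D, deriv c w + P w * c w = 0) :
    ∃ F, PM D F t := by
  set s : ℂ → ℂ := fun w => c w * conj (c w) * vv h w with hs
  have hW : ∀ w ∈ D, HasW s 0 0 w := by
    intro w hw
    have h1 := (S.Wholo hc hw).mul (S.Wholo hc hw).conj
    have h2 := h1.mul (S.Wv hw)
    have q := hq w hw
    have q' : conj (deriv c w) + conj (P w) * conj (c w) = 0 := by
      rw [← map_mul, ← map_add, q, map_zero]
    refine h2.congr_val ?_ ?_
    · simp only [map_zero, mul_zero, add_zero]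
      linear_combination (conj (c w) * vv h w) * q
    · try simp only [map_zero]
      linear_combination (c w * vv h w) * q'
  have hconst : ∀ w ∈ D, s w = s t := by
    intro w hw
    refine S.op.is_const_of_fderiv_eq_zero (𝕜 := ℝ) S.conn.isPreconnected (f := s) ?_ ?_ hw S.mem
    · intro x hx
      exact (HasFDerivAt.differentiableAt (hW x hx)).differentiableWithinAt
    · intro x hx
      have : HasFDerivAt s (WD 0 0) x := hW x hx
      rw [this.fderiv]
      ext y <;> simp [WD_apply]
  have hval : ∀ w ∈ D, ‖c w‖ ^ 2 * vv h w = vv h t := by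
    intro w hw
    have h1 := hconst w hw
    simp only [hs, Complex.mul_conj, Complex.normSq_eq_norm_sq, hct] at h1
    have h2 : ((‖c w‖ ^ 2 * vv h w : ℝ) : ℂ) = ((‖(1:ℂ)‖ ^ 2 * vv h t : ℝ) : ℂ) := by
      push_cast at h1 ⊢; exact h1
    have h3 := Complex.ofReal_inj.1 h2
    simpa using h3
  have hvt := S.vpos t
  have hc0 : ∀ w ∈ D, c w ≠ 0 := by
    intro w hw h0
    have := hval w hw
    rw [h0] at this
    simp at this
    linarith
  set a : ℝ := Real.sqrt (vv h t) with ha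
  have ha0 : 0 < a := Real.sqrt_pos.2 hvt
  have ha2 : a ^ 2 = vv h t := Real.sq_sqrt hvt.le
  have haC : (a : ℂ) ≠ 0 := by exact_mod_cast ha0.ne'
  set F : ℂ → ℂ := fun w => a * (w - t) / c w with hF
  have hnorm : ∀ w ∈ D, ‖F w‖ ^ 2 = uu t h w := by
    intro w hw
    have h1 := hval w hw
    have h2 : 0 < ‖c w‖ := norm_pos_iff.2 (hc0 w hw)
    simp only [hF]
    rw [norm_div, norm_mul, Complex.norm_real, Real.norm_of_nonneg ha0.le, div_pow, mul_pow, ha2, ← h1]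
    unfold uu
    field_simp
  have hholo : DifferentiableOn ℂ F D := by
    refine DifferentiableOn.div ?_ hc hc0
    fun_prop
  refine ⟨F, S.op, S.conn, S.mem, hholo, ?_, ?_, ?_, ?_⟩
  · intro w hw h0
    simp only [hF, div_eq_zero_iff, mul_eq_zero, haC, hc0 w hw, false_or, or_false] at h0
    exact sub_eq_zero.1 h0
  · have h1 : HasDerivAt (fun w => (a : ℂ) * (w - t)) a t := by
      simpa using ((hasDerivAt_id t).sub_const t).const_mul (a : ℂ)
    have h2 := h1.div (hc.differentiableAt (S.op.mem_nhds S.mem)).hasDerivAt (hc0 t S.mem)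
    have h3 : deriv F t = _ := h2.deriv
    rw [h3, hct]
    simpa using haC
  · intro w hw
    have h1 := hnorm w hw
    have h2 := S.lt_one w hw
    nlinarith [norm_nonneg (F w)]
  · intro r hr
    rcases lt_or_ge r 0 with h0 | h0
    · have : {w | w ∈ D ∧ ‖F w‖ ≤ r} = ∅ := by
        ext w
        simp only [mem_setOf_eq, mem_empty_iff_false, iff_false, not_and, not_le]
        intro _; exact h0.trans_le (norm_nonneg _)
      rw [this]; exact isCompact_empty
    · have h1 := S.cpt (1 - r ^ 2) (by nlinarith)
      have : {w | w ∈ D ∧ ‖F w‖ ≤ r} = {w | w ∈ D ∧ uu t h w ≤ 1 - (1 - r ^ 2)} := by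
        ext w
        simp only [mem_setOf_eq]
        refine and_congr_right fun hw => ?_
        rw [← hnorm w hw, sub_sub_cancel]
        exact (pow_le_pow_iff_left₀ (norm_nonneg _) h0 two_ne_zero).symm
      rw [this]; exact h1

end SaitohJ

noncomputable section SaitohK

/-- complex gradient of `u` -/
def grd (u : ℂ → ℝ) (w : ℂ) : ℂ := (fderiv ℝ u w 1 : ℂ) + I * (fderiv ℝ u w I : ℂ)

lemma RD_grd (u : ℂ → ℝ) (w : ℂ) : RD (grd u w) = fderiv ℝ u w := by
  ext x
  have hx : x = x.re • (1 : ℂ) + x.im • I := by apply Complex.ext <;> simp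
  conv_rhs => rw [hx, map_add, map_smul, map_smul]
  simp [RD_apply, grd]
  ring

lemma HasW_of_RD {u : ℂ → ℝ} {g w : ℂ} (h : HasFDerivAt u (RD g) w) :
    HasW (fun x => (u x : ℂ)) (conj g / 2) (g / 2) w := by
  have h1 : HasFDerivAt (fun x => (u x : ℂ)) (Complex.ofRealCLM.comp (RD g)) w :=
    Complex.ofRealCLM.hasFDerivAt.comp w h
  refine h1.congr_fderiv ?_
  ext
  · rw [WD_apply]
    simp only [ContinuousLinearMap.comp_apply, RD_apply, Complex.ofRealCLM_apply]
    apply Complex.ext <;> simp <;> ring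

lemma harm_local {h : ℂ → ℝ} {D : Set ℂ} (hh : HarmonicOnD h D) {w : ℂ} (hw : w ∈ D) :
    ∃ r > 0, ball w r ⊆ D ∧ ∃ f : ℂ → ℂ, DifferentiableOn ℂ f (ball w r) ∧
      ∀ x ∈ ball w r, HasW (fun y => (h y : ℂ)) (deriv f x / 2) (conj (deriv f x) / 2) x ∧
        conj (grd h x) = deriv f x := by
  obtain ⟨r, hr, hb, f, hf, he⟩ := hh w hw
  refine ⟨r, hr, hb, f, hf, ?_⟩
  intro x hx
  have hxn : ball w r ∈ 𝓝 x := isOpen_ball.mem_nhds hx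
  have hd : HasDerivAt f (deriv f x) x := ((hf x hx).differentiableAt hxn).hasDerivAt
  have h1 : HasFDerivAt (fun y => (f y).re) (RD (conj (deriv f x))) x := by
    have := Complex.reCLM.hasFDerivAt.comp x (hd.hasFDerivAt.restrictScalars ℝ)
    refine this.congr_fderiv ?_
    ext x
    simp [RD_apply]
    ring
  have h2 : HasFDerivAt h (RD (conj (deriv f x))) x := by
    refine h1.congr_of_eventuallyEq ?_
    filter_upwards [hxn] with y hy using he y hy
  refine ⟨?_, ?_⟩
  · have := HasW_of_RD h2
    simpa using this
  · unfold grd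
    rw [h2.fderiv]
    apply Complex.ext <;> simp [RD_apply]

lemma mk_setup {n : ℕ} {D : Set ℂ} (hD : IsRegularRegion n D) {z : ℂ} (hz : z ∈ D) {G : ℂ → EReal}
    (hG : IsGreenFunction D z G) {h : ℂ → ℝ} (hh : HarmonicOnD h D)
    (hl : ∀ w ∈ D \ {z}, G w = ((Real.log (dist w z) + h w : ℝ) : EReal)) :
    Setup D z h (fun w => conj (grd h w)) := by
  obtain ⟨hop, hconn, hbdd, -⟩ := hD
  have huG : ∀ w ∈ D, w ≠ z → uu z h w = Real.exp (2 * (G w).toReal) := by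
    intro w hw hne
    rw [hl w ⟨hw, hne⟩, EReal.toReal_coe, dist_eq_norm, mul_add, Real.exp_add]
    have hp : 0 < ‖w - z‖ := norm_pos_iff.2 (sub_ne_zero.2 hne)
    have : Real.exp (2 * Real.log ‖w - z‖) = ‖w - z‖ ^ 2 := by
      rw [two_mul, Real.exp_add, Real.exp_log hp]; ring
    rw [this]; rfl
  have hW : ∀ w ∈ D, HasW (fun x => (h x : ℂ)) (conj (grd h w) / 2) (conj (conj (grd h w)) / 2) w := by
    intro w hw
    obtain ⟨r, hr, hb, f, hf, he⟩ := harm_local hh hw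
    have := he w (mem_ball_self hr)
    rw [this.2]; exact this.1
  have hcont : ContinuousOn (uu z h) D := by
    intro w hw
    have h1 := (hW w hw).continuousAt
    have h2 : ContinuousAt h w := by
      have := Complex.continuous_re.continuousAt.comp h1
      simpa [Function.comp_def] using this
    refine ContinuousAt.continuousWithinAt ?_
    unfold uu vv
    fun_prop
  have hlt : ∀ w ∈ D, uu z h w < 1 := by
    intro w hw
    by_cases hwz : w = z
    · subst hwz; simp [uu]
    · rw [huG w hw hwz, Real.exp_lt_one_iff]
      have h1 := hG.neg w hw
      rw [hl w ⟨hw, hwz⟩] at h1 ⊢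
      rw [EReal.toReal_coe]
      have : Real.log (dist w z) + h w < 0 := by exact_mod_cast h1
      linarith
  refine ⟨hop, hconn, hbdd, hz, ?_, hW, hlt, ?_⟩
  · intro w hw
    obtain ⟨r, hr, hb, f, hf, he⟩ := harm_local hh hw
    have h1 : DifferentiableOn ℂ (deriv f) (ball w r) := hf.deriv isOpen_ball
    have h2 : DifferentiableAt ℂ (deriv f) w :=
      (h1 w (mem_ball_self hr)).differentiableAt (isOpen_ball.mem_nhds (mem_ball_self hr))
    refine DifferentiableAt.differentiableWithinAt ?_
    refine h2.congr_of_eventuallyEq ?_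
    filter_upwards [ball_mem_nhds w hr] with x hx using (he x hx).2
  · intro ε hε
    refine Metric.isCompact_of_isClosed_isBounded ?_ (hbdd.subset fun w hw => hw.1)
    refine isClosed_of_closure_subset ?_
    intro p hp
    have hpc : p ∈ closure D := closure_mono (fun w hw => hw.1) hp
    have hne : (𝓝[{w | w ∈ D ∧ uu z h w ≤ 1 - ε}] p).NeBot := mem_closure_iff_nhdsWithin_neBot.1 hp
    have hle : 𝓝[{w | w ∈ D ∧ uu z h w ≤ 1 - ε}] p ≤ 𝓝[D] p := nhdsWithin_mono _ fun w hw => hw.1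
    have hev : ∀ᶠ w in 𝓝[{w | w ∈ D ∧ uu z h w ≤ 1 - ε}] p, uu z h w ≤ 1 - ε := by
      filter_upwards [self_mem_nhdsWithin] with w hw using hw.2
    by_cases hpD : p ∈ D
    · exact ⟨hpD, le_of_tendsto ((hcont p hpD).tendsto.mono_left hle) hev⟩
    · exfalso
      have hpf : p ∈ frontier D := by rw [hop.frontier_eq]; exact ⟨hpc, hpD⟩
      have h1 := hG.bdry p hpf
      have h2 : Tendsto (fun w => Real.exp (2 * (G w).toReal)) (𝓝[D] p) (𝓝 1) := by
        have := (Real.continuous_exp.tendsto _).comp (h1.const_mul 2)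
        simpa [Function.comp_def] using this
      have h3 : Tendsto (uu z h) (𝓝[D] p) (𝓝 1) := by
        refine h2.congr' ?_
        have : ∀ᶠ w in 𝓝[D] p, w ≠ z :=
          mem_nhdsWithin_of_mem_nhds (isOpen_ne.mem_nhds (fun e => hpD (e ▸ hz)))
        filter_upwards [this, self_mem_nhdsWithin] with w hw hwD using (huG w hwD hw).symm
      have := le_of_tendsto (h3.mono_left hle) hev
      linarith

lemma mk_full {n : ℕ} {D : Set ℂ} (hD : IsRegularRegion n D) {z : ℂ} (hz : z ∈ D) {G : ℂ → EReal}
    (hG : IsGreenFunction D z G) {h : ℂ → ℝ} (hh : HarmonicOnD h D)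
    (hl : ∀ w ∈ D \ {z}, G w = ((Real.log (dist w z) + h w : ℝ) : EReal))
    {ν : ℂ → ℂ}
    {U : Set ℂ} (hU : IsOpen U) (hUbd : frontier D ⊆ U) (hUz : z ∉ U)
    {GC1 : ℂ → ℝ} (hGC1 : ContDiffOn ℝ 1 GC1 U)
    (hGeq : ∀ w ∈ U ∩ closure D, G w = ((GC1 w : ℝ) : EReal))
    (hνpos : ∀ w ∈ frontier D, 0 < fderiv ℝ GC1 w (ν w)) :
    Full D z h (fun w => conj (grd h w)) U GC1 (grd GC1) := by
  have S := mk_setup hD hz hG hh hl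
  have hst : ∀ w ∈ U, HasStrictFDerivAt GC1 (RD (grd GC1 w)) w := by
    intro w hw
    rw [RD_grd]
    exact (hGC1.contDiffAt (hU.mem_nhds hw)).hasStrictFDerivAt (by norm_num)
  have hcf : ContinuousOn (fderiv ℝ GC1) U := hGC1.continuousOn_fderiv_of_isOpen hU le_rfl
  have hB : Bdry D U GC1 (grd GC1) := by
    refine ⟨S.op, S.bdd, hU, hUbd, ?_, hst, ?_, ?_, ?_⟩
    · unfold grd
      have h1 : ContinuousOn (fun w => fderiv ℝ GC1 w 1) U := hcf.clm_apply continuousOn_const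
      have h2 : ContinuousOn (fun w => fderiv ℝ GC1 w I) U := hcf.clm_apply continuousOn_const
      fun_prop
    · intro p hp
      have h1 := hG.bdry p hp
      have hc : ContinuousAt GC1 p := (hst p (hUbd hp)).hasFDerivAt.continuousAt
      have hne : (𝓝[D] p).NeBot := mem_closure_iff_nhdsWithin_neBot.1 (frontier_subset_closure hp)
      have h2 : Tendsto (fun w => (G w).toReal) (𝓝[D] p) (𝓝 (GC1 p)) := by
        refine (hc.tendsto.mono_left nhdsWithin_le_nhds).congr' ?_
        filter_upwards [self_mem_nhdsWithin, mem_nhdsWithin_of_mem_nhds (hU.mem_nhds (hUbd hp))] with w hw hwU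
        rw [hGeq w ⟨hwU, subset_closure hw⟩, EReal.toReal_coe]
      exact tendsto_nhds_unique h2 h1
    · intro w hw hwU
      have := hG.neg w hw
      rw [hGeq w ⟨hwU, subset_closure hw⟩] at this
      exact_mod_cast this
    · intro w hw h0
      have := hνpos w hw
      rw [← RD_grd, h0, RD_apply] at this
      simp at this
  have hu : ∀ w ∈ D, w ∈ U → uu z h w = Real.exp (2 * GC1 w) := by
    intro w hw hwU
    have hne : w ≠ z := fun e => hUz (e ▸ hwU)
    have h1 := hl w ⟨hw, hne⟩
    rw [hGeq w ⟨hwU, subset_closure hw⟩] at h1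
    have h1' : GC1 w = Real.log (dist w z) + h w := by exact_mod_cast h1
    rw [h1', dist_eq_norm, mul_add, Real.exp_add]
    have hp : 0 < ‖w - z‖ := norm_pos_iff.2 (sub_ne_zero.2 hne)
    have : Real.exp (2 * Real.log ‖w - z‖) = ‖w - z‖ ^ 2 := by
      rw [two_mul, Real.exp_add, Real.exp_log hp]; ring
    rw [this]; rfl
  refine ⟨S, hB, hUz, hu, ?_⟩
  intro w hw hwU
  have hne : w - z ≠ 0 := sub_ne_zero.2 fun e => hUz (e ▸ hwU)
  have h1 := S.Wu hw
  have h2 := HasW_of_RD (hst w hwU).hasFDerivAt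
  have h3 : HasDerivAt (fun x : ℝ => Real.exp (2 * x)) (Real.exp (2 * GC1 w) * 2) (GC1 w) := by
    have := ((hasDerivAt_id (GC1 w)).const_mul 2).exp
    simpa using this
  have h4 := h2.real_comp h3
  have h5 := h4.congr (G := fun x => (uu z h x : ℂ)) (by
    filter_upwards [S.op.mem_nhds hw, hU.mem_nhds hwU] with x hx hxU
    rw [hu x hx hxU])
  have h6 := (h1.unique h5).1
  rw [← hu w hw hwU] at h6
  push_cast at h6
  rw [S.uu_eq] at h6
  have hv : (vv h w : ℂ) ≠ 0 := by exact_mod_cast (S.vpos w).ne'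
  have hc : conj (w - z) ≠ 0 := (map_ne_zero _).2 hne
  have h7 : (conj (w - z) * vv h w) * kk z (fun w => conj (grd h w)) w =
      (conj (w - z) * vv h w) * (conj (grd GC1 w) * (w - z)) := by linear_combination h6
  exact (mul_left_cancel₀ (mul_ne_zero hc hv) h7).symm

lemma normal_eq {D U : Set ℂ} {Γ : ℂ → ℝ} {gr ν : ℂ → ℂ} (B : Bdry D U Γ gr)
    (hν : IsOutwardUnitNormal D ν) {p : ℂ} (hp : p ∈ frontier D) (hpos : 0 < RD (gr p) (ν p)) :
    RD (gr p) (ν p) = ‖gr p‖ := by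
  obtain ⟨R, δ, C, hpR⟩ := B.exists_chart hp
  have hm : p ∈ Chart.sg R '' {y : ℝ | |y - (conj (gr p) * p).im| < δ} := by
    rw [C.sg_image]; exact ⟨hp, hpR⟩
  obtain ⟨y, hy, hyp⟩ := hm
  have hd := C.sg_deriv B hy
  rw [hyp] at hd
  have hdet := C.det_pos hpR
  set r : ℝ := (conj (gr p) * gr p).re⁻¹ with hr
  have hr0 : r ≠ 0 := (inv_pos.2 hdet).ne'
  have hd' : HasDerivAt (fun s : ℝ => Chart.sg R (y + s)) ((r : ℂ) * (I * gr p)) 0 := by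
    have : HasDerivAt (fun s : ℝ => y + s) 1 0 := (hasDerivAt_id (0 : ℝ)).const_add y
    have h2 : HasDerivAt (Chart.sg R) ((r : ℂ) * (I * gr p)) (y + 0) := by
      rw [add_zero]; exact hd.hasDerivAt
    have := h2.scomp 0 this
    simpa [Function.comp_def] using this
  have hev : ∀ᶠ s in 𝓝 (0 : ℝ), Chart.sg R (y + s) ∈ frontier D := by
    have h1 : ∀ᶠ s in 𝓝 (0 : ℝ), y + s ∈ {y : ℝ | |y - (conj (gr p) * p).im| < δ} := by
      have hc : ContinuousAt (fun s : ℝ => y + s) 0 := by fun_prop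
      exact hc.eventually_mem (C.J_open.mem_nhds (by simpa using hy))
    filter_upwards [h1] with s hs
    have : Chart.sg R (y + s) ∈ frontier D ∩ R.source := by
      rw [← C.sg_image]; exact ⟨_, hs, rfl⟩
    exact this.1
  obtain ⟨hn1, -, hn3⟩ := hν p hp
  have h0 := hn3 (fun s => Chart.sg R (y + s)) (by simpa using hyp) hev hd'.differentiableAt
  rw [hd'.deriv] at h0
  rw [RD_apply] at hpos ⊢
  have him : (conj (gr p) * ν p).im = 0 := by
    have h1 : (conj (ν p) * ((r : ℂ) * (I * gr p))).re = r * (conj (gr p) * ν p).im := by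
      simp; ring
    rw [h1] at h0
    exact (mul_eq_zero.1 h0).resolve_left hr0
  have hreal : conj (gr p) * ν p = (((conj (gr p) * ν p).re : ℝ) : ℂ) := by
    apply Complex.ext
    · simp
    · rw [him]; simp
  have hnorm : ‖conj (gr p) * ν p‖ = ‖gr p‖ := by rw [norm_mul, hn1]; simp
  rw [hreal, Complex.norm_real, Real.norm_of_nonneg hpos.le] at hnorm
  exact hnorm

lemma curve_closed {Γ : Set ℂ} (h : IsAnalyticJordanCurve Γ) : IsClosed Γ ∧ Γ.Nonempty := by
  obtain ⟨γ, ha, hp, -, -, rfl⟩ := h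
  refine ⟨?_, range_nonempty _⟩
  have hc : Continuous γ := ha.continuous
  have : range γ = γ '' Icc 0 (0 + 2 * Real.pi) := (hp.image_Icc (by positivity) 0).symm
  rw [this]
  exact (isCompact_Icc.image hc).isClosed

lemma no_PM {n : ℕ} (hn : 1 < n) {D : Set ℂ} (hD : IsRegularRegion n D) {F : ℂ → ℂ} {t : ℂ}
    (M : PM D F t) : False := by
  obtain ⟨-, -, hbd, Γ, hΓ, hdis, hun⟩ := hD
  have i0 : Fin n := ⟨0, by omega⟩
  let a : Fin n := ⟨0, by omega⟩
  let b : Fin n := ⟨1, hn⟩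
  have hab : b ≠ a := by simp [a, b]
  refine M.false_of_split hbd (E1 := Γ a) (E2 := ⋃ i : {i : Fin n // i ≠ a}, Γ i)
    (curve_closed (hΓ a)).1 (isClosed_iUnion_of_finite fun i => (curve_closed (hΓ i)).1) ?_ ?_
    (curve_closed (hΓ a)).2 ?_
  · rw [Set.disjoint_iUnion_right]
    intro i
    exact hdis i.2.symm
  · rw [hun]
    ext w
    simp only [mem_iUnion, mem_union]
    constructor
    · rintro ⟨i, hi⟩
      by_cases h : i = a
      · left; exact h ▸ hi
      · right; exact ⟨⟨i, h⟩, hi⟩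
    · rintro (h | ⟨i, hi⟩)
      · exact ⟨_, h⟩
      · exact ⟨_, hi⟩
  · obtain ⟨w, hw⟩ := (curve_closed (hΓ b)).2
    exact ⟨w, mem_iUnion.2 ⟨⟨b, hab⟩, hw⟩⟩

lemma nt_of_cont {D : Set ℂ} (hm : MeasurableSet (frontier D)) {f : ℂ → ℂ} (hf : ContinuousOn f (closure D)) :
    IsNTBoundaryValue D f f := by
  unfold IsNTBoundaryValue bdryArc
  rw [ae_restrict_iff' hm]
  refine Eventually.of_forall fun w hw α _ => ?_
  refine (hf w (frontier_subset_closure hw)).tendsto.mono_left (nhdsWithin_mono _ ?_)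
  intro x hx
  exact subset_closure hx.1

lemma saitoh_main
    (n : ℕ) (hn : 1 < n) (D : Set ℂ) (hD : IsRegularRegion n D)
    (ν : ℂ → ℂ) (hν : IsOutwardUnitNormal D ν)
    (B : ℂ → ℂ → ℂ) (hB : IsBergmanKernel D (fun _ => 1) B)
    (z : ℂ) (hz : z ∈ D)
    (G : ℂ → EReal) (hG : IsGreenFunction D z G)
    (U : Set ℂ) (hU : IsOpen U) (hUbd : frontier D ⊆ U) (hUz : z ∉ U)
    (GC1 : ℂ → ℝ) (hGC1 : ContDiffOn ℝ 1 GC1 U)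
    (hGeq : ∀ w ∈ U ∩ closure D, G w = ((GC1 w : ℝ) : EReal))
    (hνpos : ∀ w ∈ frontier D, 0 < fderiv ℝ GC1 w (ν w))
    (K : ℂ → ℂ → ℂ)
    (hK : IsSzegoKernel D (fun w => (fderiv ℝ GC1 w (ν w))⁻¹) K) :
    Real.pi * (B z z).re < (K z z).re := by
  obtain ⟨h, hh, hl⟩ := hG.logharm
  have F := mk_full hD hz hG hh hl hU hUbd hUz hGC1 hGeq hνpos
  set gr := grd GC1 with hgr
  have hm : MeasurableSet (frontier D) := isClosed_frontier.measurableSet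
  have hlam : ∀ p ∈ frontier D, fderiv ℝ GC1 p (ν p) = ‖gr p‖ := by
    intro p hp
    have h1 := hνpos p hp
    rw [← RD_grd] at h1 ⊢
    exact normal_eq F.B hν hp h1
  have hInt0 : ∀ g1 g2 : ℂ → ℂ, (∀ p ∈ frontier D, g1 p = g2 p) →
      ∫ p, g1 p ∂bdryArc D = ∫ p, g2 p ∂bdryArc D := by
    intro g1 g2 hg
    exact setIntegral_congr_fun hm hg
  set b : ℂ → ℂ := fun ζ => conj (K ζ z) / gr ζ with hbdef
  have hcK : ContinuousOn (fun ζ => K ζ z) (frontier D) := (hK.cont z hz).mono frontier_subset_closure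
  have hb : ContinuousOn b (frontier D) :=
    (Complex.continuous_conj.comp_continuousOn hcK).div (F.B.cgr.mono F.B.fU) F.B.ne
  have hext : ∀ w, w ∉ closure D → Full.CI D gr b w + 1 / (w - z) = 0 := by
    intro w hw
    have hwD : ∀ x ∈ closure D, x - w ≠ 0 := fun x hx e => hw (sub_eq_zero.1 e ▸ hx)
    have hfc : ContinuousOn (fun x => 1 / (x - w)) (closure D) :=
      continuousOn_const.div (by fun_prop) hwD
    obtain ⟨M, hM⟩ := (F.B.ccl.bddAbove_image (hfc.norm.pow 2))
    have hH : HardyH2c D (fun x => 1 / (x - w)) := by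
      refine ⟨?_, fun _ => M, ?_, ?_⟩
      · exact (differentiableOn_const _).div (by fun_prop) fun x hx => hwD x (subset_closure hx)
      · intro x hx
        obtain ⟨r, hr, hb⟩ := Metric.isOpen_iff.1 F.B.op x hx
        exact ⟨r, hr, hb, fun _ => (M : ℂ), differentiableOn_const _, by simp⟩
      · intro x hx
        exact hM ⟨x, subset_closure hx, rfl⟩
    have h1 := hK.reproduce _ _ hH (nt_of_cont hm hfc) z hz
    have h2 : ∫ x, 1 / (x - w) * conj (K x z) * (((fderiv ℝ GC1 x (ν x))⁻¹ : ℝ) : ℂ) ∂bdryArc D =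
        ∫ x, b x * Full.nu gr x / (x - w) ∂bdryArc D := by
      apply hInt0
      intro p hp
      have hg := F.B.ne p hp
      have hgn : (‖gr p‖ : ℂ) ≠ 0 := by exact_mod_cast norm_ne_zero_iff.2 hg
      have := hwD p (frontier_subset_closure hp)
      rw [hlam p hp, hbdef]
      unfold Full.nu
      push_cast
      field_simp
    rw [h2] at h1
    unfold Full.CI
    rw [← h1]
    have h3 := hwD z (subset_closure hz)
    have h4 : w - z ≠ 0 := fun e => h3 (by linear_combination -e)
    field_simp
    ring
  have hKK : 1 / Real.pi * (1 / 2 * ∫ w, ‖b w‖ ^ 2 * ‖gr w‖ ∂bdryArc D) = (K z z).re := by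
    have h1 := hK.reproduce _ _ (hK.hardy z hz) (nt_of_cont hm (hK.cont z hz)) z hz
    have h2 : ∫ x, K x z * conj (K x z) * (((fderiv ℝ GC1 x (ν x))⁻¹ : ℝ) : ℂ) ∂bdryArc D =
        ∫ x, ((‖b x‖ ^ 2 * ‖gr x‖ : ℝ) : ℂ) ∂bdryArc D := by
      apply hInt0
      intro p hp
      have hgn : (‖gr p‖ : ℂ) ≠ 0 := by exact_mod_cast norm_ne_zero_iff.2 (F.B.ne p hp)
      rw [hlam p hp, hbdef, Complex.mul_conj, Complex.normSq_eq_norm_sq]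
      simp only [norm_div, Complex.norm_conj]
      push_cast
      field_simp
    rw [h2, integral_complex_ofReal] at h1
    rw [h1]
    have : ((2 * Real.pi : ℂ)⁻¹) = (((2 * Real.pi)⁻¹ : ℝ) : ℂ) := by push_cast; rfl
    rw [this, ← Complex.ofReal_mul, Complex.ofReal_re]
    field_simp
  have hBi : IntegrableOn (fun w => ‖B w z‖ ^ 2) D := by
    have hms : AEStronglyMeasurable (fun w => ‖B w z‖ ^ 2) (volume.restrict D) :=
      (((hB.holo z hz).continuousOn.norm).pow 2).aestronglyMeasurable F.B.op.measurableSet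
    refine ⟨hms, ?_⟩
    rw [hasFiniteIntegral_iff_ofReal (Eventually.of_forall fun w => by positivity)]
    have := hB.sqfin z hz
    simp only [mul_one] at this
    exact lt_top_iff_ne_top.2 this
  have hBB : (B z z) = ((∫ w in D, ‖B w z‖ ^ 2 : ℝ) : ℂ) := by
    have h1 := hB.reproduce _ (hB.holo z hz) hBi z hz
    rw [h1, ← integral_complex_ofReal]
    congr 1
    ext w
    rw [Complex.mul_conj, Complex.normSq_eq_norm_sq]
    simp
  have hBr : (B z z).re = ∫ w in D, ‖B w z‖ ^ 2 := by rw [hBB]; simp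
  have hBn : ‖B z z‖ = ∫ w in D, ‖B w z‖ ^ 2 := by
    rw [hBB, Complex.norm_real, Real.norm_of_nonneg (integral_nonneg fun w => by positivity)]
  by_cases hq : ∀ w ∈ D, deriv (Full.cc D z gr b) w + conj (grd h w) * Full.cc D z gr b w = 0
  · obtain ⟨Fm, M⟩ := Setup.exists_PM F.S (F.cc_holo hb) (Full.cc_t b) hq
    exact (no_PM hn hD M).elim
  · push Not at hq
    obtain ⟨w0, hw0, hq0⟩ := hq
    have := F.ineq hb hext (hB.holo z hz) hBi hw0 hq0
    rw [hKK, hBn] at this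
    rw [hBr]
    linarith

end SaitohK

end SaitohAll

/-- Saitoh's conjecture (Guan's theorem): if `n > 1` then
`K̂(z) > π B(z)` for every `z ∈ D`, where `K̂` is the conjugate Hardy `H²` kernel
(the Szegő kernel with boundary weight `(∂G_D(·,z)/∂v)⁻¹`) and `B` is the
(unweighted) Bergman kernel. -/
theorem saitoh_conjecture
    (n : ℕ) (hn : 1 < n) (D : Set ℂ) (hD : IsRegularRegion n D)
    (ν : ℂ → ℂ) (hν : IsOutwardUnitNormal D ν)
    (B : ℂ → ℂ → ℂ) (hB : IsBergmanKernel D (fun _ => 1) B)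
    (z : ℂ) (hz : z ∈ D)
    (G : ℂ → EReal) (hG : IsGreenFunction D z G)
    (U : Set ℂ) (hU : IsOpen U) (hUbd : frontier D ⊆ U) (hUz : z ∉ U)
    (GC1 : ℂ → ℝ) (hGC1 : ContDiffOn ℝ 1 GC1 U)
    (hGeq : ∀ w ∈ U ∩ closure D, G w = ((GC1 w : ℝ) : EReal))
    (hνpos : ∀ w ∈ frontier D, 0 < fderiv ℝ GC1 w (ν w))
    (K : ℂ → ℂ → ℂ)
    (hK : IsSzegoKernel D (fun w => (fderiv ℝ GC1 w (ν w))⁻¹) K) :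
    Real.pi * (B z z).re < (K z z).re := by
  exact saitoh_main n hn D hD ν hν B hB z hz G hG U hU hUbd hUz GC1 hGC1 hGeq hνpos K hK
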